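/- arXiv:1609.06970 — 2 statements merged into one kernel-verified Lean document; each statement's English description precedes it below -/
import Mathlib

section
/- Let 0 < q_i ≤ ∞ (i = 1,…,n) and r = (r_1,…,r_n) with r_l > 0. Then there is a constant c (depending only on n, q̄ and r̄) such that: for every R > 0, every j ∈ ℕ, every smooth function u : ℝⁿ → ℂ whose derivatives all have at most polynomial growth and which satisfies supp 𝓕u ⊆ B_{R,j}, and every x ∈ ℝⁿ, one has u^*(x) ≤ c · ‖ z ↦ u(x − R^{−1}2^{−ja}z) / ∏_{l=1}^n (1+|z_l|)^{r_l} | L_{q̄}(ℝⁿ) ‖, where u^*(x) := sup_{y∈ℝⁿ} |u(y)| / ∏_{l=1}^n (1+R·2^{ja_l}|x_l−y_l|)^{r_l}. -/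
open MeasureTheory Complex
open scoped ENNReal NNReal BigOperators

noncomputable section

/-- Points of `ℝⁿ`, written `x = (x 0, …, x (n-1))`. -/
abbrev RV (n : ℕ) := Fin n → ℝ

/-- Tempered distributions `𝒮′(ℝⁿ)`. -/
abbrev TD (n : ℕ) := SchwartzMap (RV n) ℂ →L[ℂ] ℂ

/-- The Fourier transform `𝓕g(ξ) = ∫ e^{-i x·ξ} g(x) dx`. -/
def FT (n : ℕ) (g : RV n → ℂ) (ξ : RV n) : ℂ :=
  ∫ x : RV n, Complex.exp (-Complex.I * ((∑ i, x i * ξ i : ℝ) : ℂ)) * g x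

/-- The partial derivative `∂_i`. -/
def pderiv1 (n : ℕ) (i : Fin n) (g : RV n → ℂ) : RV n → ℂ :=
  fun x => fderiv ℝ g x (Pi.single i 1)

def pderivIter (n : ℕ) (i : Fin n) : ℕ → (RV n → ℂ) → RV n → ℂ
  | 0, g => g
  | k + 1, g => pderiv1 n i (pderivIter n i k g)

/-- `D^α = (-i ∂_1)^{α_1} ⋯ (-i ∂_n)^{α_n}`. -/
def Dop (n : ℕ) (α : Fin n → ℕ) (g : RV n → ℂ) : RV n → ℂ :=
  fun x => (-Complex.I) ^ (∑ i, α i) *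
    ((List.finRange n).foldr (fun i h => pderivIter n i (α i) h) g) x

/-- `anorm` is the anisotropic distance function `|·|_a` :
`anorm 0 = 0`, and for `x ≠ 0`, `anorm x` is the (unique) `t > 0` with
`x 1 ^ 2 / t ^ (2 a 1) + … + x n ^ 2 / t ^ (2 a n) = 1`. -/
def IsAnorm (n : ℕ) (a : Fin n → ℝ) (anorm : RV n → ℝ) : Prop :=
  anorm 0 = 0 ∧
    ∀ x : RV n, x ≠ 0 → 0 < anorm x ∧ ∑ i, (x i : ℝ) ^ 2 / (anorm x) ^ (2 * a i) = 1

/-- Moment condition of order `M` : `D^α (𝓕ψ)(0) = 0` for all `|α| ≤ M` (void for `M = -1`). -/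
def MomentCond (n : ℕ) (M : ℤ) (ψ : RV n → ℂ) : Prop :=
  ∀ α : Fin n → ℕ, (∑ i, (α i : ℤ)) ≤ M → Dop n α (FT n ψ) 0 = 0

/-- Tauberian conditions for `ε > 0` for the pair `(ψ0, ψ)`. -/
def Tauber (n : ℕ) (anorm : RV n → ℝ) (ψ0 ψ : RV n → ℂ) (ε : ℝ) : Prop :=
  (∀ ξ, anorm ξ < 2 * ε → 0 < ‖FT n ψ0 ξ‖) ∧
    (∀ ξ, ε / 2 < anorm ξ → anorm ξ < 2 * ε → 0 < ‖FT n ψ ξ‖)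

/-- The family `φ_j`, `φ_0` at `j = 0` and `φ_j(x) = 2^{j|a|} φ(2^{ja}x)` for `j ≥ 1`. -/
def fam (n : ℕ) (a : Fin n → ℝ) (φ0 φ : RV n → ℂ) : ℕ → RV n → ℂ
  | 0 => φ0
  | j + 1 => fun x =>
      (((2 : ℝ) ^ (((j : ℝ) + 1) * ∑ i, a i) : ℝ) : ℂ) *
        φ (fun i => (2 : ℝ) ^ (((j : ℝ) + 1) * a i) * x i)

/-- Peetre–Fefferman–Stein maximal function attached to the function `F` (intended: `F = ψ_j * f`). -/
def pfs (n : ℕ) (a r : Fin n → ℝ) (F : RV n → ℂ) (j : ℕ) (x : RV n) : ℝ≥0∞ :=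
  ⨆ y : RV n,
    ENNReal.ofReal (‖F y‖ / ∏ l, (1 + (2 : ℝ) ^ ((j : ℝ) * a l) * |x l - y l|) ^ (r l))

/-- Iterated-integral construction of the mixed Lebesgue norm : integrate out the
coordinates one at a time, first `x 0`, last `x (n-1)`. -/
def mixAux (n : ℕ) (p : Fin n → ℝ≥0∞) : ℕ → ((RV n) → ℝ≥0∞) → (RV n) → ℝ≥0∞
  | 0, F => F
  | l + 1, F => fun x =>
      if h : l < n then
        (if p ⟨l, h⟩ = ∞ then
          essSup (fun t : ℝ => mixAux n p l F (Function.update x ⟨l, h⟩ t)) volume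
        else
          (∫⁻ t : ℝ, (mixAux n p l F (Function.update x ⟨l, h⟩ t)) ^ (p ⟨l, h⟩).toReal) ^
            (1 / (p ⟨l, h⟩).toReal))
      else mixAux n p l F x

/-- The mixed Lebesgue quasi-norm `‖F | L_{p̄}‖` of an extended-nonnegative-valued `F`. -/
def mixedNorm (n : ℕ) (p : Fin n → ℝ≥0∞) (F : RV n → ℝ≥0∞) : ℝ≥0∞ :=
  mixAux n p n F fun _ => 0

/-- `‖(u_k) | L_{p̄}(ℓ_q)‖`. -/
def seqNorm (n : ℕ) (p : Fin n → ℝ≥0∞) (q : ℝ≥0∞) (u : ℕ → RV n → ℝ≥0∞) : ℝ≥0∞ :=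
  mixedNorm n p fun x =>
    if q = ∞ then ⨆ k, u k x else (∑' k, u k x ^ q.toReal) ^ (1 / q.toReal)

/-- Convolution of (Schwartz) functions. -/
def conv2 (n : ℕ) (f g : RV n → ℂ) (x : RV n) : ℂ := ∫ y : RV n, f y * g (x - y)

/-- Schwartz seminorm `p_{α,β}(φ) = sup_x |x^α D^β φ(x)|`, valued in `[0,∞]`. -/
def pSemiE (n : ℕ) (α β : Fin n → ℕ) (g : RV n → ℂ) : ℝ≥0∞ :=
  ⨆ x : RV n, (‖((∏ i, x i ^ α i : ℝ) : ℂ) * Dop n β g x‖₊ : ℝ≥0∞)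

/-- Schwartz seminorm `q_{N,γ}(φ) = ∫ (1+|x|²)^{N/2} |D^γ φ(x)| dx`, valued in `[0,∞]`. -/
def qSemiE (n : ℕ) (N : ℝ) (γ : Fin n → ℕ) (g : RV n → ℂ) : ℝ≥0∞ :=
  ∫⁻ x : RV n, ENNReal.ofReal ((1 + ∑ i, (x i) ^ 2) ^ (N / 2)) * (‖Dop n γ g x‖₊ : ℝ≥0∞)

/-- Iterated Laplacian `Δ^N`. -/
def lapIter (n : ℕ) : ℕ → (RV n → ℂ) → RV n → ℂ
  | 0, g => g
  | N + 1, g => fun x => ∑ i, pderiv1 n i (pderiv1 n i (lapIter n N g)) x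

/-- The box `B_{R,j} = {ξ : |ξ_k| ≤ R 2^{j a_k}}`. -/
def specBox (n : ℕ) (a : Fin n → ℝ) (R : ℝ) (j : ℕ) : Set (RV n) :=
  {ξ | ∀ k, |ξ k| ≤ R * (2 : ℝ) ^ ((j : ℝ) * a k)}

/-- The spectral condition `supp 𝓕u ⊆ B_{R,j}` for a temperate-growth function `u`. -/
def SpecCond (n : ℕ) (a : Fin n → ℝ) (R : ℝ) (j : ℕ) (u : RV n → ℂ) : Prop :=
  ∀ φ : SchwartzMap (RV n) ℂ,
    tsupport (⇑φ) ∩ specBox n a R j = ∅ → (∫ x : RV n, u x * FT n (⇑φ) x) = 0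

/-- The maximal function `u^*` of Section 3. -/
def ustar (n : ℕ) (a r : Fin n → ℝ) (R : ℝ) (j : ℕ) (u : RV n → ℂ) (x : RV n) : ℝ≥0∞ :=
  ⨆ y : RV n,
    ENNReal.ofReal (‖u y‖ / ∏ l, (1 + R * (2 : ℝ) ^ ((j : ℝ) * a l) * |x l - y l|) ^ (r l))

/-
Write `L k` for the side lengths of the box containing the spectrum. A function with spectrum in
the box is reproduced by averaging along each coordinate direction: `u y = ∫ ψ(t) u(y - t e) dt`
for `e = (L i)⁻¹ eᵢ` and any Schwartz function `ψ` on the line whose Fourier transform is `1` near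
`[-1, 1]`. Hence every slice `f` of the rescaled function `z ↦ u (x - z / L)` satisfies
`|f y| ≤ ∫ |ψ(t)| |f (t + y)| dt`.

Divide by a weight `w` satisfying Peetre's inequality. The supremum `G` of `F = |f| / w` then
obeys, for every threshold `K > 0`, the bound `G ≤ D K + G D ‖F‖_q ^ q / K ^ q`, obtained by
splitting the integral according to whether `F ≤ K`. If `G < ∞`, the choice `K = G / (2 D)` gives
`G ≤ c ‖F‖_q`, also for `q < 1`. Finiteness of `G` is obtained from the same inequality with the
damped weights `w (1 + δ |·|) ^ m`.

Applying this one-dimensional bound in each variable in turn, for a fixed point `z`, builds up the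
mixed norm one coordinate at a time, starting with the first.
-/

section PolynomialGrowth

variable {E F : Type*} [NormedAddCommGroup E] [NormedAddCommGroup F]

/-- Functions of at most polynomial growth. Unlike `Function.HasTemperateGrowth`, nothing is
required of the derivatives, so that the notion also applies to restrictions to lines. -/
def HasPolynomialGrowth (f : E → F) : Prop :=
  ∃ (k : ℕ) (C : ℝ), ∀ x, ‖f x‖ ≤ C * (1 + ‖x‖) ^ k

lemma HasPolynomialGrowth.exists_forall_div_le {g : E → ℝ} (hg : HasPolynomialGrowth g) :
    ∃ m : ℕ, ∀ δ : ℝ, 0 < δ → δ ≤ 1 → ∃ B, ∀ x, g x / (1 + δ * ‖x‖) ^ m ≤ B := by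
  obtain ⟨m, A, hA⟩ := hg
  have hA0 : 0 ≤ A := by simpa using (norm_nonneg _).trans (hA 0)
  refine ⟨m, fun δ hδ₀ hδ₁ => ⟨A * δ⁻¹ ^ m, fun x => ?_⟩⟩
  rw [div_le_iff₀ (by positivity), mul_assoc, ← mul_pow]
  refine (le_abs_self _).trans ((hA x).trans ?_)
  gcongr
  rw [mul_add, inv_mul_cancel_left₀ hδ₀.ne', mul_one]
  gcongr
  exact (one_le_inv₀ hδ₀).2 hδ₁

variable [NormedSpace ℝ E]

lemma hasPolynomialGrowth_of_hasTemperateGrowth [NormedSpace ℝ F] {f : E → F}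
    (hf : Function.HasTemperateGrowth f) : HasPolynomialGrowth f := by
  obtain ⟨k, C, h⟩ := hf.2 0
  exact ⟨k, C, fun x => by simpa only [norm_iteratedFDeriv_zero] using h x⟩

lemma one_add_norm_add_smul_le (x e : E) (t : ℝ) :
    1 + ‖x + t • e‖ ≤ (1 + ‖x‖) * (1 + ‖e‖) * (1 + ‖t‖) := by
  have h : ‖x + t • e‖ ≤ ‖x‖ + ‖t‖ * ‖e‖ := (norm_add_le _ _).trans_eq (by rw [norm_smul])
  have hxe : 0 ≤ ‖x‖ * ‖e‖ := by positivity
  have hxt : 0 ≤ ‖x‖ * ‖t‖ := by positivity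
  have hxet : 0 ≤ ‖x‖ * ‖e‖ * ‖t‖ := by positivity
  nlinarith [norm_nonneg e, norm_nonneg t]

lemma HasPolynomialGrowth.exists_norm_add_smul_le {f : E → F} (hf : HasPolynomialGrowth f)
    (e : E) : ∃ (k : ℕ) (C : ℝ), ∀ x (t : ℝ),
      ‖f (x + t • e)‖ ≤ C * ((1 + ‖x‖) ^ k * (1 + ‖t‖) ^ k) := by
  obtain ⟨k, C, h⟩ := hf
  have hC : 0 ≤ C := by simpa using (norm_nonneg _).trans (h 0)
  refine ⟨k, C * (1 + ‖e‖) ^ k, fun x t => ?_⟩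
  calc ‖f (x + t • e)‖ ≤ C * (1 + ‖x + t • e‖) ^ k := h _
    _ ≤ C * ((1 + ‖x‖) * (1 + ‖e‖) * (1 + ‖t‖)) ^ k := by
        gcongr; exact one_add_norm_add_smul_le x e t
    _ = C * (1 + ‖e‖) ^ k * ((1 + ‖x‖) ^ k * (1 + ‖t‖) ^ k) := by
        rw [mul_pow, mul_pow]; ring

lemma HasPolynomialGrowth.comp_add_smul {f : E → F} (hf : HasPolynomialGrowth f) (x e : E) :
    HasPolynomialGrowth fun t : ℝ => f (x + t • e) := by
  obtain ⟨k, C, h⟩ := hf.exists_norm_add_smul_le e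
  exact ⟨k, C * (1 + ‖x‖) ^ k, fun t => (h x t).trans_eq (by ring)⟩

end PolynomialGrowth

section ModerateWeight

variable {E : Type*} [NormedAddCommGroup E] {w v : E → ℝ} {C C' : ℝ} {N N' : ℕ}

/-- Moderate weights: positive functions satisfying Peetre's inequality with constant `C` and
exponent `N`. The constants are part of the notion because the estimates below depend on the
weight only through them. -/
structure IsModerate (w : E → ℝ) (C : ℝ) (N : ℕ) : Prop where
  pos : ∀ x, 0 < w x
  le : ∀ x y, w x ≤ C * w y * (1 + ‖x - y‖) ^ N

namespace IsModerate

lemma const_nonneg (hw : IsModerate w C N) : 0 ≤ C := by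
  have h := hw.le 0 0
  have h0 := hw.pos 0
  simp only [sub_self, norm_zero, add_zero, one_pow, mul_one] at h
  by_contra! hC
  nlinarith

lemma mul (hw : IsModerate w C N) (hv : IsModerate v C' N') :
    IsModerate (fun x => w x * v x) (C * C') (N + N') where
  pos x := mul_pos (hw.pos x) (hv.pos x)
  le x y := by
    have hC := hw.const_nonneg
    have hwy := hw.pos y
    calc w x * v x
        ≤ C * w y * (1 + ‖x - y‖) ^ N * (C' * v y * (1 + ‖x - y‖) ^ N') :=
          mul_le_mul (hw.le x y) (hv.le x y) (hv.pos x).le (by positivity)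
      _ = C * C' * (w y * v y) * (1 + ‖x - y‖) ^ (N + N') := by ring

lemma prod {ι : Type*} (s : Finset ι) {w : ι → E → ℝ} {C : ι → ℝ} {N : ι → ℕ}
    (hw : ∀ i, IsModerate (w i) (C i) (N i)) :
    IsModerate (fun x => ∏ i ∈ s, w i x) (∏ i ∈ s, C i) (∑ i ∈ s, N i) := by
  classical
  induction s using Finset.induction_on with
  | empty => exact ⟨fun _ => by simp, fun _ _ => by simp⟩
  | insert i s hi ih => simpa only [Finset.prod_insert hi, Finset.sum_insert hi] using (hw i).mul ih

lemma comp {E' : Type*} [NormedAddCommGroup E'] (hw : IsModerate w C N) {g : E' → E}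
    (hg : ∀ x y, ‖g x - g y‖ ≤ ‖x - y‖) : IsModerate (w ∘ g) C N where
  pos x := hw.pos (g x)
  le x y := by
    have hC := hw.const_nonneg
    have hwy := hw.pos (g y)
    refine (hw.le (g x) (g y)).trans ?_
    simp only [Function.comp_apply]
    gcongr
    exact hg x y

lemma hasPolynomialGrowth_norm_div {F : Type*} [NormedAddCommGroup F] (hw : IsModerate w C N)
    {f : E → F} (hf : HasPolynomialGrowth f) : HasPolynomialGrowth fun y => ‖f y‖ / w y := by
  obtain ⟨k, A, hA⟩ := hf
  refine ⟨k + N, A * (C / w 0), fun y => ?_⟩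
  have hw0 := hw.pos 0
  have hwy := hw.pos y
  have hinv : (w y)⁻¹ ≤ C / w 0 * (1 + ‖y‖) ^ N := by
    rw [inv_le_iff_one_le_mul₀ hwy, div_mul_eq_mul_div, div_mul_eq_mul_div, one_le_div hw0]
    simpa only [zero_sub, norm_neg, mul_right_comm] using hw.le 0 y
  calc ‖‖f y‖ / w y‖ = ‖f y‖ * (w y)⁻¹ := by
        rw [Real.norm_of_nonneg (by positivity), div_eq_mul_inv]
    _ ≤ A * (1 + ‖y‖) ^ k * (C / w 0 * (1 + ‖y‖) ^ N) :=
        mul_le_mul (hA y) hinv (by positivity) ((norm_nonneg _).trans (hA y))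
    _ = A * (C / w 0) * (1 + ‖y‖) ^ (k + N) := by ring

end IsModerate

lemma one_add_norm_le_mul (x y : E) : 1 + ‖x‖ ≤ (1 + ‖y‖) * (1 + ‖x - y‖) := by
  nlinarith [norm_le_norm_add_norm_sub' x y, mul_nonneg (norm_nonneg y) (norm_nonneg (x - y))]

lemma isModerate_one_add_norm_rpow (r : ℝ) :
    IsModerate (fun x : E => (1 + ‖x‖) ^ r) 1 ⌈|r|⌉₊ where
  pos x := by positivity
  le x y := by
    have hceil : (1 + ‖x - y‖) ^ |r| ≤ (1 + ‖x - y‖) ^ ⌈|r|⌉₊ := by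
      rw [← Real.rpow_natCast]
      exact Real.rpow_le_rpow_of_exponent_le (by simp) (Nat.le_ceil _)
    suffices h : (1 + ‖x‖) ^ r ≤ (1 + ‖y‖) ^ r * (1 + ‖x - y‖) ^ |r| by
      rw [one_mul]; exact h.trans (by gcongr)
    rcases le_total 0 r with hr | hr
    · rw [abs_of_nonneg hr, ← Real.mul_rpow (by positivity) (by positivity)]
      exact Real.rpow_le_rpow (by positivity) (one_add_norm_le_mul x y) hr
    · rw [abs_of_nonpos hr, Real.rpow_neg (by positivity), ← div_eq_mul_inv,
        ← Real.div_rpow (by positivity) (by positivity)]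
      refine Real.rpow_le_rpow_of_nonpos (by positivity) ?_ hr
      rw [div_le_iff₀ (by positivity), norm_sub_rev]
      exact one_add_norm_le_mul y x

lemma isModerate_one_add_mul_norm_pow {δ : ℝ} (hδ₀ : 0 ≤ δ) (hδ₁ : δ ≤ 1) (m : ℕ) :
    IsModerate (fun x : E => (1 + δ * ‖x‖) ^ m) 1 m where
  pos x := by positivity
  le x y := by
    rw [one_mul, ← mul_pow]
    gcongr
    have hxy : δ * ‖x‖ ≤ δ * (‖y‖ + ‖x - y‖) := by gcongr; exact norm_le_norm_add_norm_sub' x y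
    have hδ : δ * ‖x - y‖ ≤ ‖x - y‖ := mul_le_of_le_one_left (norm_nonneg _) hδ₁
    have hprod : 0 ≤ δ * ‖y‖ * ‖x - y‖ := by positivity
    linarith

end ModerateWeight

section KernelEstimate

lemma le_add_mul_div_rpow {a G : ℝ≥0∞} (K : ℝ≥0∞) {p : ℝ} (hp : 0 < p) (ha : a ≤ G) :
    a ≤ K + G * (a / K) ^ p := by
  rcases le_or_gt a K with haK | haK
  · exact haK.trans le_self_add
  · have hquot : 1 ≤ a / K := by
      rw [ENNReal.le_div_iff_mul_le (.inr haK.ne_bot) (.inl haK.ne_top), one_mul]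
      exact haK.le
    calc a ≤ G * 1 := by rwa [mul_one]
      _ ≤ G * (a / K) ^ p := by gcongr; exact ENNReal.one_le_rpow hquot hp
      _ ≤ K + G * (a / K) ^ p := le_add_self

variable {α : Type*} [MeasurableSpace α] {μ : Measure α} {D G K q : ℝ≥0∞} {F κ : α → ℝ≥0∞}

lemma lintegral_mul_le_add_lintegral_rpow (hκ : Measurable κ) (hκD : ∀ y, κ y ≤ D)
    (hκint : ∫⁻ y, κ y ∂μ ≤ D) (hD : D ≠ ∞) (hF : ∀ y, F y ≤ G) (hG : G ≠ ∞) (hK : K ≠ 0)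
    {p : ℝ} (hp : 0 < p) :
    ∫⁻ y, κ y * F y ∂μ ≤ D * K + G * (D * (∫⁻ y, F y ^ p ∂μ) / K ^ p) := by
  have hKp : (K ^ p)⁻¹ ≠ ∞ := ENNReal.inv_ne_top.2 (ENNReal.rpow_pos_of_nonneg hK.bot_lt hp.le).ne'
  calc ∫⁻ y, κ y * F y ∂μ
      ≤ ∫⁻ y, (κ y * K + D * G * (F y ^ p * (K ^ p)⁻¹)) ∂μ := by
        refine lintegral_mono fun y => ?_
        calc κ y * F y ≤ κ y * (K + G * (F y / K) ^ p) := by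
              gcongr; exact le_add_mul_div_rpow K hp (hF y)
          _ = κ y * K + κ y * G * (F y / K) ^ p := by rw [mul_add, mul_assoc]
          _ ≤ κ y * K + D * G * (F y / K) ^ p := by gcongr; exact hκD y
          _ = _ := by rw [ENNReal.div_rpow_of_nonneg _ _ hp.le, div_eq_mul_inv]
    _ = (∫⁻ y, κ y ∂μ) * K + D * G * ((∫⁻ y, F y ^ p ∂μ) * (K ^ p)⁻¹) := by
        rw [lintegral_add_left (hκ.mul_const K), lintegral_mul_const _ hκ,
          lintegral_const_mul' _ _ (ENNReal.mul_ne_top hD hG), lintegral_mul_const' _ _ hKp]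
    _ ≤ D * K + D * G * ((∫⁻ y, F y ^ p ∂μ) * (K ^ p)⁻¹) := by gcongr
    _ = _ := by rw [div_eq_mul_inv]; ring

-- At the threshold `K = G / (2D)` the hypothesis reads `G ≤ G / 2 + G * (D * J / K ^ p)`.
lemma le_rpow_mul_rpow_of_forall_le_add {J : ℝ≥0∞} (hD : D ≠ ∞) (hG : G ≠ ∞) {p : ℝ} (hp : 0 < p)
    (h : ∀ K ≠ 0, G ≤ D * K + G * (D * J / K ^ p)) :
    G ≤ (2 * D) ^ (1 + 1 / p) * J ^ (1 / p) := by
  rcases eq_or_ne G 0 with rfl | hG0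
  · exact zero_le
  rcases eq_or_ne D 0 with rfl | hD0
  · simpa [hG0] using h 1 one_ne_zero
  have h2D0 : 2 * D ≠ 0 := mul_ne_zero two_ne_zero hD0
  have h2D : 2 * D ≠ ∞ := ENNReal.mul_ne_top ENNReal.ofNat_ne_top hD
  set K := G / (2 * D)
  have hK0 : K ≠ 0 := ENNReal.div_ne_zero.2 ⟨hG0, h2D⟩
  have hK : K ≠ ∞ := ENNReal.div_ne_top hG h2D0
  have hGK : G = 2 * D * K := (ENNReal.mul_div_cancel h2D0 h2D).symm
  have hDK : D * K = G / 2 := by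
    rw [ENNReal.eq_div_iff two_ne_zero ENNReal.ofNat_ne_top, ← mul_assoc, ← hGK]
  have hhalf : 2⁻¹ ≤ D * J / K ^ p := by
    have hsum := h K hK0
    nth_rw 1 [hDK, ← ENNReal.add_halves G] at hsum
    have hle := (ENNReal.add_le_add_iff_left (ENNReal.div_ne_top hG two_ne_zero)).1 hsum
    rwa [div_eq_mul_inv, ENNReal.mul_le_mul_iff_right hG0 hG] at hle
  have hKJ : K ^ p ≤ 2 * D * J := by
    rw [ENNReal.le_div_iff_mul_le (.inl (ENNReal.rpow_pos hK0.bot_lt hK).ne')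
      (.inl (ENNReal.rpow_ne_top_of_nonneg hp.le hK)), mul_comm, ← div_eq_mul_inv,
      ENNReal.div_le_iff two_ne_zero ENNReal.ofNat_ne_top] at hhalf
    exact hhalf.trans_eq (by ring)
  calc G = 2 * D * K := hGK
    _ ≤ 2 * D * (2 * D * J) ^ (1 / p) := by
        gcongr; rwa [one_div, ENNReal.le_rpow_inv_iff hp]
    _ = (2 * D) ^ (1 + 1 / p) * J ^ (1 / p) := by
        rw [ENNReal.mul_rpow_of_nonneg _ _ (by positivity), ENNReal.rpow_add _ _ h2D0 h2D,
          ENNReal.rpow_one, mul_assoc (2 * D)]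

lemma le_mul_eLpNorm_of_le_lintegral_mul {κ : α → α → ℝ≥0∞} (hκ : ∀ x, Measurable (κ x))
    (hκD : ∀ x y, κ x y ≤ D) (hκint : ∀ x, ∫⁻ y, κ x y ∂μ ≤ D) (hD : D ≠ ∞)
    (hF : ∀ x, F x ≤ ∫⁻ y, κ x y * F y ∂μ) (hsup : ⨆ x, F x ≠ ∞) (hq : q ≠ 0) (x : α) :
    F x ≤ (2 * D) ^ (1 + 1 / q.toReal) * eLpNorm F q μ := by
  rcases eq_or_ne q ∞ with rfl | hq'
  · have hae : ∀ᵐ y ∂μ, κ x y * F y ≤ κ x y * eLpNorm F ∞ μ := by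
      filter_upwards [enorm_ae_le_eLpNormEssSup F μ] with y hy
      rw [eLpNorm_exponent_top]
      gcongr
      simpa only [enorm_eq_self] using hy
    calc F x ≤ ∫⁻ y, κ x y * eLpNorm F ∞ μ ∂μ := (hF x).trans (lintegral_mono_ae hae)
      _ = (∫⁻ y, κ x y ∂μ) * eLpNorm F ∞ μ := lintegral_mul_const _ (hκ x)
      _ ≤ 2 * D * eLpNorm F ∞ μ := by
          gcongr; exact (hκint x).trans (le_mul_of_one_le_left' one_le_two)
      _ = _ := by rw [ENNReal.toReal_top, div_zero, add_zero, ENNReal.rpow_one]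
  · have hp := ENNReal.toReal_pos hq hq'
    have h := (le_iSup F x).trans <| le_rpow_mul_rpow_of_forall_le_add hD hsup hp fun K hK =>
      iSup_le fun x => (hF x).trans <|
        lintegral_mul_le_add_lintegral_rpow (hκ x) (hκD x) (hκint x) hD (le_iSup F) hsup hK hp
    simpa only [eLpNorm_eq_lintegral_rpow_enorm_toReal hq hq', enorm_eq_self] using h

end KernelEstimate

section SelfImprovement

open scoped SchwartzMap

variable {E F F' : Type*} [NormedAddCommGroup E] [NormedSpace ℝ E] [NormedAddCommGroup F]
  [NormedSpace ℝ F] [NormedAddCommGroup F']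

lemma exists_one_add_norm_pow_mul_norm_le (ψ : 𝓢(E, F)) (k : ℕ) :
    ∃ D : ℝ, ∀ x, (1 + ‖x‖) ^ k * ‖ψ x‖ ≤ D :=
  ⟨_, fun x => by
    simpa only [norm_iteratedFDeriv_zero] using
      SchwartzMap.one_add_le_sup_seminorm_apply (𝕜 := ℝ) (m := (k, 0)) le_rfl le_rfl ψ x⟩

variable [MeasurableSpace E] {μ : Measure E}

lemma IsModerate.ofReal_div_le_lintegral {w : E → ℝ} {C : ℝ} {N : ℕ} (hw : IsModerate w C N)
    (ψ : 𝓢(E, F)) {f : E → F'} {y : E}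
    (hf : ‖f y‖ₑ ≤ ∫⁻ t, ‖ψ t‖ₑ * ‖f (t + y)‖ₑ ∂μ) :
    ENNReal.ofReal (‖f y‖ / w y) ≤ ∫⁻ t, ENNReal.ofReal (C * ((1 + ‖t‖) ^ N * ‖ψ t‖)) *
      ENNReal.ofReal (‖f (t + y)‖ / w (t + y)) ∂μ := by
  have hpt : ∀ t, ‖ψ t‖ * ‖f (t + y)‖ * (w y)⁻¹ ≤
      C * ((1 + ‖t‖) ^ N * ‖ψ t‖) * (‖f (t + y)‖ / w (t + y)) := by
    intro t
    have hwty := hw.pos (t + y)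
    rw [← div_eq_mul_inv, div_le_iff₀ (hw.pos y)]
    calc ‖ψ t‖ * ‖f (t + y)‖ = ‖ψ t‖ * (‖f (t + y)‖ / w (t + y)) * w (t + y) := by
          rw [mul_assoc, div_mul_cancel₀ _ hwty.ne']
      _ ≤ ‖ψ t‖ * (‖f (t + y)‖ / w (t + y)) * (C * w y * (1 + ‖t‖) ^ N) := by
          gcongr; simpa only [add_sub_cancel_right] using hw.le (t + y) y
      _ = _ := by ring
  have hwy : (0 : ℝ) ≤ (w y)⁻¹ := (inv_pos.2 (hw.pos y)).le
  calc ENNReal.ofReal (‖f y‖ / w y)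
      ≤ (∫⁻ t, ‖ψ t‖ₑ * ‖f (t + y)‖ₑ ∂μ) * ENNReal.ofReal (w y)⁻¹ := by
        rw [div_eq_mul_inv, ENNReal.ofReal_mul (norm_nonneg _), ofReal_norm]; gcongr
    _ = ∫⁻ t, ENNReal.ofReal (‖ψ t‖ * ‖f (t + y)‖ * (w y)⁻¹) ∂μ := by
        rw [← lintegral_mul_const' _ _ ENNReal.ofReal_ne_top]
        simp only [ENNReal.ofReal_mul' hwy, ENNReal.ofReal_mul (norm_nonneg _), ofReal_norm]
    _ ≤ _ := lintegral_mono fun t => by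
        rw [← ENNReal.ofReal_mul (by have := hw.const_nonneg; positivity)]
        exact ENNReal.ofReal_le_ofReal (hpt t)

variable [BorelSpace E] [SecondCountableTopology E] [μ.HasTemperateGrowth]

lemma integrable_one_add_norm_pow_mul_norm (ψ : 𝓢(E, F)) (k : ℕ) :
    Integrable (fun x => (1 + ‖x‖) ^ k * ‖ψ x‖) μ := by
  simp only [add_comm (1 : ℝ), add_pow, one_pow, mul_one, Finset.sum_mul]
  refine integrable_finsetSum _ fun i _ => ?_
  simpa only [mul_right_comm] using (ψ.integrable_pow_mul μ i).mul_const _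

lemma exists_kernel_bound (μ : Measure E) [μ.HasTemperateGrowth] (ψ : 𝓢(E, F)) (C : ℝ) (N : ℕ) :
    ∃ D ≠ ∞, (∀ t, ENNReal.ofReal (C * ((1 + ‖t‖) ^ N * ‖ψ t‖)) ≤ D) ∧
      ∫⁻ t, ENNReal.ofReal (C * ((1 + ‖t‖) ^ N * ‖ψ t‖)) ∂μ ≤ D := by
  obtain ⟨D, hD⟩ := exists_one_add_norm_pow_mul_norm_le ψ N
  have hint := ((integrable_one_add_norm_pow_mul_norm (μ := μ) ψ N).const_mul C).lintegral_lt_top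
  refine ⟨max (ENNReal.ofReal (|C| * D)) _, max_ne_top ENNReal.ofReal_ne_top hint.ne,
    fun t => le_max_of_le_left (ENNReal.ofReal_le_ofReal ?_), le_max_right _ _⟩
  exact mul_le_mul (le_abs_self C) (hD t) (by positivity) (abs_nonneg C)

variable [μ.IsAddRightInvariant]

lemma exists_forall_le_mul_eLpNorm_of_iSup_ne_top (ψ : 𝓢(E, F)) (C : ℝ) (N : ℕ) {q : ℝ≥0∞}
    (hq : q ≠ 0) : ∃ c ≠ ∞, ∀ (f : E → F') (w : E → ℝ), IsModerate w C N →
      (∀ y, ‖f y‖ₑ ≤ ∫⁻ t, ‖ψ t‖ₑ * ‖f (t + y)‖ₑ ∂μ) →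
      ⨆ y, ENNReal.ofReal (‖f y‖ / w y) ≠ ∞ →
      ∀ y, ENNReal.ofReal (‖f y‖ / w y) ≤
        c * eLpNorm (fun t => ENNReal.ofReal (‖f t‖ / w t)) q μ := by
  obtain ⟨D, hD, hκD, hκint⟩ := exists_kernel_bound μ ψ C N
  set κ : E → ℝ≥0∞ := fun t => ENNReal.ofReal (C * ((1 + ‖t‖) ^ N * ‖ψ t‖))
  have hκ : Measurable κ := by have := ψ.continuous; fun_prop
  refine ⟨(2 * D) ^ (1 + 1 / q.toReal), ENNReal.rpow_ne_top_of_nonneg (by positivity)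
    (ENNReal.mul_ne_top ENNReal.ofNat_ne_top hD), fun f w hw hf hsup => ?_⟩
  refine le_mul_eLpNorm_of_le_lintegral_mul (κ := fun y s => κ (s - y))
    (fun y => hκ.comp (measurable_sub_const y)) (fun y s => hκD _)
    (fun y => (lintegral_sub_right_eq_self κ y).trans_le hκint) hD (fun y => ?_) hsup hq
  refine (hw.ofReal_div_le_lintegral ψ (hf y)).trans_eq ?_
  rw [← lintegral_sub_right_eq_self _ y]
  simp only [sub_add_cancel, κ]

-- The damped weights `w * (1 + δ‖·‖) ^ m` make the supremum finite, with constants that do not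
-- depend on `δ`; at the point `y` the choice `δ = (1 + ‖y‖)⁻¹` costs only a factor `2 ^ m`.
lemma exists_le_mul_eLpNorm_of_hasPolynomialGrowth (ψ : 𝓢(E, F)) {C : ℝ} {N : ℕ} {q : ℝ≥0∞}
    (hq : q ≠ 0) {f : E → F'} {w : E → ℝ} (hw : IsModerate w C N) (hf : HasPolynomialGrowth f)
    (hsub : ∀ y, ‖f y‖ₑ ≤ ∫⁻ t, ‖ψ t‖ₑ * ‖f (t + y)‖ₑ ∂μ) :
    ∃ c ≠ ∞, ∀ y, ENNReal.ofReal (‖f y‖ / w y) ≤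
      c * eLpNorm (fun t => ENNReal.ofReal (‖f t‖ / w t)) q μ := by
  obtain ⟨m, hm⟩ := (hw.hasPolynomialGrowth_norm_div hf).exists_forall_div_le
  obtain ⟨c, hc, hcf⟩ :=
    exists_forall_le_mul_eLpNorm_of_iSup_ne_top (μ := μ) (F' := F') ψ (C * 1) (N + m) hq
  refine ⟨2 ^ m * c, ENNReal.mul_ne_top (by finiteness) hc, fun y => ?_⟩
  set δ : ℝ := (1 + ‖y‖)⁻¹ with hδ
  have hδ0 : 0 < δ := by positivity
  have hδ1 : δ ≤ 1 := inv_le_one_of_one_le₀ (by linarith [norm_nonneg y])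
  set v : E → ℝ := fun t => (1 + δ * ‖t‖) ^ m
  have hv : IsModerate v 1 m := isModerate_one_add_mul_norm_pow hδ0.le hδ1 m
  obtain ⟨B, hB⟩ := hm δ hδ0 hδ1
  have hsup : ⨆ t, ENNReal.ofReal (‖f t‖ / (w t * v t)) ≠ ∞ :=
    ne_top_of_le_ne_top ENNReal.ofReal_ne_top <| iSup_le fun t =>
      ENNReal.ofReal_le_ofReal ((div_div _ _ _).symm.trans_le (hB t))
  have hvy : v y ≤ 2 ^ m := by
    have h : δ * ‖y‖ ≤ 1 := by rw [hδ, inv_mul_le_iff₀ (by positivity)]; linarith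
    exact pow_le_pow_left₀ (by positivity) (by linarith) m
  have hdamp : ∀ t, ‖f t‖ / (w t * v t) ≤ ‖f t‖ / w t := fun t =>
    div_le_div_of_nonneg_left (norm_nonneg _) (hw.pos t) <|
      le_mul_of_one_le_right (hw.pos t).le (one_le_pow₀ (le_add_of_nonneg_right (by positivity)))
  calc ENNReal.ofReal (‖f y‖ / w y)
      ≤ 2 ^ m * ENNReal.ofReal (‖f y‖ / (w y * v y)) := by
        rw [← ENNReal.ofReal_ofNat, ← ENNReal.ofReal_pow zero_le_two,
          ← ENNReal.ofReal_mul (by positivity), ← div_div, ← mul_div_assoc]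
        refine ENNReal.ofReal_le_ofReal ((le_div_iff₀ (hv.pos y)).2 ?_)
        rw [mul_comm]
        exact mul_le_mul_of_nonneg_right hvy (div_nonneg (norm_nonneg _) (hw.pos y).le)
    _ ≤ 2 ^ m * (c * eLpNorm (fun t => ENNReal.ofReal (‖f t‖ / (w t * v t))) q μ) := by
        gcongr; exact hcf f _ (hw.mul hv) hsub hsup y
    _ ≤ 2 ^ m * (c * eLpNorm (fun t => ENNReal.ofReal (‖f t‖ / w t)) q μ) := by
        gcongr; exact eLpNorm_mono_enorm fun t => ENNReal.ofReal_le_ofReal (hdamp t)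
    _ = _ := (mul_assoc _ _ _).symm

lemma exists_forall_le_mul_eLpNorm (ψ : 𝓢(E, F)) (C : ℝ) (N : ℕ) {q : ℝ≥0∞} (hq : q ≠ 0) :
    ∃ c : ℝ≥0, ∀ (f : E → F') (w : E → ℝ), IsModerate w C N → HasPolynomialGrowth f →
      (∀ y, ‖f y‖ₑ ≤ ∫⁻ t, ‖ψ t‖ₑ * ‖f (t + y)‖ₑ ∂μ) →
      ∀ y, ENNReal.ofReal (‖f y‖ / w y) ≤
        c * eLpNorm (fun t => ENNReal.ofReal (‖f t‖ / w t)) q μ := by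
  obtain ⟨c, hc, hcf⟩ :=
    exists_forall_le_mul_eLpNorm_of_iSup_ne_top (μ := μ) (F' := F') ψ C N hq
  lift c to ℝ≥0 using hc
  refine ⟨c + 1, fun f w hw hf hsub y => ?_⟩
  rcases eq_or_ne (eLpNorm (fun t => ENNReal.ofReal (‖f t‖ / w t)) q μ) ∞ with htop | htop
  · rw [htop, ENNReal.mul_top (by simp)]
    exact le_top
  · obtain ⟨c', hc', hbound⟩ := exists_le_mul_eLpNorm_of_hasPolynomialGrowth ψ hq hw hf hsub
    have hsup := ne_top_of_le_ne_top (ENNReal.mul_ne_top hc' htop) (iSup_le hbound)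
    refine (hcf f w hw hsub hsup y).trans ?_
    gcongr
    exact_mod_cast le_self_add

end SelfImprovement

section MixedNorm

variable {n : ℕ} {p : Fin n → ℝ≥0∞}

lemma mixAux_succ {l : ℕ} (hl : l < n) (hp : p ⟨l, hl⟩ ≠ 0) (F : RV n → ℝ≥0∞) (x : RV n) :
    mixAux n p (l + 1) F x =
      eLpNorm (fun t => mixAux n p l F (Function.update x ⟨l, hl⟩ t)) (p ⟨l, hl⟩) volume := by
  simp only [mixAux, dif_pos hl]
  split_ifs with htop
  · simp only [htop, eLpNorm_exponent_top, eLpNormEssSup, enorm_eq_self]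
  · simp only [eLpNorm_eq_lintegral_rpow_enorm_toReal hp htop, enorm_eq_self]

lemma mixAux_congr (F : RV n → ℝ≥0∞) {l : ℕ} (hl : l ≤ n) {x y : RV n}
    (hxy : ∀ i : Fin n, l ≤ i → x i = y i) : mixAux n p l F x = mixAux n p l F y := by
  induction l generalizing x y with
  | zero => rw [funext fun i => hxy i i.val.zero_le]
  | succ l ih =>
    have hupdate (t : ℝ) : mixAux n p l F (Function.update x ⟨l, hl⟩ t) =
        mixAux n p l F (Function.update y ⟨l, hl⟩ t) := by
      refine ih (Nat.le_of_succ_le hl) fun i hi => ?_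
      rcases eq_or_ne i ⟨l, hl⟩ with rfl | hne
      · simp only [Function.update_self]
      · have hlt : l < i := lt_of_le_of_ne hi fun h => hne (Fin.ext h.symm)
        simpa only [Function.update_of_ne hne] using hxy i hlt
    simp only [mixAux, dif_pos (Nat.lt_of_succ_le hl), hupdate]

lemma le_pow_mul_mixAux (hp : ∀ i, p i ≠ 0) {c : ℝ≥0} {F : RV n → ℝ≥0∞}
    (hF : ∀ i z, F z ≤ c * eLpNorm (fun t => F (Function.update z i t)) (p i) volume)
    {l : ℕ} (hl : l ≤ n) (z : RV n) : F z ≤ c ^ l * mixAux n p l F z := by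
  induction l generalizing z with
  | zero => simp only [pow_zero, one_mul, mixAux, le_refl]
  | succ l ih =>
    calc F z ≤ c * eLpNorm (fun t => F (Function.update z ⟨l, hl⟩ t)) (p ⟨l, hl⟩) volume :=
          hF ⟨l, hl⟩ z
      _ ≤ c * (c ^ l * mixAux n p (l + 1) F z) := by
          rw [mixAux_succ hl (hp _), ← ENNReal.coe_pow]
          gcongr
          refine eLpNorm_le_mul_eLpNorm_of_ae_le_mul' (ae_of_all _ fun t => ?_) _
          simpa only [enorm_eq_self, ENNReal.coe_pow] using ih (Nat.le_of_succ_le hl) _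
      _ = c ^ (l + 1) * mixAux n p (l + 1) F z := by rw [pow_succ', mul_assoc]

lemma le_pow_mul_mixedNorm (hp : ∀ i, p i ≠ 0) {c : ℝ≥0} {F : RV n → ℝ≥0∞}
    (hF : ∀ i z, F z ≤ c * eLpNorm (fun t => F (Function.update z i t)) (p i) volume)
    (z : RV n) : F z ≤ c ^ n * mixedNorm n p F := by
  rw [mixedNorm, mixAux_congr F le_rfl (y := z) fun i hi => absurd i.isLt hi.not_gt]
  exact le_pow_mul_mixAux hp hF le_rfl z

end MixedNorm

section LineConvolution

open scoped SchwartzMap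

variable {E : Type*} [NormedAddCommGroup E] [NormedSpace ℝ E]

/-- The convolution of `u` with the measure `ψ(t) dt` carried by the line `ℝ e`. -/
def lineConv (ψ : ℝ → ℂ) (e : E) (u : E → ℂ) (x : E) : ℂ :=
  ∫ t, ψ t * u (x - t • e)

variable (ψ : 𝓢(ℝ, ℂ)) (e : E) {u : E → ℂ}

lemma continuous_lineConv (hu : Continuous u) (hgrowth : HasPolynomialGrowth u) :
    Continuous (lineConv ψ e u) := by
  obtain ⟨k, C, hC⟩ := hgrowth.exists_norm_add_smul_le (-e)
  have hψ := ψ.continuous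
  have hC0 : 0 ≤ C := by simpa using (norm_nonneg _).trans (hC 0 0)
  refine continuous_iff_continuousAt.2 fun x₀ => continuousAt_of_dominated
    (bound := fun t => C * (1 + (‖x₀‖ + 1)) ^ k * ((1 + ‖t‖) ^ k * ‖ψ t‖))
    (.of_forall fun x => Continuous.aestronglyMeasurable (by fun_prop)) ?_
    ((integrable_one_add_norm_pow_mul_norm ψ k).const_mul _) (ae_of_all _ fun t => by fun_prop)
  filter_upwards [Metric.ball_mem_nhds x₀ one_pos] with x hx
  have hxnorm : ‖x‖ ≤ ‖x₀‖ + 1 := by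
    linarith [norm_le_norm_add_norm_sub' x x₀, mem_ball_iff_norm.1 hx]
  refine ae_of_all _ fun t => ?_
  rw [norm_mul, mul_comm, sub_eq_add_neg, ← smul_neg]
  calc ‖u (x + t • -e)‖ * ‖ψ t‖ ≤ C * ((1 + ‖x‖) ^ k * (1 + ‖t‖) ^ k) * ‖ψ t‖ := by
        gcongr; exact hC x t
    _ ≤ C * ((1 + (‖x₀‖ + 1)) ^ k * (1 + ‖t‖) ^ k) * ‖ψ t‖ := by gcongr
    _ = _ := by ring

variable [MeasurableSpace E] [BorelSpace E] [SecondCountableTopology E] {μ : Measure E}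

lemma measurePreserving_sub_smul [SFinite μ] [μ.IsAddRightInvariant] :
    MeasurePreserving (fun p : ℝ × E => (p.1, p.2 - p.1 • e)) (volume.prod μ) (volume.prod μ) :=
  (MeasurePreserving.id volume).skew_product (g := fun t x => x - t • e) (by fun_prop)
    (ae_of_all _ fun t => map_sub_right_eq_self μ (t • e))

variable [μ.HasTemperateGrowth]

lemma HasPolynomialGrowth.integrable_mul (hu : Continuous u) (hgrowth : HasPolynomialGrowth u)
    (G : 𝓢(E, ℂ)) : Integrable (fun x => u x * G x) μ := by
  obtain ⟨k, C, hC⟩ := hgrowth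
  have hG := G.continuous
  refine ((integrable_one_add_norm_pow_mul_norm G k).const_mul C).mono'
    (Continuous.aestronglyMeasurable (by fun_prop)) (ae_of_all _ fun x => ?_)
  rw [norm_mul, ← mul_assoc]
  gcongr
  exact hC x

lemma integrable_prod_lineConv_mul (hu : Continuous u) (hgrowth : HasPolynomialGrowth u)
    (G : 𝓢(E, ℂ)) :
    Integrable (fun p : ℝ × E => ψ p.1 * u (p.2 - p.1 • e) * G p.2) (volume.prod μ) := by
  obtain ⟨k, C, hC⟩ := hgrowth.exists_norm_add_smul_le (-e)
  have hψ := ψ.continuous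
  have hG := G.continuous
  refine (((integrable_one_add_norm_pow_mul_norm ψ k).mul_prod
    (integrable_one_add_norm_pow_mul_norm G k)).const_mul C).mono'
    (Continuous.aestronglyMeasurable (by fun_prop)) (ae_of_all _ fun p => ?_)
  rw [norm_mul, norm_mul, sub_eq_add_neg, ← smul_neg]
  calc ‖ψ p.1‖ * ‖u (p.2 + p.1 • -e)‖ * ‖G p.2‖
      ≤ ‖ψ p.1‖ * (C * ((1 + ‖p.2‖) ^ k * (1 + ‖p.1‖) ^ k)) * ‖G p.2‖ := by
        gcongr; exact hC _ _
    _ = _ := by ring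

variable [SFinite μ] [μ.IsAddRightInvariant]

lemma integrable_prod_mul_lineConv_neg (hu : Continuous u) (hgrowth : HasPolynomialGrowth u)
    (G : 𝓢(E, ℂ)) :
    Integrable (fun p : ℝ × E => u p.2 * (ψ p.1 * G (p.2 - p.1 • -e))) (volume.prod μ) := by
  have h := integrable_prod_lineConv_mul (μ := μ) ψ e hu hgrowth G
  convert (measurePreserving_sub_smul (-e)).integrable_comp_of_integrable h using 2 with p
  simp only [Function.comp_apply, smul_neg, sub_neg_eq_add, add_sub_cancel_right]
  ring

lemma integrable_mul_lineConv_neg (hu : Continuous u) (hgrowth : HasPolynomialGrowth u)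
    (G : 𝓢(E, ℂ)) : Integrable (fun x => u x * lineConv ψ (-e) G x) μ := by
  simpa only [lineConv, integral_const_mul] using
    (integrable_prod_mul_lineConv_neg ψ e hu hgrowth G).integral_prod_right

lemma integral_lineConv_mul (hu : Continuous u) (hgrowth : HasPolynomialGrowth u) (G : 𝓢(E, ℂ)) :
    ∫ x, lineConv ψ e u x * G x ∂μ = ∫ x, u x * lineConv ψ (-e) G x ∂μ := by
  have hprod := integrable_prod_lineConv_mul (μ := μ) ψ e hu hgrowth G
  have hshear := measurePreserving_sub_smul (μ := μ) (-e)
  calc ∫ x, lineConv ψ e u x * G x ∂μ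
      = ∫ p : ℝ × E, ψ p.1 * u (p.2 - p.1 • e) * G p.2 ∂(volume.prod μ) := by
        rw [integral_prod_symm _ hprod]
        simp only [lineConv, integral_mul_const]
    _ = ∫ p : ℝ × E, u p.2 * (ψ p.1 * G (p.2 - p.1 • -e)) ∂(volume.prod μ) := by
        conv_lhs => rw [← hshear.map_eq]
        rw [integral_map hshear.measurable.aemeasurable
          (hshear.map_eq.symm ▸ hprod.aestronglyMeasurable)]
        refine integral_congr_ae (ae_of_all _ fun p => ?_)
        simp only [smul_neg, sub_neg_eq_add, add_sub_cancel_right]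
        ring
    _ = ∫ x, u x * lineConv ψ (-e) G x ∂μ := by
        rw [integral_prod_symm _ (integrable_prod_mul_lineConv_neg ψ e hu hgrowth G)]
        simp only [lineConv, integral_const_mul]

end LineConvolution

section FourierTransform

open scoped SchwartzMap FourierTransform Matrix

lemma norm_cexp_neg_I_mul (s : ℝ) : ‖cexp (-I * s)‖ = 1 := by
  rw [neg_mul, mul_comm, ← neg_mul, ← ofReal_neg, norm_exp_ofReal_mul_I]

lemma exists_integral_cexp_inner_mul_eq {V : Type*} [NormedAddCommGroup V] [InnerProductSpace ℝ V]
    [FiniteDimensional ℝ V] [MeasurableSpace V] [BorelSpace V] (g : 𝓢(V, ℂ)) :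
    ∃ φ : 𝓢(V, ℂ), ∀ ξ, ∫ x, cexp (-I * (inner ℝ x ξ : ℝ)) * φ x = g ξ := by
  have hpi : (2 * Real.pi : ℝ) ≠ 0 := by positivity
  let dilation : V ≃L[ℝ] V := ContinuousLinearEquiv.smulLeft (Units.mk0 (2 * Real.pi) hpi)
  let g' : 𝓢(V, ℂ) := SchwartzMap.compCLMOfContinuousLinearEquiv ℂ dilation g
  have hg' (ξ : V) : g' ((2 * Real.pi)⁻¹ • ξ) = g ξ := by
    change g ((2 * Real.pi) • ((2 * Real.pi)⁻¹ • ξ)) = g ξ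
    rw [smul_inv_smul₀ hpi]
  refine ⟨𝓕⁻ g', fun ξ => ?_⟩
  have hinv : 𝓕 (𝓕⁻ g') = g' := FourierTransform.fourier_fourierInv_eq g'
  rw [← hg' ξ, ← hinv, SchwartzMap.fourier_coe, Real.fourier_eq', hinv]
  refine integral_congr_ae (ae_of_all _ fun x => ?_)
  simp only [inner_smul_right, smul_eq_mul]
  congr 2
  push_cast
  field_simp

lemma exists_integral_cexp_mul_eq_cutoff (ρ : ℝ) (hρ : 0 < ρ) :
    ∃ ψ χ : 𝓢(ℝ, ℂ), (∀ s, |s| ≤ ρ → χ s = 1) ∧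
      ∀ s : ℝ, ∫ t : ℝ, cexp (-I * ((s * t : ℝ) : ℂ)) * ψ t = χ s := by
  let b : ContDiffBump (0 : ℝ) := ⟨ρ, ρ + 1, hρ, lt_add_one ρ⟩
  have hsupp : HasCompactSupport (ofRealCLM ∘ b) := b.hasCompactSupport.comp_left rfl
  let χ : 𝓢(ℝ, ℂ) := hsupp.toSchwartzMap (ofRealCLM.contDiff.comp b.contDiff)
  obtain ⟨ψ, hψ⟩ := exists_integral_cexp_inner_mul_eq χ
  refine ⟨ψ, χ, fun s hs => ?_, hψ⟩
  have hbs : b s = 1 := b.one_of_mem_closedBall (by simpa using hs)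
  change ((b s : ℝ) : ℂ) = 1
  rw [hbs, ofReal_one]

variable {n : ℕ}

lemma exists_FT_eq (g : 𝓢(RV n, ℂ)) : ∃ φ : 𝓢(RV n, ℂ), FT n φ = g := by
  let L : EuclideanSpace ℝ (Fin n) ≃L[ℝ] RV n := EuclideanSpace.equiv (Fin n) ℝ
  obtain ⟨φ, hφ⟩ :=
    exists_integral_cexp_inner_mul_eq (SchwartzMap.compCLMOfContinuousLinearEquiv ℂ L g)
  refine ⟨SchwartzMap.compCLMOfContinuousLinearEquiv ℂ L.symm φ, funext fun ξ => ?_⟩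
  have h := hφ (L.symm ξ)
  rw [← (PiLp.volume_preserving_toLp (Fin n)).integral_comp
    (MeasurableEquiv.toLp 2 (Fin n → ℝ)).measurableEmbedding] at h
  simp only [PiLp.inner_apply, RCLike.inner_apply, conj_trivial,
    mul_comm ((L.symm ξ).ofLp _)] at h
  exact h

lemma integrable_cexp_dotProduct_mul (φ : 𝓢(RV n, ℂ)) (ξ : RV n) :
    Integrable fun x => cexp (-I * ((x ⬝ᵥ ξ : ℝ) : ℂ)) * φ x := by
  have hφ := φ.continuous
  refine φ.integrable.norm.mono' (Continuous.aestronglyMeasurable (by fun_prop))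
    (ae_of_all _ fun x => ?_)
  rw [norm_mul, norm_cexp_neg_I_mul, one_mul]

lemma FT_sub (φ φ' : 𝓢(RV n, ℂ)) (ξ : RV n) :
    FT n (φ - φ' : 𝓢(RV n, ℂ)) ξ = FT n φ ξ - FT n φ' ξ := by
  simp only [FT, sub_apply, mul_sub]
  exact integral_sub (integrable_cexp_dotProduct_mul φ ξ) (integrable_cexp_dotProduct_mul φ' ξ)

lemma lineConv_neg_FT {ψ : 𝓢(ℝ, ℂ)} {χ : ℝ → ℂ}
    (hχ : ∀ s : ℝ, ∫ t : ℝ, cexp (-I * ((s * t : ℝ) : ℂ)) * ψ t = χ s) (e : RV n)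
    {φ φ' : 𝓢(RV n, ℂ)} (hφ' : ∀ ξ, φ' ξ = χ (ξ ⬝ᵥ e) * φ ξ) :
    lineConv ψ (-e) (FT n φ) = FT n φ' := by
  funext x
  have hint : Integrable (Function.uncurry fun (t : ℝ) (ξ : RV n) =>
      ψ t * (cexp (-I * ((ξ ⬝ᵥ (x + t • e) : ℝ) : ℂ)) * φ ξ)) (volume.prod volume) := by
    have hψ := ψ.continuous
    have hφ := φ.continuous
    refine (ψ.integrable.norm.mul_prod φ.integrable.norm).mono'
      (Continuous.aestronglyMeasurable (by fun_prop)) (ae_of_all _ fun p => ?_)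
    rw [Function.uncurry, norm_mul, norm_mul, norm_cexp_neg_I_mul, one_mul]
  have hexp (t : ℝ) (ξ : RV n) : ψ t * (cexp (-I * ((ξ ⬝ᵥ (x + t • e) : ℝ) : ℂ)) * φ ξ) =
      cexp (-I * ((ξ ⬝ᵥ x : ℝ) : ℂ)) * φ ξ *
        (cexp (-I * ((ξ ⬝ᵥ e * t : ℝ) : ℂ)) * ψ t) := by
    rw [dotProduct_add, dotProduct_smul, smul_eq_mul, mul_comm t, ofReal_add, mul_add, exp_add]
    ring
  calc lineConv ψ (-e) (FT n φ) x
      = ∫ t, ∫ ξ, ψ t * (cexp (-I * ((ξ ⬝ᵥ (x + t • e) : ℝ) : ℂ)) * φ ξ) := by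
        simp only [lineConv, smul_neg, sub_neg_eq_add, integral_const_mul]
        rfl
    _ = ∫ ξ, ∫ t, cexp (-I * ((ξ ⬝ᵥ x : ℝ) : ℂ)) * φ ξ *
          (cexp (-I * ((ξ ⬝ᵥ e * t : ℝ) : ℂ)) * ψ t) := by
        rw [integral_integral_swap hint]
        simp only [hexp]
    _ = FT n φ' x := by
        refine integral_congr_ae (ae_of_all _ fun ξ => ?_)
        simp only [integral_const_mul, hχ, hφ', dotProduct]
        ring

end FourierTransform

section SpectralReproduction

open scoped SchwartzMap Topology Matrix

variable {n : ℕ} {u : RV n → ℂ} {S : Set (RV n)}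

/-- The spectral condition `supp 𝓕u ⊆ S`, the Fourier transform of `u` being that of the
tempered distribution defined by `u`. -/
def HasSpectrumIn (u : RV n → ℂ) (S : Set (RV n)) : Prop :=
  ∀ φ : 𝓢(RV n, ℂ), tsupport φ ∩ S = ∅ → ∫ x, u x * FT n φ x = 0

namespace HasSpectrumIn

lemma integral_mul_FT_eq (hS : HasSpectrumIn u S) {φ φ' : 𝓢(RV n, ℂ)}
    (hφ : Integrable fun x => u x * FT n φ x) (hφ' : Integrable fun x => u x * FT n φ' x)
    (heq : ∀ ξ ∈ S, φ =ᶠ[𝓝 ξ] φ') : ∫ x, u x * FT n φ x = ∫ x, u x * FT n φ' x := by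
  rw [← sub_eq_zero, ← integral_sub hφ hφ']
  simp only [← mul_sub, ← FT_sub]
  refine hS (φ - φ') (Set.eq_empty_iff_forall_notMem.2 fun ξ hξ => ?_)
  refine notMem_tsupport_iff_eventuallyEq.2 ?_ hξ.1
  filter_upwards [heq ξ hξ.2] with η hη
  simp only [sub_apply, hη, sub_self, Pi.zero_apply]

variable {ψ χ : 𝓢(ℝ, ℂ)}

lemma integral_lineConv_mul_eq (hS : HasSpectrumIn u S) (hu : Continuous u)
    (hgrowth : HasPolynomialGrowth u) {ρ : ℝ} (hχ₁ : ∀ s, |s| ≤ ρ → χ s = 1)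
    (hχ : ∀ s : ℝ, ∫ t : ℝ, cexp (-I * ((s * t : ℝ) : ℂ)) * ψ t = χ s) {e : RV n}
    (he : ∀ ξ ∈ S, |ξ ⬝ᵥ e| < ρ) (G : 𝓢(RV n, ℂ)) :
    ∫ x, lineConv ψ e u x * G x = ∫ x, u x * G x := by
  obtain ⟨φ, hφ⟩ := exists_FT_eq G
  have hχe : Function.HasTemperateGrowth fun ξ : RV n => χ (ξ ⬝ᵥ e) := by
    exact χ.hasTemperateGrowth.comp
      (((dotProductBilin ℝ ℝ).flip e).toContinuousLinearMap.hasTemperateGrowth)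
  let φ₁ : 𝓢(RV n, ℂ) := SchwartzMap.smulLeftCLM ℂ (fun ξ => χ (ξ ⬝ᵥ e)) φ
  have hφ₁ (ξ : RV n) : φ₁ ξ = χ (ξ ⬝ᵥ e) * φ ξ := SchwartzMap.smulLeftCLM_apply_apply hχe φ ξ
  have hconv : lineConv ψ (-e) G = FT n φ₁ := hφ ▸ lineConv_neg_FT hχ e hφ₁
  have hint := hgrowth.integrable_mul (μ := volume) hu G
  have hint₁ := integrable_mul_lineConv_neg (μ := volume) ψ e hu hgrowth G
  rw [integral_lineConv_mul ψ e hu hgrowth G, hconv]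
  rw [hconv] at hint₁
  rw [← hφ] at hint ⊢
  refine hS.integral_mul_FT_eq hint₁ hint fun ξ hξ => ?_
  have hopen : IsOpen {η : RV n | |η ⬝ᵥ e| < ρ} := isOpen_lt (by fun_prop) continuous_const
  filter_upwards [hopen.mem_nhds (he ξ hξ)] with η hη
  rw [hφ₁, hχ₁ _ (le_of_lt hη), one_mul]

lemma lineConv_eq (hS : HasSpectrumIn u S) (hu : Continuous u)
    (hgrowth : HasPolynomialGrowth u) {ρ : ℝ} (hχ₁ : ∀ s, |s| ≤ ρ → χ s = 1)
    (hχ : ∀ s : ℝ, ∫ t : ℝ, cexp (-I * ((s * t : ℝ) : ℂ)) * ψ t = χ s) {e : RV n}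
    (he : ∀ ξ ∈ S, |ξ ⬝ᵥ e| < ρ) : lineConv ψ e u = u := by
  have hconv := continuous_lineConv ψ e hu hgrowth
  refine (hconv.ae_eq_iff_eq volume hu).1 (ae_eq_of_integral_contDiff_smul_eq
    hconv.locallyIntegrable hu.locallyIntegrable fun g hg hgc => ?_)
  have hsupp : HasCompactSupport (ofRealCLM ∘ g) := hgc.comp_left rfl
  let G : 𝓢(RV n, ℂ) := hsupp.toSchwartzMap (ofRealCLM.contDiff.comp hg)
  have hG (z : ℂ) (x : RV n) : g x • z = z * G x := by
    rw [real_smul, mul_comm]; rfl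
  simpa only [hG] using hS.integral_lineConv_mul_eq hu hgrowth hχ₁ hχ he G

end HasSpectrumIn

lemma exists_forall_enorm_le_lintegral_of_hasSpectrumIn :
    ∃ ψ : 𝓢(ℝ, ℂ), ∀ {n : ℕ} {u : RV n → ℂ} {S : Set (RV n)} {e : RV n}, Continuous u →
      HasPolynomialGrowth u → HasSpectrumIn u S → (∀ ξ ∈ S, |ξ ⬝ᵥ e| ≤ 1) →
      ∀ y, ‖u y‖ₑ ≤ ∫⁻ t, ‖ψ t‖ₑ * ‖u (y - t • e)‖ₑ := by
  obtain ⟨ψ, χ, hχ₁, hχ⟩ := exists_integral_cexp_mul_eq_cutoff 2 two_pos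
  refine ⟨ψ, fun {n u S e} hu hgrowth hS he y => ?_⟩
  have hrep : lineConv ψ e u = u :=
    hS.lineConv_eq hu hgrowth hχ₁ hχ fun ξ hξ => (he ξ hξ).trans_lt one_lt_two
  conv_lhs => rw [← hrep]
  simpa only [lineConv, enorm_mul] using
    enorm_integral_le_lintegral_enorm fun t => ψ t * u (y - t • e)

end SpectralReproduction

section MaximalEstimate

open scoped SchwartzMap Matrix

lemma exists_forall_le_mul_eLpNorm_line (C : ℝ) (N : ℕ) {q : ℝ≥0∞} (hq : q ≠ 0) :
    ∃ c : ℝ≥0, ∀ {n : ℕ} {u : RV n → ℂ} {S : Set (RV n)} {e : RV n} {w : ℝ → ℝ},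
      Continuous u → HasPolynomialGrowth u → HasSpectrumIn u S → (∀ ξ ∈ S, |ξ ⬝ᵥ e| ≤ 1) →
      IsModerate w C N → ∀ (x : RV n) (t : ℝ), ENNReal.ofReal (‖u (x - t • e)‖ / w t) ≤
        c * eLpNorm (fun s => ENNReal.ofReal (‖u (x - s • e)‖ / w s)) q volume := by
  obtain ⟨ψ, hψ⟩ := exists_forall_enorm_le_lintegral_of_hasSpectrumIn
  obtain ⟨c, hc⟩ := exists_forall_le_mul_eLpNorm (μ := volume) (F' := ℂ) ψ C N hq
  refine ⟨c, fun {n u S e w} hu hgrowth hS he hw x => hc _ w hw ?_ fun s => ?_⟩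
  · simpa only [smul_neg, ← sub_eq_add_neg] using hgrowth.comp_add_smul x (-e)
  · simpa only [add_comm _ s, add_smul, sub_sub] using hψ hu hgrowth hS he (x - s • e)

variable {n : ℕ}

lemma IsModerate.comp_update {w : RV n → ℝ} {C : ℝ} {N : ℕ} (hw : IsModerate w C N) (z : RV n)
    (i : Fin n) : IsModerate (fun t => w (Function.update z i t)) C N := by
  refine hw.comp fun s t => ?_
  rw [← Function.update_sub, sub_self, ← Pi.single, Pi.norm_single]

lemma isModerate_prod_one_add_abs_rpow (r : Fin n → ℝ) :
    IsModerate (fun z : RV n => ∏ l, (1 + |z l|) ^ r l) 1 (∑ l, ⌈|r l|⌉₊) := by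
  have h := IsModerate.prod Finset.univ fun l => (isModerate_one_add_norm_rpow (r l)).comp
    (g := fun z : RV n => z l) fun x y => norm_le_pi_norm (x - y) l
  rwa [Finset.prod_const_one] at h

lemma sub_mul_update (x b z : RV n) (i : Fin n) (t : ℝ) :
    x - b * Function.update z i t = x - b * Function.update z i 0 - t • Pi.single i (b i) := by
  ext k
  rcases eq_or_ne k i with rfl | hk
  · simp [mul_comm]
  · simp [hk]

lemma exists_forall_le_mul_mixedNorm {q : Fin n → ℝ≥0∞} (hq : ∀ i, q i ≠ 0) (C : ℝ) (N : ℕ) :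
    ∃ c : ℝ≥0, 0 < c ∧ ∀ {L : Fin n → ℝ} {u : RV n → ℂ} {w : RV n → ℝ}, (∀ i, 0 < L i) →
      Continuous u → HasPolynomialGrowth u → HasSpectrumIn u {ξ | ∀ k, |ξ k| ≤ L k} →
      IsModerate w C N → ∀ x z : RV n, ENNReal.ofReal (‖u (x - L⁻¹ * z)‖ / w z) ≤
        c * mixedNorm n q fun z => ENNReal.ofReal (‖u (x - L⁻¹ * z)‖ / w z) := by
  choose c hc using fun i => exists_forall_le_mul_eLpNorm_line C N (hq i)
  refine ⟨(1 + ∑ i, c i) ^ n, by positivity, fun {L u w} hL hu hgrowth hS hw x => ?_⟩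
  rw [ENNReal.coe_pow]
  refine le_pow_mul_mixedNorm hq fun i z => ?_
  have he : ∀ ξ ∈ {ξ : RV n | ∀ k, |ξ k| ≤ L k}, |ξ ⬝ᵥ Pi.single i (L⁻¹ i)| ≤ 1 := by
    intro ξ hξ
    rw [dotProduct_single, Pi.inv_apply, abs_mul, abs_of_pos (inv_pos.2 (hL i)),
      mul_inv_le_iff₀ (hL i), one_mul]
    exact hξ i
  have hline := hc i hu hgrowth hS he (hw.comp_update z i) (x - L⁻¹ * Function.update z i 0) (z i)
  simp only [← sub_mul_update, Function.update_eq_self] at hline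
  refine hline.trans ?_
  gcongr
  exact (Finset.single_le_sum (fun _ _ => zero_le) (Finset.mem_univ i)).trans le_add_self

end MaximalEstimate

theorem stmt12_general {n : ℕ} {q : Fin n → ℝ≥0∞} (hq : ∀ i, q i ≠ 0) (r : Fin n → ℝ) :
    ∃ c : ℝ, 0 < c ∧ ∀ (L : Fin n → ℝ), (∀ i, 0 < L i) →
      ∀ u : RV n → ℂ, Continuous u → HasPolynomialGrowth u →
      HasSpectrumIn u {ξ | ∀ k, |ξ k| ≤ L k} → ∀ x : RV n,
        ⨆ y : RV n, ENNReal.ofReal (‖u y‖ / ∏ l, (1 + L l * |x l - y l|) ^ r l) ≤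
          ENNReal.ofReal c * mixedNorm n q fun z =>
            ENNReal.ofReal (‖u fun i => x i - (L i)⁻¹ * z i‖ / ∏ l, (1 + |z l|) ^ r l) := by
  obtain ⟨c, hc₀, hc⟩ := exists_forall_le_mul_mixedNorm hq 1 (∑ l, ⌈|r l|⌉₊)
  refine ⟨c, hc₀, fun L hL u hu hgrowth hS x => iSup_le fun y => ?_⟩
  have hz : x - L⁻¹ * (L * (x - y)) = y := by
    ext i
    simp [inv_mul_cancel_left₀ (hL i).ne']
  have h := hc hL hu hgrowth hS (isModerate_prod_one_add_abs_rpow r) x (L * (x - y))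
  simp only [hz, Pi.mul_apply, Pi.sub_apply, abs_mul, abs_of_pos (hL _)] at h
  rw [ENNReal.ofReal_coe_nnreal]
  exact h

/-- Proposition 3.1 (pointwise estimate of the maximal function). -/
theorem stmt12 (n : ℕ) (hn : 1 ≤ n) (a : Fin n → ℝ) (ha : ∀ i, 1 ≤ a i)
    (q : Fin n → ℝ≥0∞) (hq : ∀ i, 0 < q i) (r : Fin n → ℝ) (hr : ∀ l, 0 < r l) :
    ∃ c : ℝ, 0 < c ∧
      ∀ R : ℝ, 0 < R → ∀ j : ℕ, 1 ≤ j →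
      ∀ u : RV n → ℂ, Function.HasTemperateGrowth u → SpecCond n a R j u →
      ∀ x : RV n,
        ustar n a r R j u x
          ≤ ENNReal.ofReal c *
            mixedNorm n q
              (fun z =>
                ENNReal.ofReal
                  (‖u (fun i => x i - R⁻¹ * (2:ℝ) ^ (-(j:ℝ) * a i) * z i)‖ /
                    ∏ l, (1 + |z l|) ^ (r l))) := by
  obtain ⟨c, hc₀, hc⟩ := stmt12_general (fun i => (hq i).ne') r
  refine ⟨c, hc₀, fun R hR j _ u hu hspec x => ?_⟩
  simpa only [ustar, neg_mul, Real.rpow_neg zero_le_two, mul_inv] using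
    hc (fun k => R * 2 ^ ((j : ℝ) * a k)) (fun k => by positivity) u hu.1.continuous
      (hasPolynomialGrowth_of_hasTemperateGrowth hu) hspec x
end
end

section
/- Let ψ_0, ψ ∈ 𝒮(ℝⁿ) satisfy the Tauberian conditions for some ε > 0. Let N > 0, let r = (r_1,…,r_n) with r_l > 0, and let τ > 0. Then there exists a constant C > 0 (depending only on N, r, τ, ψ_0, ψ, ε, a, n) such that for every f ∈ 𝒮′(ℝⁿ), every j ∈ ℕ₀ and every x ∈ ℝⁿ: (ψ_j^*f(x))^τ ≤ C · ∑_{k=j}^∞ 2^{(j−k)Nτ} ∫_{ℝⁿ} 2^{k|a|}·|ψ_k*f(z)|^τ / ∏_{l=1}^n (1+2^{ka_l}|x_l−z_l|)^{r_l τ} dz, both sides interpreted in [0,∞]. -/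
open MeasureTheory Complex
open scoped ENNReal NNReal BigOperators

noncomputable section

/-!
The Tauberian condition permits division by `𝓕ψ` on an anisotropic annulus, which produces Schwartz
functions `Φ`, `Λ` with `Φ = 1` and `Λ = 0` near the origin and `Φ - Φ(2^a ·) = Λ 𝓕ψ`. Telescoping
gives `ψ_j = ∑_{m ≥ 0} κ_m * ψ_{j+m}`, where `κ_m` is the inverse transform of a dilate of `Λ` times
`𝓕ψ_j`; as `Λ` vanishes near the origin, `κ_m` decays like `2^{-mL} (1 + |x|)^{-M}` for all `L`
and `M`. Hence `|ψ_j * f|` is dominated by averages of the `|ψ_k * f|`, `k ≥ j`, on scale space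
`ℕ × ℝⁿ` against the kernels `K = 2^{(j-k)N} ∏ (1 + 2^{k a_l} |x_l - z_l|)^{-r_l}`, and since these
kernels are submultiplicative, `K(p, ·) |ψ * f|` is pointwise dominated by its own integral. For
`τ > 1` Hölder's inequality replaces the integrand by its `τ`-th power. For `τ ≤ 1` one follows
Strömberg and Torchinsky: write `Y = Y^{1-τ} Y^τ` and absorb the supremum of `Y^{1-τ}` into the
left-hand side. Finiteness of that supremum comes from a first pass with exponents depending on `f`.
-/

section SchwartzTranslation

open SchwartzMap

variable {V : Type*} [NormedAddCommGroup V] [NormedSpace ℝ V]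

lemma iteratedFDeriv_compSubConstCLM (h : 𝓢(V, ℂ)) (J : ℕ) (z x : V) :
    iteratedFDeriv ℝ J (compSubConstCLM ℂ z h) x = iteratedFDeriv ℝ J h (x - z) :=
  iteratedFDeriv_comp_sub (𝕜 := ℝ) (f := h) J z x

lemma exists_one_add_norm_pow_mul_iteratedFDeriv_le (h : 𝓢(V, ℂ)) (k J : ℕ) :
    ∃ C, 0 ≤ C ∧ ∀ x, (1 + ‖x‖) ^ k * ‖iteratedFDeriv ℝ J h x‖ ≤ C :=
  ⟨_, by positivity, one_add_le_sup_seminorm_apply (𝕜 := ℂ) (m := (k, J)) le_rfl le_rfl h⟩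

lemma seminorm_compSubConstCLM_le (h : 𝓢(V, ℂ)) (k J : ℕ) :
    ∃ C, 0 ≤ C ∧
      ∀ z, SchwartzMap.seminorm ℂ k J (compSubConstCLM ℂ z h) ≤ C * (1 + ‖z‖) ^ k := by
  obtain ⟨C, hC0, hC⟩ := exists_one_add_norm_pow_mul_iteratedFDeriv_le h k J
  refine ⟨C, hC0, fun z => SchwartzMap.seminorm_le_bound ℂ k J _ (by positivity) fun x => ?_⟩
  have hx : ‖x‖ ≤ (1 + ‖z‖) * (1 + ‖x - z‖) := by
    have : ‖x‖ ≤ ‖x - z‖ + ‖z‖ := by simpa using norm_add_le (x - z) z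
    nlinarith [norm_nonneg z, norm_nonneg (x - z)]
  rw [iteratedFDeriv_compSubConstCLM]
  calc ‖x‖ ^ k * ‖iteratedFDeriv ℝ J h (x - z)‖
      ≤ ((1 + ‖z‖) * (1 + ‖x - z‖)) ^ k * ‖iteratedFDeriv ℝ J h (x - z)‖ := by gcongr
    _ = (1 + ‖x - z‖) ^ k * ‖iteratedFDeriv ℝ J h (x - z)‖ * (1 + ‖z‖) ^ k := by
      rw [mul_pow]; ring
    _ ≤ C * (1 + ‖z‖) ^ k := by gcongr ?_ * _; exact hC _

lemma seminorm_compSubConstCLM_sub_le (h : 𝓢(V, ℂ)) (k J : ℕ) :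
    ∃ C, ∀ z, ‖z‖ < 1 → SchwartzMap.seminorm ℂ k J (compSubConstCLM ℂ z h - h) ≤ C * ‖z‖ := by
  obtain ⟨C, hC0, hC⟩ := exists_one_add_norm_pow_mul_iteratedFDeriv_le h k (J + 1)
  refine ⟨C, fun z hz => SchwartzMap.seminorm_le_bound ℂ k J _ (by positivity) fun x => ?_⟩
  have hderiv : iteratedFDeriv ℝ J (compSubConstCLM ℂ z h - h) x
      = iteratedFDeriv ℝ J h (x - z) - iteratedFDeriv ℝ J h x := by
    rw [← iteratedFDeriv_compSubConstCLM]
    exact iteratedFDeriv_sub_apply (SchwartzMap.contDiffAt _ _) (SchwartzMap.contDiffAt _ _)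
  have hdiff : Differentiable ℝ (iteratedFDeriv ℝ J h) :=
    (h.smooth ⊤).differentiable_iteratedFDeriv (mod_cast WithTop.coe_lt_top J)
  have hlip := (convex_ball x 1).norm_image_sub_le_of_norm_fderiv_le (𝕜 := ℝ) (C := C)
    (f := fun w => ‖x‖ ^ k • iteratedFDeriv ℝ J h w) (x := x) (y := x - z)
    (fun w _ => (hdiff.fun_const_smul _) w) (fun w hw => ?_) (by simp) (by simpa using hz)
  · rw [← smul_sub, ← hderiv, norm_smul, norm_pow, norm_norm] at hlip
    simpa using hlip
  · have hxw : ‖x‖ ≤ 1 + ‖w‖ := by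
      have := norm_sub_norm_le x w
      have : ‖w - x‖ < 1 := by simpa [dist_eq_norm] using hw
      rw [norm_sub_rev] at this
      linarith
    rw [fderiv_fun_const_smul (hdiff w), norm_smul, norm_pow, norm_norm, norm_fderiv_iteratedFDeriv]
    exact (by gcongr : _ ≤ (1 + ‖w‖) ^ k * ‖iteratedFDeriv ℝ (J + 1) h w‖).trans (hC w)

lemma continuous_compSubConstCLM (h : 𝓢(V, ℂ)) :
    Continuous fun z : V => compSubConstCLM ℂ z h := by
  refine continuous_iff_continuousAt.2 fun z₀ => ?_
  rw [ContinuousAt, (schwartz_withSeminorms ℂ V ℂ).tendsto_nhds]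
  rintro ⟨k, J⟩ ε hε
  obtain ⟨C, hC⟩ := seminorm_compSubConstCLM_sub_le (compSubConstCLM ℂ z₀ h) k J
  have hnear : ∀ᶠ z in nhds z₀, ‖z - z₀‖ < 1 ∧ C * ‖z - z₀‖ < ε := by
    have hcont : Continuous fun z => ‖z - z₀‖ := by fun_prop
    refine .and ?_ ?_
    · exact (hcont.tendsto z₀).eventually_lt_const (by simp)
    · exact ((hcont.const_mul C).tendsto z₀).eventually_lt_const (by simpa using hε)
  filter_upwards [hnear] with z hz
  have hsub := hC (z - z₀) hz.1
  rw [compSubConstCLM_comp, add_sub_cancel] at hsub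
  exact hsub.trans_lt hz.2

end SchwartzTranslation

section Seminorms

open SchwartzMap
open scoped BoundedContinuousFunction

variable {V : Type*} [NormedAddCommGroup V] [NormedSpace ℝ V]

/-- The Banach space of bounded continuous functions from `V` to the `J`-linear forms on `V`. It is
a type synonym because elaboration does not identify the two topologies which `→ᵇ` receives from the
metric and from the norm of its codomain. -/
def BoundedForms (V : Type*) [NormedAddCommGroup V] [NormedSpace ℝ V] (J : ℕ) : Type _ :=
  V →ᵇ (V [×J]→L[ℝ] ℂ)

namespace BoundedForms

instance (J : ℕ) : NormedAddCommGroup (BoundedForms V J) :=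
  inferInstanceAs (NormedAddCommGroup (V →ᵇ (V [×J]→L[ℝ] ℂ)))

instance (J : ℕ) : NormedSpace ℂ (BoundedForms V J) :=
  inferInstanceAs (NormedSpace ℂ (V →ᵇ (V [×J]→L[ℝ] ℂ)))

instance (J : ℕ) : CompleteSpace (BoundedForms V J) :=
  inferInstanceAs (CompleteSpace (V →ᵇ (V [×J]→L[ℝ] ℂ)))

/-- Evaluation of a bounded function with values in the `J`-linear forms at a point and a vector,
as a continuous functional. -/
def evalCLM {J : ℕ} (x : V) (m : Fin J → V) : BoundedForms V J →L[ℂ] ℂ :=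
  LinearMap.mkContinuous
    { toFun := fun F : V →ᵇ (V [×J]→L[ℝ] ℂ) => F x m
      map_add' := fun _ _ => rfl
      map_smul' := fun _ _ => rfl }
    (∏ i, ‖m i‖) fun F : V →ᵇ (V [×J]→L[ℝ] ℂ) => by
      refine ((F x).le_opNorm m).trans ?_
      rw [mul_comm]
      exact mul_le_mul_of_nonneg_left (F.norm_coe_le_norm x) (by positivity)

end BoundedForms

/-- The map `φ ↦ ‖·‖ ^ k • D^J φ` into the bounded continuous functions. It turns the Schwartz
seminorm of index `(k, J)` into the norm of a Banach space, where Bochner integrals are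
available. -/
def weightedIteratedFDeriv (k J : ℕ) : 𝓢(V, ℂ) →L[ℂ] BoundedForms V J :=
  mkCLMtoNormedSpace (G := BoundedForms V J) (D := V) (E := ℂ) (𝕜 := ℂ) (𝕜' := ℂ)
    (σ := RingHom.id ℂ)
    (fun φ => BoundedContinuousFunction.ofNormedAddCommGroup
      (fun x => ‖x‖ ^ k • iteratedFDeriv ℝ J φ x)
      ((continuous_norm.pow k).smul
        ((φ.smooth ⊤).continuous_iteratedFDeriv (mod_cast le_top)))
      (SchwartzMap.seminorm ℂ k J φ)
      fun x => by simpa [norm_smul] using SchwartzMap.le_seminorm ℂ k J φ x)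
    (fun φ χ => BoundedContinuousFunction.ext fun x =>
      (congrArg (‖x‖ ^ k • ·) (iteratedFDeriv_add_apply (φ.contDiffAt J) (χ.contDiffAt J))).trans
        (smul_add ..))
    (fun c φ => BoundedContinuousFunction.ext fun x =>
      (congrArg (‖x‖ ^ k • ·) (iteratedFDeriv_const_smul_apply (φ.contDiffAt J))).trans
        (smul_comm ..))
    ⟨{(k, J)}, 1, zero_le_one, fun φ => by
      rw [Finset.sup_singleton, one_mul]
      exact BoundedContinuousFunction.norm_ofNormedAddCommGroup_le _ (apply_nonneg _ _) _⟩

lemma norm_weightedIteratedFDeriv (k J : ℕ) (φ : 𝓢(V, ℂ)) :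
    ‖weightedIteratedFDeriv k J φ‖ = SchwartzMap.seminorm ℂ k J φ := by
  let F : V →ᵇ (V [×J]→L[ℝ] ℂ) := weightedIteratedFDeriv k J φ
  have hnorm (x : V) : ‖F x‖ = ‖x‖ ^ k * ‖iteratedFDeriv ℝ J φ x‖ := by
    change ‖‖x‖ ^ k • iteratedFDeriv ℝ J φ x‖ = _
    simp [norm_smul]
  refine le_antisymm ?_ (SchwartzMap.seminorm_le_bound ℂ k J φ (norm_nonneg F) fun x => ?_)
  · exact (BoundedContinuousFunction.norm_le (apply_nonneg _ _)).2 fun x =>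
      (hnorm x).trans_le (SchwartzMap.le_seminorm ℂ k J φ x)
  · exact (hnorm x).symm.trans_le (F.norm_coe_le_norm x)

end Seminorms

lemma exists_clm_comp_eq_of_norm_le {W E : Type*} [AddCommGroup W] [Module ℂ W]
    [NormedAddCommGroup E] [NormedSpace ℂ E] (f : W →ₗ[ℂ] ℂ) (A : W →ₗ[ℂ] E) (C : ℝ)
    (hC : ∀ φ, ‖f φ‖ ≤ C * ‖A φ‖) :
    ∃ F : E →L[ℂ] ℂ, ∀ φ, F (A φ) = f φ := by
  have hker : f ∈ (LinearMap.ker A).dualAnnihilator :=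
    (Submodule.mem_dualAnnihilator f).2 fun φ hφ => by
      simpa [LinearMap.mem_ker.1 hφ] using hC φ
  rw [← LinearMap.range_dualMap_eq_dualAnnihilator_ker] at hker
  obtain ⟨g, rfl⟩ := hker
  obtain ⟨F, hF, -⟩ := exists_extension_norm_eq (LinearMap.range A)
    ((g.domRestrict (LinearMap.range A)).mkContinuous C (by rintro ⟨_, φ, rfl⟩; exact hC φ))
  exact ⟨F, fun φ => hF ⟨A φ, φ, rfl⟩⟩

section Convolution

open SchwartzMap
open scoped FourierTransform LineDeriv BoundedContinuousFunction

variable {V : Type*} [NormedAddCommGroup V] [InnerProductSpace ℝ V] [FiniteDimensional ℝ V]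
  [MeasurableSpace V] [BorelSpace V]

/-- The convolution `κ * h` of two scalar Schwartz functions. -/
def schwartzConv (κ h : 𝓢(V, ℂ)) : 𝓢(V, ℂ) :=
  SchwartzMap.convolution (ContinuousLinearMap.mul ℂ ℂ) κ h

lemma schwartzConv_apply (κ h : 𝓢(V, ℂ)) (x : V) :
    schwartzConv κ h x = ∫ t, κ t * h (x - t) :=
  convolution_apply ..

lemma fourier_schwartzConv (κ h : 𝓢(V, ℂ)) (x : V) :
    𝓕 (schwartzConv κ h) x = 𝓕 κ x * 𝓕 h x := by
  rw [schwartzConv, fourier_convolution]; rfl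

lemma lineDeriv_schwartzConv (κ h : 𝓢(V, ℂ)) (m : V) :
    ∂_{m} (schwartzConv κ h) = schwartzConv κ (∂_{m} h) := by
  refine (FourierTransform.fourierCLE ℂ 𝓢(V, ℂ)).injective ?_
  ext x
  have hm : (inner ℝ · m : V → ℝ).HasTemperateGrowth := by fun_prop
  simp only [FourierTransform.fourierCLE_apply, fourier_schwartzConv, fourier_lineDerivOp_eq,
    smul_apply, smulLeftCLM_apply_apply hm, smul_eq_mul, Complex.real_smul]
  ring

lemma iteratedLineDeriv_schwartzConv (κ h : 𝓢(V, ℂ)) {J : ℕ} (m : Fin J → V) :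
    ∂^{m} (schwartzConv κ h) = schwartzConv κ (∂^{m} h) := by
  induction J with
  | zero => simp
  | succ J ih =>
    rw [LineDeriv.iteratedLineDerivOp_succ_left, LineDeriv.iteratedLineDerivOp_succ_left, ih,
      lineDeriv_schwartzConv]

lemma integrable_smul_of_polynomial_growth {E : Type*} [NormedAddCommGroup E] [NormedSpace ℂ E]
    (κ : 𝓢(V, ℂ)) {G : V → E} (hG : Continuous G) {C : ℝ} {k : ℕ}
    (hC : ∀ t, ‖G t‖ ≤ C * (1 + ‖t‖) ^ k) :
    Integrable fun t => κ t • G t := by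
  have hdom : Integrable fun t => C * (2 ^ (k - 1) * (‖t‖ ^ 0 * ‖κ t‖ + ‖t‖ ^ k * ‖κ t‖)) :=
    (((κ.integrable_pow_mul volume 0).add (κ.integrable_pow_mul volume k)).const_mul _).const_mul _
  have hC0 : 0 ≤ C := by simpa using (norm_nonneg _).trans (hC 0)
  refine hdom.mono' (κ.continuous.smul hG).aestronglyMeasurable (.of_forall fun t => ?_)
  calc ‖κ t • G t‖ ≤ ‖κ t‖ * (C * (2 ^ (k - 1) * (1 ^ k + ‖t‖ ^ k))) := by
        rw [norm_smul]
        gcongr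
        exact (hC t).trans (by gcongr; exact add_pow_le zero_le_one (norm_nonneg t) k)
    _ = _ := by rw [one_pow]; ring

lemma integrable_smul_weightedIteratedFDeriv (k J : ℕ) (κ h : 𝓢(V, ℂ)) :
    Integrable fun t => κ t • weightedIteratedFDeriv k J (compSubConstCLM ℂ t h) := by
  obtain ⟨C, -, hC⟩ := seminorm_compSubConstCLM_le h k J
  exact integrable_smul_of_polynomial_growth κ
    ((weightedIteratedFDeriv k J).continuous.comp (continuous_compSubConstCLM h))
    fun t => (norm_weightedIteratedFDeriv k J _).trans_le (hC t)

lemma weightedIteratedFDeriv_schwartzConv (k J : ℕ) (κ h : 𝓢(V, ℂ)) :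
    weightedIteratedFDeriv k J (schwartzConv κ h)
      = ∫ t, κ t • weightedIteratedFDeriv k J (compSubConstCLM ℂ t h) := by
  refine BoundedContinuousFunction.ext fun x => ContinuousMultilinearMap.ext fun m => ?_
  have heval (t : V) :
      BoundedForms.evalCLM x m (κ t • weightedIteratedFDeriv k J (compSubConstCLM ℂ t h))
        = ‖x‖ ^ k • (κ t * (∂^{m} h) (x - t)) := by
    change κ t • ‖x‖ ^ k • iteratedFDeriv ℝ J (compSubConstCLM ℂ t h) x m = _
    rw [iteratedFDeriv_compSubConstCLM, ← iteratedLineDerivOp_eq_iteratedFDeriv, smul_comm,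
      smul_eq_mul]
  change _ = BoundedForms.evalCLM x m _
  rw [← ContinuousLinearMap.integral_comp_comm _ (integrable_smul_weightedIteratedFDeriv k J κ h)]
  simp_rw [heval]
  rw [integral_smul, ← schwartzConv_apply, ← iteratedLineDeriv_schwartzConv,
    iteratedLineDerivOp_eq_iteratedFDeriv]
  rfl

/- The functional `f` is bounded by finitely many Schwartz seminorms, so by Hahn–Banach it factors
through a Banach space, where it can be moved inside the Bochner integral. -/
theorem apply_schwartzConv (f : 𝓢(V, ℂ) →L[ℂ] ℂ) (κ h : 𝓢(V, ℂ)) :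
    f (schwartzConv κ h) = ∫ t, κ t * f (compSubConstCLM ℂ t h) := by
  obtain ⟨s, C, -, hC⟩ := Seminorm.bound_of_continuous (schwartz_withSeminorms ℂ V ℂ)
    ((normSeminorm ℂ ℂ).comp f.toLinearMap) (continuous_norm.comp f.continuous)
  let A : 𝓢(V, ℂ) →L[ℂ] ((i : s) → BoundedForms V i.1.2) :=
    ContinuousLinearMap.pi fun i : s => weightedIteratedFDeriv i.1.1 i.1.2
  have hA (φ : 𝓢(V, ℂ)) : ‖f φ‖ ≤ C * ‖A φ‖ := by
    refine (hC φ).trans (mul_le_mul_of_nonneg_left ?_ C.2)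
    exact Seminorm.finset_sup_apply_le (norm_nonneg _) fun i hi =>
      (norm_weightedIteratedFDeriv i.1 i.2 φ).symm.trans_le (norm_le_pi_norm (A φ) ⟨i, hi⟩)
  obtain ⟨F, hF⟩ := exists_clm_comp_eq_of_norm_le f.toLinearMap A.toLinearMap C hA
  have hintegrable (i : s) : Integrable fun t => (κ t • A (compSubConstCLM ℂ t h)) i :=
    integrable_smul_weightedIteratedFDeriv i.1.1 i.1.2 κ h
  have hAconv : A (schwartzConv κ h) = ∫ t, κ t • A (compSubConstCLM ℂ t h) := by
    funext i
    rw [eval_integral hintegrable i]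
    exact weightedIteratedFDeriv_schwartzConv i.1.1 i.1.2 κ h
  calc f (schwartzConv κ h) = F (A (schwartzConv κ h)) := (hF _).symm
    _ = ∫ t, F (κ t • A (compSubConstCLM ℂ t h)) := by
      rw [hAconv, ← F.integral_comp_comm (.of_eval hintegrable)]
    _ = ∫ t, κ t * f (compSubConstCLM ℂ t h) := by
      simp_rw [map_smul, smul_eq_mul]
      exact integral_congr_ae (.of_forall fun t => congrArg (κ t * ·) (hF _))

end Convolution

section DistribConv

open SchwartzMap

variable {V : Type*} [NormedAddCommGroup V]

section

variable [NormedSpace ℝ V]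

/-- The map `φ ↦ φ (y - ·)` on Schwartz functions. -/
def reflectTranslate (y : V) : 𝓢(V, ℂ) →L[ℂ] 𝓢(V, ℂ) :=
  (compSubConstCLM ℂ y).comp (compCLMOfContinuousLinearEquiv ℂ (ContinuousLinearEquiv.neg ℝ))

lemma reflectTranslate_apply (y : V) (φ : 𝓢(V, ℂ)) (x : V) :
    reflectTranslate y φ x = φ (y - x) :=
  congrArg φ (neg_sub x y)

lemma reflectTranslate_compSubConstCLM (y t : V) (φ : 𝓢(V, ℂ)) :
    reflectTranslate y (compSubConstCLM ℂ t φ) = reflectTranslate (y - t) φ := by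
  ext x
  rw [reflectTranslate_apply, reflectTranslate_apply, compSubConstCLM_apply, sub_right_comm]

/-- The convolution `f * φ` of a tempered distribution and a Schwartz function, as a function. -/
def distribConv (f : 𝓢(V, ℂ) →L[ℂ] ℂ) (φ : 𝓢(V, ℂ)) (y : V) : ℂ :=
  f (reflectTranslate y φ)

lemma continuous_distribConv (f : 𝓢(V, ℂ) →L[ℂ] ℂ) (φ : 𝓢(V, ℂ)) :
    Continuous (distribConv f φ) :=
  f.continuous.comp (continuous_compSubConstCLM _)

end

lemma enorm_distribConv_schwartzConv_le [InnerProductSpace ℝ V] [FiniteDimensional ℝ V]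
    [MeasurableSpace V] [BorelSpace V] (f : 𝓢(V, ℂ) →L[ℂ] ℂ) (κ h : 𝓢(V, ℂ)) (y : V) :
    ‖distribConv f (schwartzConv κ h) y‖ₑ ≤ ∫⁻ z, ‖κ (y - z)‖ₑ * ‖distribConv f h z‖ₑ := by
  have hexchange := apply_schwartzConv (f.comp (reflectTranslate y)) κ h
  simp only [ContinuousLinearMap.comp_apply, reflectTranslate_compSubConstCLM] at hexchange
  calc ‖distribConv f (schwartzConv κ h) y‖ₑ
      ≤ ∫⁻ t, ‖κ t * distribConv f h (y - t)‖ₑ := by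
        rw [distribConv, hexchange]
        exact enorm_integral_le_lintegral_enorm _
    _ = ∫⁻ z, ‖κ (y - z)‖ₑ * ‖distribConv f h z‖ₑ := by
        rw [← lintegral_sub_left_eq_self _ y]
        simp_rw [enorm_mul, sub_sub_cancel]

end DistribConv

section Multipliers

open SchwartzMap

variable {V : Type*} [NormedAddCommGroup V] [NormedSpace ℝ V] {u : V → ℂ}

/-- The class `C_b^∞` of smooth functions all of whose derivatives are bounded. -/
structure IsSmoothBounded (u : V → ℂ) : Prop where
  contDiff : ContDiff ℝ (⊤ : ℕ∞) u
  bounded : ∀ J : ℕ, ∃ C, ∀ x, ‖iteratedFDeriv ℝ J u x‖ ≤ C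

namespace IsSmoothBounded

lemma of_schwartz (φ : 𝓢(V, ℂ)) : IsSmoothBounded φ where
  contDiff := φ.smooth ⊤
  bounded J := ⟨_, fun x => by simpa using SchwartzMap.le_seminorm ℝ 0 J φ x⟩

lemma one_sub (hu : IsSmoothBounded u) : IsSmoothBounded fun x => 1 - u x where
  contDiff := contDiff_const.sub hu.contDiff
  bounded J := by
    obtain ⟨C, hC⟩ := hu.bounded J
    refine ⟨1 + C, fun x => ?_⟩
    have hsub : iteratedFDeriv ℝ J (fun x => 1 - u x) x
        = iteratedFDeriv ℝ J (fun _ => (1 : ℂ)) x - iteratedFDeriv ℝ J u x :=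
      iteratedFDeriv_sub_apply contDiffAt_const (hu.contDiff.of_le (mod_cast le_top)).contDiffAt
    have hone : ‖iteratedFDeriv ℝ J (fun _ : V => (1 : ℂ)) x‖ ≤ 1 := by
      rcases eq_or_ne J 0 with rfl | hJ
      · simp
      · simp [iteratedFDeriv_const_of_ne hJ]
    exact hsub ▸ (norm_sub_le _ _).trans (add_le_add hone (hC x))

lemma norm_iteratedFDeriv_comp_le (hu : IsSmoothBounded u) {T : V →L[ℝ] V} (hT : ‖T‖ ≤ 1) (J : ℕ)
    (x : V) : ‖iteratedFDeriv ℝ J (u ∘ T) x‖ ≤ ‖iteratedFDeriv ℝ J u (T x)‖ := by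
  rw [T.iteratedFDeriv_comp_right hu.contDiff x (mod_cast le_top)]
  refine (ContinuousMultilinearMap.norm_compContinuousLinearMap_le _ _).trans ?_
  exact mul_le_of_le_one_right (norm_nonneg _)
    (Finset.prod_le_one (fun _ _ => norm_nonneg _) fun _ _ => hT)

lemma hasTemperateGrowth_comp (hu : IsSmoothBounded u) {T : V →L[ℝ] V} (hT : ‖T‖ ≤ 1) :
    (u ∘ T).HasTemperateGrowth := by
  refine ⟨hu.contDiff.comp T.contDiff, fun J => ?_⟩
  obtain ⟨C, hC⟩ := hu.bounded J
  exact ⟨0, C, fun x => by simpa using (hu.norm_iteratedFDeriv_comp_le hT J x).trans (hC _)⟩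

lemma norm_iteratedFDeriv_comp_mul_le (hu : IsSmoothBounded u) {δ : ℝ} (hδ : 0 < δ)
    (hu0 : ∀ x, ‖x‖ < δ → u x = 0) {D : ℕ → ℝ} (hD : ∀ J x, ‖iteratedFDeriv ℝ J u x‖ ≤ D J)
    {T : V →L[ℝ] V} (hT : ‖T‖ ≤ 1) (g : 𝓢(V, ℂ)) (J L : ℕ) (x : V) :
    ‖iteratedFDeriv ℝ J (fun y => (u ∘ T) y * g y) x‖ ≤ (‖T‖ * ‖x‖ / δ) ^ L *
      ∑ i ∈ Finset.range (J + 1), J.choose i * D i * ‖iteratedFDeriv ℝ (J - i) g x‖ := by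
  have hD0 (i : ℕ) : 0 ≤ D i := (norm_nonneg _).trans (hD i 0)
  have hsum : 0 ≤ ∑ i ∈ Finset.range (J + 1), J.choose i * D i * ‖iteratedFDeriv ℝ (J - i) g x‖ :=
    Finset.sum_nonneg fun i _ => mul_nonneg (mul_nonneg (by positivity) (hD0 i)) (norm_nonneg _)
  rcases lt_or_ge ‖T x‖ δ with hx | hx
  · have hzero : (fun y => (u ∘ T) y * g y) =ᶠ[nhds x] fun _ => 0 := by
      filter_upwards [(T.continuous.norm.tendsto x).eventually_lt_const hx] with y hy
      rw [Function.comp_apply, hu0 _ hy, zero_mul]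
    rw [(hzero.iteratedFDeriv ℝ J).eq_of_nhds, iteratedFDeriv_fun_zero, Pi.zero_apply, norm_zero]
    positivity
  · refine le_trans ?_ (le_mul_of_one_le_left hsum (one_le_pow₀ ?_))
    · refine (norm_iteratedFDeriv_mul_le (hu.contDiff.comp T.contDiff) (g.smooth ⊤) x
        (mod_cast le_top)).trans ?_
      gcongr with i
      exact (hu.norm_iteratedFDeriv_comp_le hT i x).trans (hD i _)
    · exact (one_le_div₀ hδ).2 (hx.trans (T.le_opNorm x))

lemma exists_schwartzSeminorm_smulLeftCLM_comp_le (hu : IsSmoothBounded u) {δ : ℝ} (hδ : 0 < δ)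
    (hu0 : ∀ x, ‖x‖ < δ → u x = 0) (g : 𝓢(V, ℂ)) (k J L : ℕ) :
    ∃ C, 0 ≤ C ∧ ∀ T : V →L[ℝ] V, ‖T‖ ≤ 1 →
      SchwartzMap.seminorm ℂ k J (smulLeftCLM ℂ (u ∘ T) g) ≤ C * ‖T‖ ^ L := by
  choose D hD using hu.bounded
  have hD0 (i : ℕ) : 0 ≤ D i := (norm_nonneg _).trans (hD i 0)
  have hC0 : 0 ≤ (1 / δ) ^ L * ∑ i ∈ Finset.range (J + 1),
      J.choose i * D i * SchwartzMap.seminorm ℂ (k + L) (J - i) g :=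
    mul_nonneg (by positivity) (Finset.sum_nonneg fun i _ =>
      mul_nonneg (mul_nonneg (by positivity) (hD0 i)) (apply_nonneg _ _))
  refine ⟨_, hC0, fun T hT =>
    SchwartzMap.seminorm_le_bound ℂ k J _ (mul_nonneg hC0 (by positivity)) fun x => ?_⟩
  have hcoe : ⇑(smulLeftCLM ℂ (u ∘ T) g) = fun y => (u ∘ T) y * g y :=
    funext fun y => smulLeftCLM_apply_apply (hu.hasTemperateGrowth_comp hT) g y
  rw [hcoe]
  calc ‖x‖ ^ k * ‖iteratedFDeriv ℝ J (fun y => (u ∘ T) y * g y) x‖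
      ≤ ‖x‖ ^ k * ((‖T‖ * ‖x‖ / δ) ^ L * ∑ i ∈ Finset.range (J + 1),
          J.choose i * D i * ‖iteratedFDeriv ℝ (J - i) g x‖) := by
        gcongr
        exact hu.norm_iteratedFDeriv_comp_mul_le hδ hu0 hD hT g J L x
    _ = (1 / δ) ^ L * (∑ i ∈ Finset.range (J + 1),
          J.choose i * D i * (‖x‖ ^ (k + L) * ‖iteratedFDeriv ℝ (J - i) g x‖)) * ‖T‖ ^ L := by
        simp_rw [Finset.mul_sum, Finset.sum_mul]
        refine Finset.sum_congr rfl fun i _ => ?_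
        rw [pow_add]
        ring
    _ ≤ _ := by
        gcongr with i
        · exact mul_nonneg (by positivity) (hD0 i)
        · exact SchwartzMap.le_seminorm ℂ (k + L) (J - i) g x

/- Where `u ∘ T` does not vanish, `‖x‖ ≥ δ / ‖T‖`, so the decay of `g` supplies powers of `‖T‖`. -/
theorem exists_seminorm_smulLeftCLM_comp_le (hu : IsSmoothBounded u) {δ : ℝ} (hδ : 0 < δ)
    (hu0 : ∀ x, ‖x‖ < δ → u x = 0) (g : 𝓢(V, ℂ)) {p : Seminorm ℂ 𝓢(V, ℂ)} (hp : Continuous p)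
    (L : ℕ) :
    ∃ C, 0 ≤ C ∧ ∀ T : V →L[ℝ] V, ‖T‖ ≤ 1 → p (smulLeftCLM ℂ (u ∘ T) g) ≤ C * ‖T‖ ^ L := by
  obtain ⟨s, C, -, hC⟩ := Seminorm.bound_of_continuous (schwartz_withSeminorms ℂ V ℂ) p hp
  choose D hD0 hD using fun i : ℕ × ℕ =>
    hu.exists_schwartzSeminorm_smulLeftCLM_comp_le hδ hu0 g i.1 i.2 L
  have hD0s : 0 ≤ ∑ i ∈ s, D i := Finset.sum_nonneg fun i _ => hD0 i
  refine ⟨C * ∑ i ∈ s, D i, by positivity, fun T hT => (hC _).trans ?_⟩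
  rw [mul_assoc]
  refine mul_le_mul_of_nonneg_left ?_ C.2
  refine Seminorm.finset_sup_apply_le (by positivity) fun i hi => (hD i T hT).trans ?_
  gcongr
  exact Finset.single_le_sum (fun i _ => hD0 i) hi

end IsSmoothBounded

end Multipliers

lemma norm_le_one_of_le_half_pow {E : Type*} [SeminormedAddGroup E] {u : ℕ → E}
    (hu : ∀ m, ‖u m‖ ≤ (1 / 2) ^ m) (m : ℕ) : ‖u m‖ ≤ 1 :=
  (hu m).trans (pow_le_one₀ (by norm_num) (by norm_num))

section Calderon

open SchwartzMap
open scoped FourierTransform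

variable {V : Type*} [NormedAddCommGroup V] [InnerProductSpace ℝ V] [FiniteDimensional ℝ V]
  [MeasurableSpace V] [BorelSpace V]

/-- The kernels `κ_m` of the Calderón decomposition `g = ∑ κ_m * G_m`: the first one is `𝓕⁻ Φ`, the
later ones are `𝓕⁻ ((Λ ∘ T_m) 𝓕 g)`. -/
def calderonKernel (T : ℕ → V →L[ℝ] V) (Φ Λ g : 𝓢(V, ℂ)) : ℕ → 𝓢(V, ℂ)
  | 0 => 𝓕⁻ Φ
  | m + 1 => 𝓕⁻ (smulLeftCLM ℂ (Λ ∘ T (m + 1)) (𝓕 g))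

/-- The part `𝓕⁻ ((1 - Φ ∘ T) 𝓕 g)` of `g` left over by a partial Calderón decomposition. -/
def calderonRemainder (T : V →L[ℝ] V) (Φ g : 𝓢(V, ℂ)) : 𝓢(V, ℂ) :=
  𝓕⁻ (smulLeftCLM ℂ ((fun x => 1 - Φ x) ∘ T) (𝓕 g))

variable {T : ℕ → V →L[ℝ] V} {Φ Λ : 𝓢(V, ℂ)} {δ : ℝ}

theorem eq_sum_schwartzConv_calderonKernel_add (hT0 : T 0 = .id ℝ V)
    (hT : ∀ m, ‖T m‖ ≤ (1 / 2) ^ m) (G : ℕ → 𝓢(V, ℂ))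
    (hG : ∀ m x, Λ (T (m + 1) x) * 𝓕 (G (m + 1)) x = Φ (T (m + 1) x) - Φ (T m x)) (K : ℕ) :
    G 0 = (∑ m ∈ Finset.range (K + 1), schwartzConv (calderonKernel T Φ Λ (G 0) m) (G m))
      + calderonRemainder (T K) Φ (G 0) := by
  have hrem (x : V) :
      𝓕 (calderonRemainder (T K) Φ (G 0)) x = (1 - Φ (T K x)) * 𝓕 (G 0) x := by
    rw [calderonRemainder, FourierTransform.fourier_fourierInv_eq]
    exact smulLeftCLM_apply_apply ((IsSmoothBounded.of_schwartz Φ).one_sub.hasTemperateGrowth_comp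
      (norm_le_one_of_le_half_pow hT K)) _ x
  have hker (m : ℕ) (x : V) :
      𝓕 (calderonKernel T Φ Λ (G 0) (m + 1)) x = Λ (T (m + 1) x) * 𝓕 (G 0) x := by
    rw [calderonKernel, FourierTransform.fourier_fourierInv_eq]
    exact smulLeftCLM_apply_apply ((IsSmoothBounded.of_schwartz Λ).hasTemperateGrowth_comp
      (norm_le_one_of_le_half_pow hT (m + 1))) _ x
  have htelescope (x : V) :
      ∑ m ∈ Finset.range (K + 1), 𝓕 (calderonKernel T Φ Λ (G 0) m) x * 𝓕 (G m) x
        = Φ (T K x) * 𝓕 (G 0) x := by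
    clear hrem
    induction K with
    | zero => simp [calderonKernel, FourierTransform.fourier_fourierInv_eq, hT0]
    | succ K ih => rw [Finset.sum_range_succ, ih, hker, mul_right_comm, hG]; ring
  refine (FourierTransform.fourierCLE ℂ 𝓢(V, ℂ)).injective ?_
  ext x
  simp only [map_add, map_sum, FourierTransform.fourierCLE_apply, add_apply, sum_apply,
    fourier_schwartzConv, htelescope, hrem]
  ring

lemma exists_one_add_norm_pow_mul_calderonKernel_le (hT : ∀ m, ‖T m‖ ≤ (1 / 2) ^ m) (hδ : 0 < δ)
    (hΛ : ∀ x, ‖x‖ < δ → Λ x = 0) (g : 𝓢(V, ℂ)) (L M : ℕ) :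
    ∃ C, 0 ≤ C ∧ ∀ m x,
      (1 + ‖x‖) ^ M * ‖calderonKernel T Φ Λ g m x‖ ≤ C * ((1 / 2) ^ m) ^ L := by
  obtain ⟨C₀, hC₀, hΦ⟩ := exists_one_add_norm_pow_mul_iteratedFDeriv_le (𝓕⁻ Φ) M 0
  let p : Seminorm ℂ 𝓢(V, ℂ) :=
    (Finset.Iic (M, 0)).sup (schwartzSeminormFamily ℂ V ℂ)
  have hp : Continuous p :=
    Seminorm.continuous_finsetSup fun m _ => (schwartz_withSeminorms ℂ V ℂ).continuous_seminorm m
  have hpF : Continuous (p.comp (FourierTransform.fourierCLE ℂ 𝓢(V, ℂ)).symm.toLinearMap) :=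
    hp.comp (FourierTransform.fourierCLE ℂ 𝓢(V, ℂ)).symm.continuous
  obtain ⟨C₁, hC₁, hdecay⟩ :=
    (IsSmoothBounded.of_schwartz Λ).exists_seminorm_smulLeftCLM_comp_le hδ hΛ (𝓕 g) hpF L
  refine ⟨C₀ + 2 ^ M * C₁, by positivity, fun m x => ?_⟩
  cases m with
  | zero =>
    have hx := hΦ x
    rw [norm_iteratedFDeriv_zero] at hx
    simpa [calderonKernel] using hx.trans (le_add_of_nonneg_right (by positivity))
  | succ m =>
    have hx := one_add_le_sup_seminorm_apply (𝕜 := ℂ) (m := (M, 0)) le_rfl le_rfl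
      (calderonKernel T Φ Λ g (m + 1)) x
    rw [norm_iteratedFDeriv_zero] at hx
    have hTm := norm_le_one_of_le_half_pow hT (m + 1)
    calc (1 + ‖x‖) ^ M * ‖calderonKernel T Φ Λ g (m + 1) x‖
        ≤ 2 ^ M * (C₁ * ‖T (m + 1)‖ ^ L) := hx.trans (by gcongr; exact hdecay _ hTm)
      _ ≤ 2 ^ M * (C₁ * ((1 / 2) ^ (m + 1)) ^ L) := by gcongr; exact hT _
      _ ≤ _ := by rw [add_mul, mul_assoc]; exact le_add_of_nonneg_left (by positivity)

lemma tendsto_apply_calderonRemainder (hT : ∀ m, ‖T m‖ ≤ (1 / 2) ^ m) (hδ : 0 < δ)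
    (hΦ : ∀ x, ‖x‖ < δ → Φ x = 1) (f : 𝓢(V, ℂ) →L[ℂ] ℂ) (g : 𝓢(V, ℂ)) :
    Filter.Tendsto (fun m => f (calderonRemainder (T m) Φ g)) Filter.atTop (nhds 0) := by
  let A : 𝓢(V, ℂ) →L[ℂ] ℂ :=
    f.comp (FourierTransform.fourierCLE ℂ 𝓢(V, ℂ)).symm.toContinuousLinearMap
  obtain ⟨C, -, hC⟩ :=
    (IsSmoothBounded.of_schwartz Φ).one_sub.exists_seminorm_smulLeftCLM_comp_le hδ
      (fun x hx => by rw [hΦ x hx, sub_self]) (𝓕 g)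
      (p := (normSeminorm ℂ ℂ).comp A.toLinearMap) (continuous_norm.comp A.continuous) 1
  have hT0 : Filter.Tendsto (fun m => ‖T m‖) Filter.atTop (nhds 0) :=
    squeeze_zero (fun _ => norm_nonneg _) hT
      (tendsto_pow_atTop_nhds_zero_of_lt_one (by norm_num) (by norm_num))
  refine squeeze_zero_norm (fun m => ?_) (by simpa using hT0.const_mul C)
  exact (pow_one ‖T m‖) ▸ hC (T m) (norm_le_one_of_le_half_pow hT m)

lemma enorm_le_ofReal_mul_ofReal_inv_one_add_pow {t C : ℝ} {M : ℕ} {c : ℂ} (ht : 0 ≤ t)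
    (h : (1 + t) ^ M * ‖c‖ ≤ C) :
    ‖c‖ₑ ≤ ENNReal.ofReal C * ENNReal.ofReal (((1 + t) ^ M)⁻¹) := by
  have hpos : 0 < (1 + t) ^ M := by positivity
  rw [← ENNReal.ofReal_mul (le_trans (by positivity) h), ← ofReal_norm]
  exact ENNReal.ofReal_le_ofReal ((le_mul_inv_iff₀' hpos).2 h)

theorem exists_enorm_distribConv_le_tsum (hT0 : T 0 = .id ℝ V) (hT : ∀ m, ‖T m‖ ≤ (1 / 2) ^ m)
    (hδ : 0 < δ) (hΦ : ∀ x, ‖x‖ < δ → Φ x = 1) (hΛ : ∀ x, ‖x‖ < δ → Λ x = 0) (G : ℕ → 𝓢(V, ℂ))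
    (hG : ∀ m x, Λ (T (m + 1) x) * 𝓕 (G (m + 1)) x = Φ (T (m + 1) x) - Φ (T m x)) (L M : ℕ) :
    ∃ C : ℝ, 0 ≤ C ∧ ∀ (f : 𝓢(V, ℂ) →L[ℂ] ℂ) (y : V), ‖distribConv f (G 0) y‖ₑ ≤
      ENNReal.ofReal C * ∑' m : ℕ, ENNReal.ofReal (((1 / 2) ^ m) ^ L) *
        ∫⁻ z, ‖distribConv f (G m) z‖ₑ * ENNReal.ofReal (((1 + ‖y - z‖) ^ M)⁻¹) := by
  obtain ⟨C, hC0, hC⟩ := exists_one_add_norm_pow_mul_calderonKernel_le (Φ := Φ) hT hδ hΛ (G 0) L M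
  refine ⟨C, hC0, fun f y => ?_⟩
  have hterm (m : ℕ) :
      ‖distribConv f (schwartzConv (calderonKernel T Φ Λ (G 0) m) (G m)) y‖ₑ ≤
        ENNReal.ofReal C * (ENNReal.ofReal (((1 / 2) ^ m) ^ L) *
          ∫⁻ z, ‖distribConv f (G m) z‖ₑ * ENNReal.ofReal (((1 + ‖y - z‖) ^ M)⁻¹)) := by
    rw [← mul_assoc, ← ENNReal.ofReal_mul hC0, ← lintegral_const_mul' _ _ ENNReal.ofReal_ne_top]
    refine (enorm_distribConv_schwartzConv_le f _ _ y).trans (lintegral_mono fun z => ?_)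
    dsimp only
    rw [mul_left_comm, mul_comm ‖_‖ₑ]
    gcongr
    exact enorm_le_ofReal_mul_ofReal_inv_one_add_pow (norm_nonneg _) (hC m (y - z))
  have hpartial (K : ℕ) : ‖distribConv f (G 0) y‖ₑ ≤
      ENNReal.ofReal C * (∑' m : ℕ, ENNReal.ofReal (((1 / 2) ^ m) ^ L) *
        ∫⁻ z, ‖distribConv f (G m) z‖ₑ * ENNReal.ofReal (((1 + ‖y - z‖) ^ M)⁻¹)) +
      ‖f.comp (reflectTranslate y) (calderonRemainder (T K) Φ (G 0))‖ₑ := by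
    conv_lhs => rw [eq_sum_schwartzConv_calderonKernel_add hT0 hT G hG K]
    rw [distribConv, map_add, map_add, map_sum, map_sum, ← ENNReal.tsum_mul_left]
    refine (enorm_add_le _ _).trans (add_le_add ((enorm_sum_le _ _).trans ?_) le_rfl)
    exact (Finset.sum_le_sum fun m _ => hterm m).trans (ENNReal.sum_le_tsum _)
  have hrem := (tendsto_apply_calderonRemainder hT hδ hΦ (f.comp (reflectTranslate y)) (G 0)).enorm
  rw [enorm_zero] at hrem
  exact ge_of_tendsto' (by simpa using hrem.const_add _) hpartial

end Calderon

section SmoothDivision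

open SchwartzMap

variable {V : Type*} [NormedAddCommGroup V] [NormedSpace ℝ V]

lemma contDiff_div_of_ne_zero_on_tsupport {θ g : V → ℂ} (hθ : ContDiff ℝ (⊤ : ℕ∞) θ)
    (hg : ContDiff ℝ (⊤ : ℕ∞) g) (hne : ∀ x ∈ tsupport θ, g x ≠ 0) :
    ContDiff ℝ (⊤ : ℕ∞) fun x => θ x / g x := by
  refine contDiff_iff_contDiffAt.2 fun x => ?_
  by_cases hx : x ∈ tsupport θ
  · simp only [div_eq_mul_inv]
    exact hθ.contDiffAt.mul (hg.contDiffAt.inv (hne x hx))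
  · refine (contDiffAt_const (c := (0 : ℂ))).congr_of_eventuallyEq ?_
    filter_upwards [notMem_tsupport_iff_eventuallyEq.1 hx] with y hy
    simp [hy]

lemma exists_schwartz_mul_eq {θ : V → ℂ} (hθ : ContDiff ℝ (⊤ : ℕ∞) θ)
    (hc : HasCompactSupport θ) (g : 𝓢(V, ℂ)) (hne : ∀ x ∈ tsupport θ, g x ≠ 0) :
    ∃ Λ : 𝓢(V, ℂ), (∀ x, θ x = 0 → Λ x = 0) ∧ ∀ x, Λ x * g x = θ x := by
  have hsupp : HasCompactSupport fun x => θ x / g x := by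
    simp only [div_eq_mul_inv]
    exact hc.mul_right
  refine ⟨hsupp.toSchwartzMap (contDiff_div_of_ne_zero_on_tsupport hθ (g.smooth _) hne),
    fun x hx => by simp [hx], fun x => ?_⟩
  by_cases hx : x ∈ tsupport θ
  · exact div_mul_cancel₀ _ (hne x hx)
  · simp [image_eq_zero_of_notMem_tsupport hx]

end SmoothDivision

section AnisotropicDilation

variable {n : ℕ}

/-- The dilation `x ↦ 2^{ta} x = (2^{t a₁} x₁, …, 2^{t aₙ} xₙ)` of Euclidean space. -/
def anisoDilation (a : Fin n → ℝ) (t : ℝ) :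
    EuclideanSpace ℝ (Fin n) ≃L[ℝ] EuclideanSpace ℝ (Fin n) :=
  LinearEquiv.toContinuousLinearEquiv
    { toFun x := WithLp.toLp 2 fun i => (2 : ℝ) ^ (t * a i) * x i
      invFun x := WithLp.toLp 2 fun i => (2 : ℝ) ^ (-t * a i) * x i
      map_add' x y := by ext i; simp [mul_add]
      map_smul' c x := by ext i; simp [mul_left_comm]
      left_inv x := by ext i; simp [← mul_assoc, ← Real.rpow_add two_pos]
      right_inv x := by ext i; simp [← mul_assoc, ← Real.rpow_add two_pos] }

variable (a : Fin n → ℝ)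

lemma anisoDilation_apply (t : ℝ) (x : EuclideanSpace ℝ (Fin n)) (i : Fin n) :
    anisoDilation a t x i = (2 : ℝ) ^ (t * a i) * x i := rfl

lemma anisoDilation_anisoDilation (s t : ℝ) (x : EuclideanSpace ℝ (Fin n)) :
    anisoDilation a s (anisoDilation a t x) = anisoDilation a (s + t) x := by
  ext i
  simp only [anisoDilation_apply]
  rw [← mul_assoc, ← Real.rpow_add two_pos, add_mul]

lemma anisoDilation_zero (x : EuclideanSpace ℝ (Fin n)) : anisoDilation a 0 x = x := by
  ext i
  simp [anisoDilation_apply]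

lemma norm_anisoDilation_le_of_rpow_le {t c : ℝ} (hc : 0 ≤ c)
    (h : ∀ i, (2 : ℝ) ^ (t * a i) ≤ c) (x : EuclideanSpace ℝ (Fin n)) :
    ‖anisoDilation a t x‖ ≤ c * ‖x‖ := by
  rw [← Real.norm_of_nonneg hc, ← norm_smul, EuclideanSpace.norm_eq, EuclideanSpace.norm_eq]
  refine Real.sqrt_le_sqrt (Finset.sum_le_sum fun i _ => ?_)
  rw [anisoDilation_apply, PiLp.smul_apply, smul_eq_mul, norm_mul, norm_mul,
    Real.norm_of_nonneg hc, Real.norm_of_nonneg (by positivity : (0 : ℝ) ≤ 2 ^ (t * a i))]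
  gcongr
  exact h i

variable {a}

lemma norm_anisoDilation_neg_le (ha : ∀ i, 1 ≤ a i) (m : ℕ) :
    ‖(anisoDilation a (-m) : EuclideanSpace ℝ (Fin n) →L[ℝ] EuclideanSpace ℝ (Fin n))‖
      ≤ (1 / 2) ^ m := by
  refine ContinuousLinearMap.opNorm_le_bound _ (by positivity)
    (norm_anisoDilation_le_of_rpow_le a (by positivity) fun i => ?_)
  rw [one_div, inv_pow, ← Real.rpow_natCast, ← Real.rpow_neg two_pos.le]
  exact Real.rpow_le_rpow_of_exponent_le one_le_two
    (by nlinarith [ha i, (Nat.cast_nonneg m : (0 : ℝ) ≤ m)])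

end AnisotropicDilation

section AnisotropicCutoff

variable {n : ℕ} {a : Fin n → ℝ}

/-- The form `∑ᵢ (2π ξᵢ)² / s^{2aᵢ}`, which equals `1` exactly when `s = |2πξ|ₐ`. The factor `2π`
accounts for the normalisation of `𝓕` on Euclidean space in Mathlib. -/
def anisoForm (a : Fin n → ℝ) (s : ℝ) (ξ : EuclideanSpace ℝ (Fin n)) : ℝ :=
  ∑ i, (2 * Real.pi * ξ i) ^ 2 / s ^ (2 * a i)

lemma anisoForm_zero (s : ℝ) : anisoForm a s 0 = 0 := by simp [anisoForm]

lemma contDiff_anisoForm (a : Fin n → ℝ) (s : ℝ) : ContDiff ℝ (⊤ : ℕ∞) (anisoForm a s) := by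
  unfold anisoForm
  fun_prop

lemma anisoForm_nonneg {s : ℝ} (hs : 0 < s) (ξ : EuclideanSpace ℝ (Fin n)) :
    0 ≤ anisoForm a s ξ :=
  Finset.sum_nonneg fun _ _ => by positivity

lemma anisoForm_le_mul (ha : ∀ i, 1 ≤ a i) {t s : ℝ} (ht : 0 < t) (hts : t ≤ s)
    (ξ : EuclideanSpace ℝ (Fin n)) : anisoForm a s ξ ≤ (t / s) ^ 2 * anisoForm a t ξ := by
  have hs : 0 < s := ht.trans_le hts
  rw [anisoForm, anisoForm, Finset.mul_sum]
  refine Finset.sum_le_sum fun i _ => ?_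
  have hpow : (t / s) ^ (2 * a i) ≤ (t / s) ^ 2 := by
    rw [← Real.rpow_natCast (t / s) 2]
    refine Real.rpow_le_rpow_of_exponent_ge (by positivity) ((div_le_one hs).2 hts) ?_
    push_cast
    linarith [ha i]
  rw [Real.div_rpow ht.le hs.le] at hpow
  calc (2 * Real.pi * ξ i) ^ 2 / s ^ (2 * a i)
      = t ^ (2 * a i) / s ^ (2 * a i) * ((2 * Real.pi * ξ i) ^ 2 / t ^ (2 * a i)) := by field_simp
    _ ≤ (t / s) ^ 2 * ((2 * Real.pi * ξ i) ^ 2 / t ^ (2 * a i)) := by gcongr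

lemma anisoForm_le_anisoForm (ha : ∀ i, 1 ≤ a i) {t s : ℝ} (ht : 0 < t) (hts : t ≤ s)
    (ξ : EuclideanSpace ℝ (Fin n)) : anisoForm a s ξ ≤ anisoForm a t ξ :=
  (anisoForm_le_mul ha ht hts ξ).trans <| mul_le_of_le_one_left (anisoForm_nonneg ht ξ) <|
    pow_le_one₀ (div_nonneg ht.le (ht.trans_le hts).le) ((div_le_one (ht.trans_le hts)).2 hts)

lemma anisoForm_anisoDilation_one {s : ℝ} (hs : 0 < s) (ξ : EuclideanSpace ℝ (Fin n)) :
    anisoForm a s (anisoDilation a 1 ξ) = anisoForm a (s / 2) ξ := by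
  refine Finset.sum_congr rfl fun i _ => ?_
  have hsq : ((2 : ℝ) ^ (1 * a i)) ^ 2 = 2 ^ (2 * a i) := by
    rw [one_mul, mul_comm, Real.rpow_mul two_pos.le, Real.rpow_two]
  rw [anisoDilation_apply, mul_left_comm, mul_pow, hsq, Real.div_rpow hs.le two_pos.le,
    div_div_eq_mul_div, mul_comm]

lemma exists_norm_le_of_anisoForm_le_one {s : ℝ} (hs : 0 < s) :
    ∃ R : ℝ, ∀ ξ : EuclideanSpace ℝ (Fin n), anisoForm a s ξ ≤ 1 → ‖ξ‖ ≤ R := by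
  refine ⟨√(∑ i, s ^ (2 * a i)), fun ξ hξ => ?_⟩
  rw [EuclideanSpace.norm_eq]
  refine Real.sqrt_le_sqrt (Finset.sum_le_sum fun i _ => ?_)
  have hterm : (2 * Real.pi * ξ i) ^ 2 / s ^ (2 * a i) ≤ 1 :=
    (Finset.single_le_sum (f := fun i => (2 * Real.pi * ξ i) ^ 2 / s ^ (2 * a i))
      (fun _ _ => by positivity) (Finset.mem_univ i)).trans hξ
  rw [div_le_one (by positivity), mul_pow] at hterm
  have hpi : (1 : ℝ) ≤ (2 * Real.pi) ^ 2 := by nlinarith [Real.pi_gt_three]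
  rw [Real.norm_eq_abs, sq_abs]
  nlinarith [sq_nonneg (ξ i)]

lemma IsAnorm.mem_annulus (ha : ∀ i, 1 ≤ a i) {anorm : RV n → ℝ} (h : IsAnorm n a anorm)
    {ε : ℝ} (hε : 0 < ε) {ξ : EuclideanSpace ℝ (Fin n)} (hout : anisoForm a (3 / 2 * ε) ξ ≤ 1)
    (hin : 1 / 2 ≤ anisoForm a (3 / 2 * ε / 2) ξ) :
    ε / 2 < anorm (fun i => 2 * Real.pi * ξ i) ∧ anorm (fun i => 2 * Real.pi * ξ i) < 2 * ε := by
  have hne : (fun i => 2 * Real.pi * ξ i : RV n) ≠ 0 := by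
    intro h0
    have hform : anisoForm a (3 / 2 * ε / 2) ξ = 0 :=
      Finset.sum_eq_zero fun i _ => by rw [show 2 * Real.pi * ξ i = 0 from congrFun h0 i]; simp
    linarith
  obtain ⟨ht, hform : anisoForm a _ ξ = 1⟩ := h.2 _ hne
  set t := anorm fun i => 2 * Real.pi * ξ i
  constructor <;> by_contra! hc
  · have hle := anisoForm_le_mul ha ht (show t ≤ 3 / 2 * ε / 2 by linarith) ξ
    rw [hform, mul_one] at hle
    have hq : t / (3 / 2 * ε / 2) ≤ 2 / 3 := by rw [div_le_iff₀ (by positivity)]; linarith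
    nlinarith [show 0 ≤ t / (3 / 2 * ε / 2) by positivity]
  · have hle := anisoForm_le_mul ha (show 0 < 3 / 2 * ε by positivity)
      (show 3 / 2 * ε ≤ t by linarith) ξ
    rw [hform] at hle
    have hq : 3 / 2 * ε / t ≤ 3 / 4 := by rw [div_le_iff₀ ht]; linarith
    nlinarith [show 0 ≤ 3 / 2 * ε / t by positivity]

/-- A smooth cutoff on Euclidean space, equal to `1` where `anisoForm a s ≤ 1/2` and to `0` where
`anisoForm a s ≥ 1`. -/
def anisoCutoff (a : Fin n → ℝ) (s : ℝ) (ξ : EuclideanSpace ℝ (Fin n)) : ℂ :=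
  (Real.smoothTransition (2 - 2 * anisoForm a s ξ) : ℝ)

lemma contDiff_anisoCutoff (a : Fin n → ℝ) (s : ℝ) : ContDiff ℝ (⊤ : ℕ∞) (anisoCutoff a s) :=
  ofRealCLM.contDiff.comp <| Real.smoothTransition.contDiff.comp <|
    contDiff_const.sub (contDiff_const.mul (contDiff_anisoForm a s))

lemma anisoCutoff_eq_one {s : ℝ} {ξ : EuclideanSpace ℝ (Fin n)} (h : anisoForm a s ξ ≤ 1 / 2) :
    anisoCutoff a s ξ = 1 := by
  rw [anisoCutoff, Real.smoothTransition.one_of_one_le (by linarith), ofReal_one]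

lemma anisoCutoff_eq_zero {s : ℝ} {ξ : EuclideanSpace ℝ (Fin n)} (h : 1 ≤ anisoForm a s ξ) :
    anisoCutoff a s ξ = 0 := by
  rw [anisoCutoff, Real.smoothTransition.zero_of_nonpos (by linarith), ofReal_zero]

lemma hasCompactSupport_anisoCutoff {s : ℝ} (hs : 0 < s) :
    HasCompactSupport (anisoCutoff a s) := by
  obtain ⟨R, hR⟩ := exists_norm_le_of_anisoForm_le_one (a := a) hs
  refine HasCompactSupport.intro (isCompact_closedBall 0 R) fun ξ hξ => ?_
  exact anisoCutoff_eq_zero (not_le.1 fun hle => hξ (by simpa using hR ξ hle)).le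

lemma tsupport_anisoCutoff_sub_subset (ha : ∀ i, 1 ≤ a i) {s : ℝ} (hs : 0 < s) :
    tsupport (fun ξ => anisoCutoff a s ξ - anisoCutoff a (s / 2) ξ)
      ⊆ {ξ | anisoForm a s ξ ≤ 1 ∧ 1 / 2 ≤ anisoForm a (s / 2) ξ} := by
  have hcont (s : ℝ) : Continuous (anisoForm a s) := (contDiff_anisoForm a s).continuous
  refine closure_minimal (fun ξ hξ => ?_)
    ((isClosed_le (hcont s) continuous_const).inter (isClosed_le continuous_const (hcont (s / 2))))
  have hmono := anisoForm_le_anisoForm ha (half_pos hs) (half_le_self hs.le) ξ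
  refine ⟨le_of_not_ge fun hout => hξ ?_, le_of_not_ge fun hin => hξ ?_⟩
  · simp only [anisoCutoff_eq_zero hout, anisoCutoff_eq_zero (hout.trans hmono), sub_self]
  · simp only [anisoCutoff_eq_one hin, anisoCutoff_eq_one (hmono.trans hin), sub_self]

end AnisotropicCutoff

section EuclideanTransfer

open SchwartzMap
open scoped FourierTransform

variable {n : ℕ}

/-- A Schwartz function on `Fin n → ℝ`, viewed on Euclidean space, where Mathlib's Fourier
transform lives. -/
def schwartzToEuclidean : 𝓢(RV n, ℂ) →L[ℂ] 𝓢(EuclideanSpace ℝ (Fin n), ℂ) :=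
  compCLMOfContinuousLinearEquiv ℂ (EuclideanSpace.equiv (Fin n) ℝ)

lemma schwartzToEuclidean_apply (φ : 𝓢(RV n, ℂ)) (x : EuclideanSpace ℝ (Fin n)) :
    schwartzToEuclidean φ x = φ x := rfl

lemma fourier_schwartzToEuclidean (φ : 𝓢(RV n, ℂ)) (ξ : EuclideanSpace ℝ (Fin n)) :
    𝓕 (schwartzToEuclidean φ) ξ = FT n φ (fun i => 2 * Real.pi * ξ i) := by
  rw [fourier_coe, Real.fourier_eq, FT,
    ← (EuclideanSpace.volume_preserving_symm_measurableEquiv_toLp (Fin n)).symm.integral_comp']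
  refine integral_congr_ae (.of_forall fun x => ?_)
  simp only [Circle.smul_def, Real.fourierChar_apply, smul_eq_mul, PiLp.inner_apply]
  refine congrArg₂ (· * ·) (congrArg Complex.exp ?_) rfl
  push_cast
  rw [mul_neg, neg_mul, neg_mul, Finset.mul_sum, Finset.sum_mul, Finset.mul_sum]
  congr 1
  refine Finset.sum_congr rfl fun i _ => ?_
  simp
  ring

lemma exists_schwartz_mul_fourier_eq_sub_anisoDilation {a : Fin n → ℝ} (ha : ∀ i, 1 ≤ a i)
    {anorm : RV n → ℝ} (h : IsAnorm n a anorm) {ε : ℝ} (hε : 0 < ε) (ψ : 𝓢(RV n, ℂ))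
    (hψ : ∀ ξ, ε / 2 < anorm ξ → anorm ξ < 2 * ε → 0 < ‖FT n ψ ξ‖) :
    ∃ (Φ Λ : 𝓢(EuclideanSpace ℝ (Fin n), ℂ)) (δ : ℝ), 0 < δ ∧ (∀ ξ, ‖ξ‖ < δ → Φ ξ = 1) ∧
      (∀ ξ, ‖ξ‖ < δ → Λ ξ = 0) ∧
      ∀ ξ, Λ ξ * 𝓕 (schwartzToEuclidean ψ) ξ = Φ ξ - Φ (anisoDilation a 1 ξ) := by
  set s := 3 / 2 * ε
  have hs : 0 < s := by positivity
  have hannulus := tsupport_anisoCutoff_sub_subset ha hs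
  obtain ⟨Λ, hΛ, hmul⟩ := exists_schwartz_mul_eq
    ((contDiff_anisoCutoff a s).sub (contDiff_anisoCutoff a (s / 2)))
    ((hasCompactSupport_anisoCutoff hs).sub (hasCompactSupport_anisoCutoff (half_pos hs)))
    (𝓕 (schwartzToEuclidean ψ)) fun ξ hξ => by
      obtain ⟨hlow, hhigh⟩ := h.mem_annulus ha hε (hannulus hξ).1 (hannulus hξ).2
      exact fourier_schwartzToEuclidean ψ ξ ▸ norm_pos_iff.1 (hψ _ hlow hhigh)
  obtain ⟨δ, hδ, hball⟩ := Metric.eventually_nhds_iff.1 <|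
    ((contDiff_anisoForm a (s / 2)).continuous.tendsto 0).eventually_lt_const
      (show anisoForm a (s / 2) 0 < 1 / 2 by rw [anisoForm_zero]; norm_num)
  have hinner (ξ : EuclideanSpace ℝ (Fin n)) (hξ : ‖ξ‖ < δ) :
      anisoCutoff a s ξ = 1 ∧ anisoCutoff a (s / 2) ξ = 1 :=
    have hle := (hball (by simpa using hξ)).le
    ⟨anisoCutoff_eq_one
      ((anisoForm_le_anisoForm ha (half_pos hs) (half_le_self hs.le) ξ).trans hle),
      anisoCutoff_eq_one hle⟩
  refine ⟨(hasCompactSupport_anisoCutoff hs).toSchwartzMap (contDiff_anisoCutoff a s), Λ, δ, hδ,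
    fun ξ hξ => (hinner ξ hξ).1, fun ξ hξ => hΛ ξ ?_, fun ξ => (hmul ξ).trans ?_⟩
  · simp only [hinner ξ hξ, sub_self]
  · simp only [HasCompactSupport.toSchwartzMap_toFun, anisoCutoff,
      anisoForm_anisoDilation_one hs]

end EuclideanTransfer

section DyadicFamily

open SchwartzMap
open scoped FourierTransform

variable {n : ℕ} (a : Fin n → ℝ)

lemma det_anisoDilation (t : ℝ) :
    LinearMap.det (anisoDilation a t : EuclideanSpace ℝ (Fin n) →ₗ[ℝ] EuclideanSpace ℝ (Fin n))
      = (2 : ℝ) ^ (t * ∑ i, a i) := by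
  have hdiag : LinearMap.toMatrix (EuclideanSpace.basisFun (Fin n) ℝ).toBasis
      (EuclideanSpace.basisFun (Fin n) ℝ).toBasis
      (anisoDilation a t : EuclideanSpace ℝ (Fin n) →ₗ[ℝ] EuclideanSpace ℝ (Fin n))
        = Matrix.diagonal fun i => (2 : ℝ) ^ (t * a i) := by
    ext i j
    rw [LinearMap.toMatrix_apply]
    simp [anisoDilation_apply, Matrix.diagonal_apply]
  rw [← LinearMap.det_toMatrix (EuclideanSpace.basisFun (Fin n) ℝ).toBasis, hdiag,
    Matrix.det_diagonal, Finset.mul_sum, Real.rpow_sum_of_pos two_pos]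

lemma map_anisoDilation_volume (t : ℝ) :
    Measure.map (anisoDilation a t) (volume : Measure (EuclideanSpace ℝ (Fin n)))
      = ENNReal.ofReal ((2 : ℝ) ^ (-(t * ∑ i, a i))) • volume := by
  have hpos : 0 < (2 : ℝ) ^ (t * ∑ i, a i) := by positivity
  have hmap := Measure.map_linearMap_addHaar_eq_smul_addHaar
    (volume : Measure (EuclideanSpace ℝ (Fin n)))
    (f := (anisoDilation a t : EuclideanSpace ℝ (Fin n) →ₗ[ℝ] EuclideanSpace ℝ (Fin n)))
    (by rw [det_anisoDilation]; exact hpos.ne')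
  rwa [det_anisoDilation, abs_of_pos (inv_pos.2 hpos), ← Real.rpow_neg two_pos.le] at hmap

lemma lintegral_eq_mul_lintegral_anisoDilation (t : ℝ) (h : EuclideanSpace ℝ (Fin n) → ℝ≥0∞) :
    ∫⁻ z, h z
      = ENNReal.ofReal ((2 : ℝ) ^ (t * ∑ i, a i)) * ∫⁻ z, h (anisoDilation a t z) := by
  have hmap : ∫⁻ z, h (anisoDilation a t z) = ∫⁻ z, h z ∂(volume.map (anisoDilation a t)) :=
    (lintegral_map_equiv h (anisoDilation a t).toHomeomorph.toMeasurableEquiv).symm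
  rw [hmap, map_anisoDilation_volume, lintegral_smul_measure, smul_eq_mul, ← mul_assoc,
    ← ENNReal.ofReal_mul (by positivity), ← Real.rpow_add two_pos]
  simp

lemma integral_comp_anisoDilation (t : ℝ) (h : EuclideanSpace ℝ (Fin n) → ℂ) :
    ∫ z, h (anisoDilation a t z) = (2 : ℝ) ^ (-(t * ∑ i, a i)) • ∫ z, h z := by
  have hmap : ∫ z, h (anisoDilation a t z) = ∫ z, h z ∂(volume.map (anisoDilation a t)) :=
    (integral_map_equiv (anisoDilation a t).toHomeomorph.toMeasurableEquiv h).symm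
  rw [hmap, map_anisoDilation_volume, integral_smul_measure,
    ENNReal.toReal_ofReal (by positivity)]

lemma inner_anisoDilation (t : ℝ) (x y : EuclideanSpace ℝ (Fin n)) :
    inner ℝ (anisoDilation a t x) y = inner ℝ x (anisoDilation a t y) := by
  rw [PiLp.inner_apply, PiLp.inner_apply]
  exact Finset.sum_congr rfl fun i _ => by simp [anisoDilation_apply]; ring

/-- The `L¹`-normalised rescaling `φ ↦ 2^{t|a|} φ(2^{ta} ·)` of Schwartz functions. -/
def anisoRescale (t : ℝ) :
    𝓢(EuclideanSpace ℝ (Fin n), ℂ) →L[ℂ] 𝓢(EuclideanSpace ℝ (Fin n), ℂ) :=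
  (((2 : ℝ) ^ (t * ∑ i, a i) : ℝ) : ℂ) •
    compCLMOfContinuousLinearEquiv ℂ (anisoDilation a t)

lemma anisoRescale_apply (t : ℝ) (φ : 𝓢(EuclideanSpace ℝ (Fin n), ℂ))
    (x : EuclideanSpace ℝ (Fin n)) :
    anisoRescale a t φ x = (((2 : ℝ) ^ (t * ∑ i, a i) : ℝ) : ℂ) * φ (anisoDilation a t x) := rfl

lemma anisoRescale_zero (φ : 𝓢(EuclideanSpace ℝ (Fin n), ℂ)) : anisoRescale a 0 φ = φ := by
  ext x
  simp [anisoRescale_apply, anisoDilation_zero]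

lemma anisoRescale_anisoRescale (s t : ℝ) (φ : 𝓢(EuclideanSpace ℝ (Fin n), ℂ)) :
    anisoRescale a s (anisoRescale a t φ) = anisoRescale a (s + t) φ := by
  ext x
  rw [anisoRescale_apply, anisoRescale_apply, anisoRescale_apply, anisoDilation_anisoDilation,
    ← mul_assoc, ← ofReal_mul, ← Real.rpow_add two_pos, ← add_mul, add_comm t s]

lemma fourier_anisoRescale (t : ℝ) (φ : 𝓢(EuclideanSpace ℝ (Fin n), ℂ))
    (ξ : EuclideanSpace ℝ (Fin n)) :
    𝓕 (anisoRescale a t φ) ξ = 𝓕 φ (anisoDilation a (-t) ξ) := by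
  have hpos : (0 : ℝ) < 2 ^ (t * ∑ i, a i) := by positivity
  have hchange := integral_comp_anisoDilation a t fun v =>
    Real.fourierChar (-inner ℝ v (anisoDilation a (-t) ξ)) • φ v
  rw [Real.rpow_neg two_pos.le, eq_inv_smul_iff₀ hpos.ne', ← integral_smul] at hchange
  rw [fourier_coe, Real.fourier_eq, fourier_coe, Real.fourier_eq, ← hchange]
  refine integral_congr_ae (.of_forall fun x => ?_)
  simp only [anisoRescale_apply]
  rw [inner_anisoDilation, anisoDilation_anisoDilation, add_neg_cancel, anisoDilation_zero,
    smul_comm]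
  rfl

lemma reflectTranslate_anisoRescale (t : ℝ) (y : EuclideanSpace ℝ (Fin n))
    (φ : 𝓢(EuclideanSpace ℝ (Fin n), ℂ)) :
    reflectTranslate y (anisoRescale a t φ)
      = anisoRescale a t (reflectTranslate (anisoDilation a t y) φ) := by
  ext x
  rw [reflectTranslate_apply, anisoRescale_apply, anisoRescale_apply, reflectTranslate_apply,
    map_sub]

lemma distribConv_anisoRescale (f : 𝓢(EuclideanSpace ℝ (Fin n), ℂ) →L[ℂ] ℂ) (t : ℝ)
    (φ : 𝓢(EuclideanSpace ℝ (Fin n), ℂ)) (y : EuclideanSpace ℝ (Fin n)) :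
    distribConv f (anisoRescale a t φ) y
      = distribConv (f.comp (anisoRescale a t)) φ (anisoDilation a t y) := by
  rw [distribConv, reflectTranslate_anisoRescale]
  rfl

/-- The family `φ_k` of the theorem on Euclidean space: `φ₀` for `k = 0`, and the rescaling
`2^{k|a|} φ(2^{ka} ·)` for `k ≥ 1`. -/
def dyadicFamily (φ₀ φ : 𝓢(EuclideanSpace ℝ (Fin n), ℂ)) :
    ℕ → 𝓢(EuclideanSpace ℝ (Fin n), ℂ)
  | 0 => φ₀
  | k + 1 => anisoRescale a (k + 1 : ℕ) φ

variable {a}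

lemma dyadicFamily_add (φ₀ φ : 𝓢(EuclideanSpace ℝ (Fin n), ℂ)) (j m : ℕ) :
    dyadicFamily a φ₀ φ (j + m)
      = anisoRescale a j (dyadicFamily a (if j = 0 then φ₀ else φ) φ m) := by
  match j, m with
  | 0, m => rw [if_pos rfl, zero_add, Nat.cast_zero, anisoRescale_zero]
  | j + 1, 0 => rfl
  | j + 1, m + 1 =>
    change anisoRescale a (j + 1 + m + 1 : ℕ) φ
      = anisoRescale a (j + 1 : ℕ) (anisoRescale a (m + 1 : ℕ) φ)
    rw [anisoRescale_anisoRescale, ← Nat.cast_add, add_assoc (j + 1) m 1]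

lemma fourier_dyadicFamily_succ (φ₀ φ : 𝓢(EuclideanSpace ℝ (Fin n), ℂ)) (m : ℕ)
    (ξ : EuclideanSpace ℝ (Fin n)) :
    𝓕 (dyadicFamily a φ₀ φ (m + 1)) ξ = 𝓕 φ (anisoDilation a (-(m + 1 : ℕ)) ξ) :=
  fourier_anisoRescale a _ _ _

lemma exists_enorm_distribConv_dyadicFamily_zero_le (ha : ∀ i, 1 ≤ a i)
    {Φ Λ φ : 𝓢(EuclideanSpace ℝ (Fin n), ℂ)} {δ : ℝ} (hδ : 0 < δ) (hΦ : ∀ ξ, ‖ξ‖ < δ → Φ ξ = 1)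
    (hΛ : ∀ ξ, ‖ξ‖ < δ → Λ ξ = 0) (hφ : ∀ ξ, Λ ξ * 𝓕 φ ξ = Φ ξ - Φ (anisoDilation a 1 ξ))
    (φ₀ : 𝓢(EuclideanSpace ℝ (Fin n), ℂ)) (L M : ℕ) :
    ∃ C : ℝ, 0 ≤ C ∧ ∀ (f : 𝓢(EuclideanSpace ℝ (Fin n), ℂ) →L[ℂ] ℂ) y,
      ‖distribConv f (dyadicFamily a φ₀ φ 0) y‖ₑ
        ≤ ENNReal.ofReal C * ∑' m : ℕ, ENNReal.ofReal (((1 / 2) ^ m) ^ L) *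
          ∫⁻ z, ‖distribConv f (dyadicFamily a φ₀ φ m) z‖ₑ *
            ENNReal.ofReal (((1 + ‖y - z‖) ^ M)⁻¹) := by
  refine exists_enorm_distribConv_le_tsum
    (T := fun m => (anisoDilation a (-m) :
      EuclideanSpace ℝ (Fin n) →L[ℝ] EuclideanSpace ℝ (Fin n)))
    (by ext1 x; simp [anisoDilation_zero]) (norm_anisoDilation_neg_le ha) hδ hΦ hΛ
    (dyadicFamily a φ₀ φ) (fun m ξ => ?_) L M
  rw [fourier_dyadicFamily_succ]
  change Λ (anisoDilation a (-(m + 1 : ℕ)) ξ) * _ = _ - Φ (anisoDilation a (-m) ξ)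
  rw [hφ, anisoDilation_anisoDilation]
  push_cast
  ring_nf

lemma exists_enorm_distribConv_dyadicFamily_le (ha : ∀ i, 1 ≤ a i)
    {Φ Λ φ : 𝓢(EuclideanSpace ℝ (Fin n), ℂ)} {δ : ℝ} (hδ : 0 < δ) (hΦ : ∀ ξ, ‖ξ‖ < δ → Φ ξ = 1)
    (hΛ : ∀ ξ, ‖ξ‖ < δ → Λ ξ = 0) (hφ : ∀ ξ, Λ ξ * 𝓕 φ ξ = Φ ξ - Φ (anisoDilation a 1 ξ))
    (φ₀ : 𝓢(EuclideanSpace ℝ (Fin n), ℂ)) (L M : ℕ) :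
    ∃ C : ℝ, 0 ≤ C ∧ ∀ (f : 𝓢(EuclideanSpace ℝ (Fin n), ℂ) →L[ℂ] ℂ) (j : ℕ) y,
      ‖distribConv f (dyadicFamily a φ₀ φ j) y‖ₑ
        ≤ ENNReal.ofReal C * ∑' m : ℕ, ENNReal.ofReal (((1 / 2) ^ m) ^ L) *
          (ENNReal.ofReal ((2 : ℝ) ^ ((j : ℝ) * ∑ i, a i)) *
            ∫⁻ z, ‖distribConv f (dyadicFamily a φ₀ φ (j + m)) z‖ₑ *
              ENNReal.ofReal (((1 + ‖anisoDilation a j (y - z)‖) ^ M)⁻¹)) := by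
  obtain ⟨C₀, hC₀, hbound₀⟩ :=
    exists_enorm_distribConv_dyadicFamily_zero_le ha hδ hΦ hΛ hφ φ₀ L M
  obtain ⟨C₁, -, hbound₁⟩ :=
    exists_enorm_distribConv_dyadicFamily_zero_le ha hδ hΦ hΛ hφ φ L M
  refine ⟨max C₀ C₁, le_max_of_le_left hC₀, fun f j y => ?_⟩
  set γ := if j = 0 then φ₀ else φ
  have hγ (m : ℕ) (z : EuclideanSpace ℝ (Fin n)) :
      distribConv f (dyadicFamily a φ₀ φ (j + m)) z
        = distribConv (f.comp (anisoRescale a j)) (dyadicFamily a γ φ m) (anisoDilation a j z) := by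
    rw [dyadicFamily_add, distribConv_anisoRescale]
  have hbound (g : 𝓢(EuclideanSpace ℝ (Fin n), ℂ) →L[ℂ] ℂ) (w) :
      ‖distribConv g (dyadicFamily a γ φ 0) w‖ₑ
        ≤ ENNReal.ofReal (max C₀ C₁) * ∑' m : ℕ, ENNReal.ofReal (((1 / 2) ^ m) ^ L) *
          ∫⁻ z, ‖distribConv g (dyadicFamily a γ φ m) z‖ₑ *
            ENNReal.ofReal (((1 + ‖w - z‖) ^ M)⁻¹) := by
    rcases eq_or_ne j 0 with hj | hj
    · rw [show γ = φ₀ from if_pos hj]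
      exact (hbound₀ g w).trans (by gcongr; exact le_max_left ..)
    · rw [show γ = φ from if_neg hj]
      exact (hbound₁ g w).trans (by gcongr; exact le_max_right ..)
  have hscale := hbound (f.comp (anisoRescale a j)) (anisoDilation a j y)
  rw [← hγ 0] at hscale
  refine hscale.trans_eq (congrArg _ (tsum_congr fun m => congrArg _ ?_))
  rw [lintegral_eq_mul_lintegral_anisoDilation a j]
  simp only [← hγ, ← map_sub]

end DyadicFamily

section ProductWeight

variable {n : ℕ}

lemma one_add_sum_le_prod_one_add {ι R : Type*} [CommSemiring R] [PartialOrder R]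
    [IsOrderedRing R] {f : ι → R} (s : Finset ι) (hf : ∀ i ∈ s, 0 ≤ f i) :
    1 + ∑ i ∈ s, f i ≤ ∏ i ∈ s, (1 + f i) := by
  classical
  induction s using Finset.induction_on with
  | empty => simp
  | insert b s hb ih =>
    have hfb := hf b (Finset.mem_insert_self ..)
    have hfs : 0 ≤ ∑ i ∈ s, f i := Finset.sum_nonneg fun i hi => hf i (Finset.mem_insert_of_mem hi)
    rw [Finset.sum_insert hb, Finset.prod_insert hb]
    calc 1 + (f b + ∑ i ∈ s, f i)
        ≤ 1 + (f b + ∑ i ∈ s, f i) + f b * ∑ i ∈ s, f i :=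
          le_add_of_nonneg_right (mul_nonneg hfb hfs)
      _ = (1 + f b) * (1 + ∑ i ∈ s, f i) := by ring
      _ ≤ (1 + f b) * ∏ i ∈ s, (1 + f i) :=
          mul_le_mul_of_nonneg_left (ih fun i hi => hf i (Finset.mem_insert_of_mem hi))
            (add_nonneg zero_le_one hfb)

/-- The polynomial weight `∏ₗ (1 + |xₗ|) ^ sₗ` with a separate exponent in each coordinate. -/
def productWeight (s : Fin n → ℝ) (x : EuclideanSpace ℝ (Fin n)) : ℝ :=
  ∏ l, (1 + |x l|) ^ s l

lemma productWeight_pos (s : Fin n → ℝ) (x : EuclideanSpace ℝ (Fin n)) : 0 < productWeight s x :=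
  Finset.prod_pos fun l _ => by positivity

lemma productWeight_zero_right (s : Fin n → ℝ) : productWeight s 0 = 1 := by
  simp [productWeight]

lemma productWeight_add (s t : Fin n → ℝ) (x : EuclideanSpace ℝ (Fin n)) :
    productWeight (s + t) x = productWeight s x * productWeight t x := by
  simp only [productWeight, ← Finset.prod_mul_distrib, Pi.add_apply]
  exact Finset.prod_congr rfl fun l _ => Real.rpow_add (by positivity) _ _

lemma productWeight_mul_const (s : Fin n → ℝ) (c : ℝ) (x : EuclideanSpace ℝ (Fin n)) :
    productWeight (fun l => s l * c) x = productWeight s x ^ c := by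
  simp only [productWeight]
  rw [← Real.finsetProd_rpow _ _ fun l _ => by positivity]
  exact Finset.prod_congr rfl fun l _ => Real.rpow_mul (by positivity) _ _

lemma productWeight_mono_left {s t : Fin n → ℝ} (hst : s ≤ t) (x : EuclideanSpace ℝ (Fin n)) :
    productWeight s x ≤ productWeight t x :=
  Finset.prod_le_prod (fun l _ => by positivity) fun l _ =>
    Real.rpow_le_rpow_of_exponent_le (by simp) (hst l)

lemma productWeight_add_right_le {s : Fin n → ℝ} (hs : 0 ≤ s) (x y : EuclideanSpace ℝ (Fin n)) :
    productWeight s (x + y) ≤ productWeight s x * productWeight s y := by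
  simp only [productWeight, ← Finset.prod_mul_distrib]
  refine Finset.prod_le_prod (fun l _ => by positivity) fun l _ => ?_
  rw [← Real.mul_rpow (by positivity) (by positivity)]
  refine Real.rpow_le_rpow (by positivity) ?_ (hs l)
  calc 1 + |x l + y l| ≤ 1 + (|x l| + |y l|) := by gcongr; exact abs_add_le _ _
    _ ≤ 1 + (|x l| + |y l|) + |x l| * |y l| := le_add_of_nonneg_right (by positivity)
    _ = (1 + |x l|) * (1 + |y l|) := by ring

lemma productWeight_anisoDilation_le {a : Fin n → ℝ} (ha : 0 ≤ a) {s : Fin n → ℝ} (hs : 0 ≤ s)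
    {t : ℝ} (ht : 0 ≤ t) (x : EuclideanSpace ℝ (Fin n)) :
    productWeight s (anisoDilation a t x) ≤ 2 ^ (t * ∑ l, a l * s l) * productWeight s x := by
  simp only [productWeight, Finset.mul_sum, Real.rpow_sum_of_pos two_pos,
    ← Finset.prod_mul_distrib]
  refine Finset.prod_le_prod (fun l _ => by positivity) fun l _ => ?_
  rw [← mul_assoc t, Real.rpow_mul two_pos.le, ← Real.mul_rpow (by positivity) (by positivity)]
  refine Real.rpow_le_rpow (by positivity) ?_ (hs l)
  rw [anisoDilation_apply, abs_mul, abs_of_pos (by positivity), mul_one_add]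
  gcongr
  exact Real.one_le_rpow one_le_two (mul_nonneg ht (ha l))

lemma productWeight_anisoDilation_sub_le {a : Fin n → ℝ} (ha : 0 ≤ a) {s : Fin n → ℝ} (hs : 0 ≤ s)
    {t t' : ℝ} (ht : t ≤ t') (x y z : EuclideanSpace ℝ (Fin n)) :
    productWeight s (anisoDilation a t' (x - z))
      ≤ 2 ^ ((t' - t) * ∑ l, a l * s l) * productWeight s (anisoDilation a t (x - y)) *
        productWeight s (anisoDilation a t' (y - z)) := by
  have hscale := productWeight_anisoDilation_le ha hs (sub_nonneg.2 ht) (anisoDilation a t (x - y))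
  rw [anisoDilation_anisoDilation, sub_add_cancel] at hscale
  calc productWeight s (anisoDilation a t' (x - z))
      = productWeight s (anisoDilation a t' (x - y) + anisoDilation a t' (y - z)) := by
        rw [← map_add, sub_add_sub_cancel]
    _ ≤ productWeight s (anisoDilation a t' (x - y)) *
        productWeight s (anisoDilation a t' (y - z)) := productWeight_add_right_le hs _ _
    _ ≤ _ := mul_le_mul_of_nonneg_right hscale (productWeight_pos _ _).le

lemma productWeight_le_one_add_norm_pow {s : Fin n → ℝ} (hs : 0 ≤ s) {M : ℕ} (hM : ∑ l, s l ≤ M)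
    (x : EuclideanSpace ℝ (Fin n)) : productWeight s x ≤ (1 + ‖x‖) ^ M :=
  calc productWeight s x ≤ ∏ l, (1 + ‖x‖) ^ s l :=
        Finset.prod_le_prod (fun l _ => by positivity) fun l _ =>
          Real.rpow_le_rpow (by positivity) (by gcongr; exact PiLp.norm_apply_le x l) (hs l)
    _ = (1 + ‖x‖) ^ ∑ l, s l := (Real.rpow_sum_of_pos (by positivity) _ _).symm
    _ ≤ (1 + ‖x‖) ^ (M : ℝ) := Real.rpow_le_rpow_of_exponent_le (by simp) hM
    _ = (1 + ‖x‖) ^ M := Real.rpow_natCast _ _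

lemma one_add_norm_rpow_le_productWeight_const {c : ℝ} (hc : 0 ≤ c)
    (x : EuclideanSpace ℝ (Fin n)) : (1 + ‖x‖) ^ c ≤ productWeight (fun _ => c) x := by
  have hnorm : ‖x‖ ≤ ∑ l, |x l| := by
    rw [EuclideanSpace.norm_eq]
    exact Real.sqrt_le_iff.2 ⟨Finset.sum_nonneg fun _ _ => abs_nonneg _,
      Finset.sum_sq_le_sq_sum_of_nonneg fun _ _ => norm_nonneg _⟩
  have hprod : 1 + ∑ l, |x l| ≤ ∏ l, (1 + |x l|) :=
    one_add_sum_le_prod_one_add _ fun l _ => abs_nonneg (x l)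
  rw [productWeight, Real.finsetProd_rpow _ _ fun l _ => by positivity]
  exact Real.rpow_le_rpow (by positivity) (by linarith) hc

lemma continuous_productWeight (s : Fin n → ℝ) : Continuous (productWeight s) :=
  continuous_finsetProd _ fun l _ =>
    Continuous.rpow_const (by fun_prop) fun x => Or.inl (by positivity)

end ProductWeight

section PeetreKernel

variable {n : ℕ} {a : Fin n → ℝ}

/-- The scale–space half space, whose point `(j, x)` stands for the position `x` at the dyadic
scale `2 ^ (-j a)`. -/
abbrev ScaleSpace (n : ℕ) := ℕ × EuclideanSpace ℝ (Fin n)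

/-- The measure on scale space which on the slice of scale `k` is Lebesgue measure in the
dilated variable `2 ^ (k a) z`, that is `2 ^ (k |a|) dz`. -/
def scaleMeasure (a : Fin n → ℝ) : Measure (ScaleSpace n) :=
  Measure.sum fun k : ℕ =>
    ENNReal.ofReal ((2 : ℝ) ^ ((k : ℝ) * ∑ i, a i)) • volume.map (Prod.mk k)

lemma lintegral_scaleMeasure (a : Fin n → ℝ) (g : ScaleSpace n → ℝ≥0∞) :
    ∫⁻ q, g q ∂scaleMeasure a
      = ∑' k : ℕ, ENNReal.ofReal ((2 : ℝ) ^ ((k : ℝ) * ∑ i, a i)) * ∫⁻ z, g (k, z) := by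
  simp only [scaleMeasure, lintegral_sum_measure, lintegral_smul_measure, smul_eq_mul]
  exact tsum_congr fun k => congrArg _
    ((MeasurableEmbedding.prodMk_left k MeasurableEmbedding.id).lintegral_map g)

/-- The kernel `2 ^ ((j - k) N) ∏ₗ (1 + 2 ^ (k aₗ) |xₗ - zₗ|) ^ (-sₗ)` at `p = (j, x)` and
`q = (k, z)`, extended by zero to the scales `k < j`. -/
def peetreKernel (a : Fin n → ℝ) (N : ℝ) (s : Fin n → ℝ) (p q : ScaleSpace n) : ℝ≥0∞ :=
  if p.1 ≤ q.1 then
    ENNReal.ofReal ((2 : ℝ) ^ (((p.1 : ℝ) - q.1) * N) *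
      (productWeight s (anisoDilation a q.1 (p.2 - q.2)))⁻¹)
  else 0

lemma peetreKernel_of_le {p q : ScaleSpace n} (hpq : p.1 ≤ q.1) (N : ℝ) (s : Fin n → ℝ) :
    peetreKernel a N s p q = ENNReal.ofReal ((2 : ℝ) ^ (((p.1 : ℝ) - q.1) * N) *
      (productWeight s (anisoDilation a q.1 (p.2 - q.2)))⁻¹) :=
  if_pos hpq

lemma peetreKernel_of_lt {p q : ScaleSpace n} (hqp : q.1 < p.1) (N : ℝ) (s : Fin n → ℝ) :
    peetreKernel a N s p q = 0 :=
  if_neg hqp.not_ge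

lemma peetreKernel_ne_top {N : ℝ} {s : Fin n → ℝ} {p q : ScaleSpace n} :
    peetreKernel a N s p q ≠ ⊤ := by
  unfold peetreKernel
  split_ifs <;> simp

lemma peetreKernel_ne_zero {p q : ScaleSpace n} (hpq : p.1 ≤ q.1) (N : ℝ) (s : Fin n → ℝ) :
    peetreKernel a N s p q ≠ 0 := by
  have := productWeight_pos s (anisoDilation a q.1 (p.2 - q.2))
  rw [peetreKernel_of_le hpq]
  exact (ENNReal.ofReal_pos.2 (by positivity)).ne'

lemma peetreKernel_self (N : ℝ) (s : Fin n → ℝ) (p : ScaleSpace n) :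
    peetreKernel a N s p p = 1 := by
  simp [peetreKernel, productWeight_zero_right]

lemma peetreKernel_anti {N N' : ℝ} (hN : N ≤ N') {s s' : Fin n → ℝ} (hs : s ≤ s')
    (p q : ScaleSpace n) : peetreKernel a N' s' p q ≤ peetreKernel a N s p q := by
  unfold peetreKernel
  split_ifs with hpq
  · have hpq' : (p.1 : ℝ) - q.1 ≤ 0 := sub_nonpos.2 (by exact_mod_cast hpq)
    refine ENNReal.ofReal_le_ofReal (mul_le_mul
      (Real.rpow_le_rpow_of_exponent_le one_le_two (mul_le_mul_of_nonpos_left hN hpq'))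
      (inv_anti₀ (productWeight_pos _ _) (productWeight_mono_left hs _))
      (inv_nonneg.2 (productWeight_pos _ _).le) (by positivity))
  · exact le_rfl

lemma peetreKernel_le_one {N : ℝ} (hN : 0 ≤ N) {s : Fin n → ℝ} (hs : 0 ≤ s) (p q : ScaleSpace n) :
    peetreKernel a N s p q ≤ 1 := by
  refine (peetreKernel_anti hN hs p q).trans ?_
  unfold peetreKernel
  split_ifs <;> simp [productWeight]

lemma peetreKernel_add (N N' : ℝ) (s s' : Fin n → ℝ) (p q : ScaleSpace n) :
    peetreKernel a (N + N') (s + s') p q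
      = peetreKernel a N s p q * peetreKernel a N' s' p q := by
  unfold peetreKernel
  split_ifs
  · have := productWeight_pos s (anisoDilation a q.1 (p.2 - q.2))
    rw [← ENNReal.ofReal_mul (by positivity), productWeight_add, mul_add,
      Real.rpow_add two_pos, mul_inv, mul_mul_mul_comm]
  · rw [zero_mul]

-- Moving the intermediate weight from the scale of `q` to the finer scale of `o` costs
-- `2 ^ ((o.1 - q.1) ∑ l, a l * s l)`, which the larger exponent of the second kernel pays for.
lemma peetreKernel_mul_le (ha : 0 ≤ a) (N : ℝ) {s : Fin n → ℝ} (hs : 0 ≤ s)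
    (p q o : ScaleSpace n) :
    peetreKernel a N s p q * peetreKernel a (N + ∑ l, a l * s l) s q o
      ≤ peetreKernel a N s p o := by
  rcases lt_or_ge q.1 p.1 with hqp | hpq
  · rw [peetreKernel_of_lt hqp, zero_mul]
    exact zero_le
  rcases lt_or_ge o.1 q.1 with hoq | hqo
  · rw [peetreKernel_of_lt hoq, mul_zero]
    exact zero_le
  have hweight := productWeight_anisoDilation_sub_le ha hs (Nat.cast_le (α := ℝ).2 hqo)
    p.2 q.2 o.2
  set A := ∑ l, a l * s l
  set u := productWeight s (anisoDilation a q.1 (p.2 - q.2))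
  set v := productWeight s (anisoDilation a o.1 (q.2 - o.2))
  set w := productWeight s (anisoDilation a o.1 (p.2 - o.2))
  have hu : 0 < u := productWeight_pos _ _
  have hw : 0 < w := productWeight_pos _ _
  rw [peetreKernel_of_le hpq, peetreKernel_of_le hqo, peetreKernel_of_le (hpq.trans hqo),
    ← ENNReal.ofReal_mul (by positivity)]
  refine ENNReal.ofReal_le_ofReal ?_
  have hpow : (2 : ℝ) ^ (((p.1 : ℝ) - q.1) * N) * 2 ^ (((q.1 : ℝ) - o.1) * (N + A))
      = 2 ^ (((p.1 : ℝ) - o.1) * N) * (2 ^ (((o.1 : ℝ) - q.1) * A))⁻¹ := by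
    rw [← Real.rpow_neg two_pos.le, ← Real.rpow_add two_pos, ← Real.rpow_add two_pos]
    ring_nf
  calc (2 : ℝ) ^ (((p.1 : ℝ) - q.1) * N) * u⁻¹ * (2 ^ (((q.1 : ℝ) - o.1) * (N + A)) * v⁻¹)
      = 2 ^ (((p.1 : ℝ) - o.1) * N) * (2 ^ (((o.1 : ℝ) - q.1) * A) * u * v)⁻¹ := by
        rw [mul_mul_mul_comm, hpow, mul_inv, mul_inv]
        ring
    _ ≤ 2 ^ (((p.1 : ℝ) - o.1) * N) * w⁻¹ := by gcongr

lemma peetreKernel_mul_le_of_le (ha : 0 ≤ a) {N N' : ℝ} {s s' : Fin n → ℝ} (hs : 0 ≤ s)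
    (hN : N + ∑ l, a l * s l ≤ N') (hss' : s ≤ s') (p q o : ScaleSpace n) :
    peetreKernel a N s p q * peetreKernel a N' s' q o ≤ peetreKernel a N s p o :=
  (mul_le_mul_right (peetreKernel_anti hN hss' q o) _).trans (peetreKernel_mul_le ha N hs p q o)

lemma measurable_peetreKernel (N : ℝ) (s : Fin n → ℝ) (p : ScaleSpace n) :
    Measurable (peetreKernel a N s p) := by
  refine measurable_from_prod_countable_right fun k => ?_
  simp only [peetreKernel]
  split_ifs
  · exact ENNReal.measurable_ofReal.comp (measurable_const.mul
      ((continuous_productWeight s).comp (by fun_prop)).measurable.inv)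
  · exact measurable_const

lemma exists_lintegral_productWeight_inv_le (a : Fin n → ℝ) : ∃ K : ℝ≥0∞, K ≠ ⊤ ∧
    ∀ (t : ℝ) (x : EuclideanSpace ℝ (Fin n)), ENNReal.ofReal ((2 : ℝ) ^ (t * ∑ i, a i)) *
      ∫⁻ z, ENNReal.ofReal (productWeight (fun _ => (n : ℝ) + 1) (anisoDilation a t (x - z)))⁻¹
        ≤ K := by
  refine ⟨∫⁻ z : EuclideanSpace ℝ (Fin n), ENNReal.ofReal ((1 + ‖z‖) ^ (-((n : ℝ) + 1))),
    (finite_integral_one_add_norm (by simp)).ne, fun t x => ?_⟩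
  rw [lintegral_sub_left_eq_self (fun z =>
      ENNReal.ofReal (productWeight (fun _ => (n : ℝ) + 1) (anisoDilation a t z))⁻¹) x,
    ← lintegral_eq_mul_lintegral_anisoDilation a t
      fun z => ENNReal.ofReal (productWeight (fun _ => (n : ℝ) + 1) z)⁻¹]
  gcongr with z
  rw [Real.rpow_neg (by positivity)]
  exact inv_anti₀ (by positivity) (one_add_norm_rpow_le_productWeight_const (by positivity) z)

lemma lintegral_peetreKernel_mul (a : Fin n → ℝ) (N : ℝ) (s : Fin n → ℝ) (p : ScaleSpace n)
    (g : ScaleSpace n → ℝ≥0∞) :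
    ∫⁻ q, peetreKernel a N s p q * g q ∂scaleMeasure a
      = ∑' m : ℕ, ENNReal.ofReal (2 ^ (-(m * N))) *
        (ENNReal.ofReal (2 ^ (((p.1 + m : ℕ) : ℝ) * ∑ i, a i)) *
          ∫⁻ z, ENNReal.ofReal (productWeight s (anisoDilation a (p.1 + m : ℕ) (p.2 - z)))⁻¹ *
            g (p.1 + m, z)) := by
  rw [lintegral_scaleMeasure, ← (add_right_injective p.1).tsum_eq]
  · refine tsum_congr fun m => ?_
    rw [mul_left_comm, ← lintegral_const_mul' (.ofReal (2 ^ (-(m * N)))) _ ENNReal.ofReal_ne_top]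
    refine congrArg _ (lintegral_congr fun z => ?_)
    rw [peetreKernel_of_le (Nat.le_add_right ..), ENNReal.ofReal_mul (by positivity), mul_assoc]
    push_cast
    ring_nf
  · refine fun k hk => ⟨k - p.1, Nat.add_sub_of_le ?_⟩
    by_contra! hkp
    exact hk (by simp [peetreKernel_of_lt (a := a) (p := p) (q := (k, _)) hkp])

lemma exists_lintegral_peetreKernel_le (a : Fin n → ℝ) : ∃ K : ℝ≥0∞, K ≠ ⊤ ∧
    ∀ p, ∫⁻ q, peetreKernel a 1 (fun _ => (n : ℝ) + 1) p q ∂scaleMeasure a ≤ K := by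
  obtain ⟨K, hK, hslice⟩ := exists_lintegral_productWeight_inv_le a
  have hgeom : Summable fun m : ℕ => (2 : ℝ) ^ (-((m : ℝ) * 1)) := by
    simpa [Real.rpow_neg] using summable_geometric_two
  refine ⟨_, ENNReal.mul_ne_top hgeom.tsum_ofReal_ne_top hK, fun p => ?_⟩
  have hkernel := lintegral_peetreKernel_mul a 1 (fun _ => (n : ℝ) + 1) p 1
  simp only [Pi.one_apply, mul_one] at hkernel
  rw [hkernel, ← ENNReal.tsum_mul_right]
  simp only [mul_one]
  gcongr with m
  exact hslice _ _

end PeetreKernel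

section SelfImprovement

variable {X : Type*} [MeasurableSpace X] {μ : Measure X}

-- Split `Y = Y ^ (1 - τ) * Y ^ τ`, bound the first factor by `M := ⨆ q, Y q` and absorb it.
lemma rpow_le_mul_lintegral_rpow_of_le_one {Y : X → ℝ≥0∞} {C B : ℝ≥0∞} (hB : B ≠ ⊤)
    (hYB : ∀ q, Y q ≤ B) (hY : ∀ q, Y q ≤ C * ∫⁻ o, Y o ∂μ) {τ : ℝ} (hτ : 0 < τ) (hτ1 : τ ≤ 1)
    (q : X) : Y q ^ τ ≤ C * ∫⁻ o, Y o ^ τ ∂μ := by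
  set M := ⨆ q, Y q
  have hYM (q : X) : Y q ≤ M := le_iSup Y q
  have hM_top : M ≠ ⊤ := ne_top_of_le_ne_top hB (iSup_le hYB)
  have hsplit (o : X) : Y o ≤ M ^ (1 - τ) * Y o ^ τ :=
    calc Y o = Y o ^ (1 - τ) * Y o ^ τ := by
          rw [← ENNReal.rpow_add_of_nonneg _ _ (by linarith) hτ.le, sub_add_cancel,
            ENNReal.rpow_one]
      _ ≤ M ^ (1 - τ) * Y o ^ τ := by
          gcongr
          exact hYM o
  have habsorb : M ≤ M ^ (1 - τ) * (C * ∫⁻ o, Y o ^ τ ∂μ) := by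
    refine iSup_le fun q => (hY q).trans ?_
    rw [mul_left_comm, ← lintegral_const_mul' _ _
      (ENNReal.rpow_ne_top_of_nonneg (sub_nonneg.2 hτ1) hM_top)]
    gcongr with o
    exact hsplit o
  refine (ENNReal.rpow_le_rpow (hYM q) hτ.le).trans ?_
  rcases eq_or_ne M 0 with hM0 | hM0
  · simp [hM0, ENNReal.zero_rpow_of_pos hτ]
  have hpow_ne_zero : M ^ (1 - τ) ≠ 0 := (ENNReal.rpow_pos (pos_iff_ne_zero.2 hM0) hM_top).ne'
  have hpow_ne_top : M ^ (1 - τ) ≠ ⊤ :=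
    ENNReal.rpow_ne_top_of_nonneg (sub_nonneg.2 hτ1) hM_top
  rw [← ENNReal.mul_le_mul_iff_right hpow_ne_zero hpow_ne_top,
    ← ENNReal.rpow_add_of_nonneg _ _ (by linarith) hτ.le, sub_add_cancel, ENNReal.rpow_one]
  exact habsorb

lemma rpow_le_mul_lintegral_rpow_of_one_lt {k Y : X → ℝ≥0∞} (hk : AEMeasurable k μ)
    (hY : AEMeasurable Y μ) (hk1 : ∀ o, k o ≤ 1) {y C K : ℝ≥0∞} (hK : ∫⁻ o, k o ∂μ ≤ K)
    (hy : y ≤ C * ∫⁻ o, k o * Y o ∂μ) {τ : ℝ} (hτ : 1 < τ) :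
    y ^ τ ≤ (C * K ^ (1 / τ.conjExponent)) ^ τ * ∫⁻ o, Y o ^ τ ∂μ := by
  have hτ0 : 0 < τ := one_pos.trans hτ
  have hconj : τ.conjExponent.HolderConjugate τ := (Real.HolderConjugate.conjExponent hτ).symm
  have hkK : ∫⁻ o, k o ^ τ.conjExponent ∂μ ≤ K :=
    (lintegral_mono fun o => ENNReal.rpow_le_self_of_le_one (hk1 o) hconj.lt.le).trans hK
  calc y ^ τ ≤ (C * ((∫⁻ o, k o ^ τ.conjExponent ∂μ) ^ (1 / τ.conjExponent) *
        (∫⁻ o, Y o ^ τ ∂μ) ^ (1 / τ))) ^ τ := by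
        gcongr
        exact hy.trans (by gcongr; exact ENNReal.lintegral_mul_le_Lp_mul_Lq μ hconj hk hY)
    _ ≤ (C * (K ^ (1 / τ.conjExponent) * (∫⁻ o, Y o ^ τ ∂μ) ^ (1 / τ))) ^ τ := by
        gcongr
        exact one_div_nonneg.2 hconj.nonneg
    _ = (C * K ^ (1 / τ.conjExponent)) ^ τ * ∫⁻ o, Y o ^ τ ∂μ := by
        rw [← mul_assoc, ENNReal.mul_rpow_of_nonneg _ _ hτ0.le, ← ENNReal.rpow_mul,
          one_div_mul_cancel hτ0.ne', ENNReal.rpow_one]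

end SelfImprovement

section PeetreMaximal

variable {n : ℕ} {a : Fin n → ℝ} {F : ScaleSpace n → ℝ≥0∞} {C : ℝ≥0∞} {N τ : ℝ} {r : Fin n → ℝ}

lemma peetreKernel_mul_le_lintegral (ha : 0 ≤ a) (hr : 0 ≤ r) {L : ℝ} {s : Fin n → ℝ}
    (hF : ∀ p, F p ≤ C * ∫⁻ q, peetreKernel a (N + ∑ l, a l * r l + L) (r + s) p q * F q
      ∂scaleMeasure a)
    (p q : ScaleSpace n) :
    peetreKernel a N r p q * F q
      ≤ C * ∫⁻ o, peetreKernel a L s q o * (peetreKernel a N r p o * F o) ∂scaleMeasure a :=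
  calc peetreKernel a N r p q * F q
      ≤ peetreKernel a N r p q * (C * ∫⁻ o,
          peetreKernel a (N + ∑ l, a l * r l + L) (r + s) q o * F o ∂scaleMeasure a) := by
        gcongr
        exact hF q
    _ = C * ∫⁻ o, peetreKernel a L s q o * ((peetreKernel a N r p q *
          peetreKernel a (N + ∑ l, a l * r l) r q o) * F o) ∂scaleMeasure a := by
        rw [mul_left_comm, ← lintegral_const_mul' _ _ peetreKernel_ne_top]
        refine congrArg _ (lintegral_congr fun o => ?_)
        rw [peetreKernel_add]
        ring
    _ ≤ C * ∫⁻ o, peetreKernel a L s q o * (peetreKernel a N r p o * F o) ∂scaleMeasure a := by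
        gcongr with o
        exact peetreKernel_mul_le ha N hr p q o

lemma rpow_peetreKernel_mul_le_of_bounded (ha : 0 ≤ a) (hr : 0 ≤ r) (hτ : 0 < τ) (hτ1 : τ ≤ 1)
    (hF : ∀ p, F p ≤ C * ∫⁻ q, peetreKernel a (N + ∑ l, a l * r l) r p q * F q ∂scaleMeasure a)
    (p : ScaleSpace n) {B : ℝ≥0∞} (hB : B ≠ ⊤) (hFB : ∀ q, peetreKernel a N r p q * F q ≤ B)
    (q : ScaleSpace n) :
    (peetreKernel a N r p q * F q) ^ τ
      ≤ C * ∫⁻ o, (peetreKernel a N r p o * F o) ^ τ ∂scaleMeasure a := by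
  have hself := peetreKernel_mul_le_lintegral (L := 0) (s := 0) ha hr (by simpa using hF) p
  refine rpow_le_mul_lintegral_rpow_of_le_one hB hFB (fun q => (hself q).trans ?_) hτ hτ1 q
  exact mul_le_mul_right (lintegral_mono fun o =>
    mul_le_of_le_one_left' (peetreKernel_le_one le_rfl le_rfl q o)) _

lemma exists_peetreKernel_mul_le_of_growth (ha : 0 ≤ a) {A : ℝ} {s : Fin n → ℝ} (hs : 0 ≤ s)
    {B : ℝ≥0∞} (hB : B ≠ ⊤) (hF : ∀ q, peetreKernel a A s 0 q * F q ≤ B)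
    (hA : A + ∑ l, a l * s l ≤ N) (hr : s ≤ r) (p : ScaleSpace n) :
    ∃ B' : ℝ≥0∞, B' ≠ ⊤ ∧ ∀ q, peetreKernel a N r p q * F q ≤ B' := by
  have hp : peetreKernel a A s 0 p ≠ 0 := peetreKernel_ne_zero (Nat.zero_le _) A s
  refine ⟨_, ENNReal.mul_ne_top (ENNReal.inv_ne_top.2 hp) hB, fun q => ?_⟩
  rw [← ENNReal.mul_le_mul_iff_right hp peetreKernel_ne_top, ← mul_assoc, ← mul_assoc,
    ENNReal.mul_inv_cancel hp peetreKernel_ne_top, one_mul]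
  refine le_trans ?_ (hF q)
  gcongr
  exact peetreKernel_mul_le_of_le ha hs hA hr 0 p q

lemma peetreKernel_rpow_mul_lintegral_rpow_le (ha : 0 ≤ a) (hr : 0 ≤ r) (hτ : 0 ≤ τ) {N' : ℝ}
    (hN : N + ∑ l, a l * r l ≤ N') {r' : Fin n → ℝ} (hr' : r ≤ r') (p q : ScaleSpace n) :
    peetreKernel a N r p q ^ τ * ∫⁻ o, (peetreKernel a N' r' q o * F o) ^ τ ∂scaleMeasure a
      ≤ ∫⁻ o, (peetreKernel a N r p o * F o) ^ τ ∂scaleMeasure a := by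
  rw [← lintegral_const_mul' _ _ (ENNReal.rpow_ne_top_of_nonneg hτ peetreKernel_ne_top)]
  refine lintegral_mono fun o => ?_
  rw [← ENNReal.mul_rpow_of_nonneg _ _ hτ, ← mul_assoc]
  gcongr
  exact peetreKernel_mul_le_of_le ha hr hN hr' p q o

-- Two passes: the growth of `F` makes the supremum finite for large exponents `N'`, `r'` depending
-- on `F`; the resulting estimate makes it finite for the given exponents, with the uniform `C`.
lemma rpow_peetreKernel_mul_le_of_le_one (ha : 0 ≤ a) (hr : 0 ≤ r) (hτ : 0 < τ) (hτ1 : τ ≤ 1)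
    (hrep : ∀ L s, 0 ≤ s → ∃ C : ℝ≥0∞, C ≠ ⊤ ∧
      ∀ p, F p ≤ C * ∫⁻ q, peetreKernel a L s p q * F q ∂scaleMeasure a)
    {A : ℝ} {s : Fin n → ℝ} (hs : 0 ≤ s) {B : ℝ≥0∞} (hB : B ≠ ⊤)
    (hgrowth : ∀ q, peetreKernel a A s 0 q * F q ≤ B) (hC : C ≠ 0)
    (hF : ∀ p, F p ≤ C * ∫⁻ q, peetreKernel a (N + ∑ l, a l * r l) r p q * F q ∂scaleMeasure a)
    (p q : ScaleSpace n) :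
    (peetreKernel a N r p q * F q) ^ τ
      ≤ C * ∫⁻ o, (peetreKernel a N r p o * F o) ^ τ ∂scaleMeasure a := by
  set S := ∫⁻ o, (peetreKernel a N r p o * F o) ^ τ ∂scaleMeasure a
  rcases eq_or_ne S ⊤ with hS | hS
  · simp [hS, ENNReal.mul_top hC]
  set N' := max (A + ∑ l, a l * s l) (N + ∑ l, a l * r l)
  set r' := s ⊔ r
  have hr' : 0 ≤ r' := hs.trans le_sup_left
  obtain ⟨C', hC', hF'⟩ := hrep (N' + ∑ l, a l * r' l) r' hr'
  have hpass (q : ScaleSpace n) :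
      F q ^ τ ≤ C' * ∫⁻ o, (peetreKernel a N' r' q o * F o) ^ τ ∂scaleMeasure a := by
    obtain ⟨B', hB', hFB'⟩ := exists_peetreKernel_mul_le_of_growth (N := N') (r := r') ha hs hB
      hgrowth (le_max_left ..) le_sup_left q
    simpa [peetreKernel_self] using
      rpow_peetreKernel_mul_le_of_bounded ha hr' hτ hτ1 hF' q hB' hFB' q
  have hfinite (q : ScaleSpace n) : (peetreKernel a N r p q * F q) ^ τ ≤ C' * S := by
    rw [ENNReal.mul_rpow_of_nonneg _ _ hτ.le]
    refine (mul_le_mul_right (hpass q) _).trans ?_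
    rw [mul_left_comm]
    gcongr
    exact peetreKernel_rpow_mul_lintegral_rpow_le ha hr hτ.le (le_max_right ..) le_sup_right p q
  refine rpow_peetreKernel_mul_le_of_bounded ha hr hτ hτ1 hF p
    (ENNReal.rpow_ne_top_of_nonneg (inv_nonneg.2 hτ.le) (ENNReal.mul_ne_top hC' hS))
    (fun q => (ENNReal.le_rpow_inv_iff hτ).2 (hfinite q)) q

theorem exists_rpow_peetreKernel_mul_le {ι : Type*} {F : ι → ScaleSpace n → ℝ≥0∞} (ha : 0 ≤ a)
    (hmeas : ∀ i, Measurable (F i))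
    (hrep : ∀ L s, 0 ≤ s → ∃ C : ℝ≥0∞, C ≠ ⊤ ∧
      ∀ i p, F i p ≤ C * ∫⁻ q, peetreKernel a L s p q * F i q ∂scaleMeasure a)
    (hgrowth : ∀ i, ∃ A s, 0 ≤ s ∧ ∃ B : ℝ≥0∞, B ≠ ⊤ ∧ ∀ q, peetreKernel a A s 0 q * F i q ≤ B)
    (N : ℝ) (hr : 0 ≤ r) (hτ : 0 < τ) :
    ∃ C : ℝ≥0∞, C ≠ ⊤ ∧ ∀ i p q, (peetreKernel a N r p q * F i q) ^ τ
      ≤ C * ∫⁻ o, (peetreKernel a N r p o * F i o) ^ τ ∂scaleMeasure a := by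
  rcases le_or_gt τ 1 with hτ1 | hτ1
  · obtain ⟨C, hC, hF⟩ := hrep (N + ∑ l, a l * r l) r hr
    refine ⟨C + 1, by finiteness, fun i => ?_⟩
    obtain ⟨A, s, hs, B, hB, hFB⟩ := hgrowth i
    refine rpow_peetreKernel_mul_le_of_le_one ha hr hτ hτ1
      (fun L s hs => (hrep L s hs).imp fun C hC => ⟨hC.1, hC.2 i⟩) hs hB hFB (by simp)
      fun p => (hF i p).trans ?_
    gcongr
    exact le_self_add
  · obtain ⟨K, hK, hkernel⟩ := exists_lintegral_peetreKernel_le a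
    have hs : (0 : Fin n → ℝ) ≤ fun _ => (n : ℝ) + 1 := fun _ => by positivity
    obtain ⟨C, hC, hF⟩ := hrep (N + ∑ l, a l * r l + 1) (r + fun _ => (n : ℝ) + 1)
      (add_nonneg hr hs)
    have hconj := Real.HolderConjugate.conjExponent hτ1
    refine ⟨_, ENNReal.rpow_ne_top_of_nonneg hτ.le (ENNReal.mul_ne_top hC
      (ENNReal.rpow_ne_top_of_nonneg (one_div_nonneg.2 hconj.symm.nonneg) hK)), fun i p q => ?_⟩
    exact rpow_le_mul_lintegral_rpow_of_one_lt (measurable_peetreKernel _ _ q).aemeasurable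
      ((measurable_peetreKernel N r p).mul (hmeas i)).aemeasurable
      (peetreKernel_le_one zero_le_one hs q) (hkernel q)
      (peetreKernel_mul_le_lintegral ha hr (hF i) p q) hτ1

end PeetreMaximal

section DyadicGrowth

open SchwartzMap

variable {n : ℕ} {a : Fin n → ℝ}

lemma norm_le_norm_anisoDilation (ha : 0 ≤ a) {t : ℝ} (ht : 0 ≤ t)
    (x : EuclideanSpace ℝ (Fin n)) : ‖x‖ ≤ ‖anisoDilation a t x‖ := by
  have hcontract := norm_anisoDilation_le_of_rpow_le a (t := -t) zero_le_one
    (fun i => Real.rpow_le_one_of_one_le_of_nonpos one_le_two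
      (mul_nonpos_of_nonpos_of_nonneg (neg_nonpos.2 ht) (ha i))) (anisoDilation a t x)
  rwa [anisoDilation_anisoDilation, neg_add_cancel, anisoDilation_zero, one_mul] at hcontract

lemma norm_anisoDilation_le (ha : 0 ≤ a) {t : ℝ} (ht : 0 ≤ t) :
    ‖(anisoDilation a t : EuclideanSpace ℝ (Fin n) →L[ℝ] EuclideanSpace ℝ (Fin n))‖
      ≤ 2 ^ (t * ∑ i, a i) :=
  ContinuousLinearMap.opNorm_le_bound _ (by positivity)
    (norm_anisoDilation_le_of_rpow_le a (by positivity) fun i =>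
      Real.rpow_le_rpow_of_exponent_le one_le_two (mul_le_mul_of_nonneg_left
        (Finset.single_le_sum (fun i _ => ha i) (Finset.mem_univ i)) ht))

lemma seminorm_anisoRescale_le (ha : 0 ≤ a) {t : ℝ} (ht : 0 ≤ t) (k J : ℕ)
    (h : 𝓢(EuclideanSpace ℝ (Fin n), ℂ)) :
    SchwartzMap.seminorm ℂ k J (anisoRescale a t h)
      ≤ 2 ^ (t * ((∑ i, a i) * (1 + J))) * SchwartzMap.seminorm ℂ k J h := by
  set c : ℝ := 2 ^ (t * ∑ i, a i)
  set T := (anisoDilation a t : EuclideanSpace ℝ (Fin n) →L[ℝ] EuclideanSpace ℝ (Fin n))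
  have hpow : (2 : ℝ) ^ (t * ((∑ i, a i) * (1 + J))) = c * c ^ J := by
    rw [← mul_assoc, mul_one_add, Real.rpow_add two_pos, Real.rpow_mul_natCast two_pos.le]
  have hcomp (x) : iteratedFDeriv ℝ J (anisoRescale a t h) x
      = (c : ℂ) • iteratedFDeriv ℝ J (h ∘ T) x :=
    iteratedFDeriv_const_smul_apply ((h.smooth _).comp T.contDiff).contDiffAt
  rw [hpow]
  refine SchwartzMap.seminorm_le_bound ℂ k J _ (by positivity) fun x => ?_
  have hderiv : ‖iteratedFDeriv ℝ J (h ∘ T) x‖ ≤ ‖iteratedFDeriv ℝ J h (T x)‖ * c ^ J := by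
    rw [T.iteratedFDeriv_comp_right (h.smooth J) x le_rfl]
    refine (ContinuousMultilinearMap.norm_compContinuousLinearMap_le _ _).trans ?_
    rw [Finset.prod_const, Finset.card_fin]
    gcongr
    exact norm_anisoDilation_le ha ht
  rw [hcomp, norm_smul, norm_real, Real.norm_of_nonneg (by positivity)]
  calc ‖x‖ ^ k * (c * ‖iteratedFDeriv ℝ J (h ∘ T) x‖)
      ≤ ‖T x‖ ^ k * (c * (‖iteratedFDeriv ℝ J h (T x)‖ * c ^ J)) := by
        gcongr
        exact norm_le_norm_anisoDilation ha ht x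
    _ = c * c ^ J * (‖T x‖ ^ k * ‖iteratedFDeriv ℝ J h (T x)‖) := by ring
    _ ≤ c * c ^ J * SchwartzMap.seminorm ℂ k J h := by
        gcongr
        exact SchwartzMap.le_seminorm ℂ k J h _

lemma exists_norm_distribConv_anisoRescale_le (ha : 0 ≤ a)
    (f : 𝓢(EuclideanSpace ℝ (Fin n), ℂ) →L[ℂ] ℂ) :
    ∃ (A : ℝ) (B : ℕ), ∀ h, ∃ C, 0 ≤ C ∧ ∀ t, 0 ≤ t → ∀ y,
      ‖distribConv f (anisoRescale a t h) y‖
        ≤ C * 2 ^ (t * A) * (1 + ‖anisoDilation a t y‖) ^ B := by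
  obtain ⟨S, C, -, hC⟩ := Seminorm.bound_of_continuous (schwartz_withSeminorms ℂ _ ℂ)
    ((normSeminorm ℂ ℂ).comp f.toLinearMap) (continuous_norm.comp f.continuous)
  have ha' : 0 ≤ ∑ i, a i := Finset.sum_nonneg fun i _ => ha i
  refine ⟨(∑ i, a i) * (1 + (S.sup Prod.snd : ℕ)), S.sup Prod.fst, fun h => ?_⟩
  choose D hD0 hD using fun i : ℕ × ℕ => seminorm_compSubConstCLM_le
    (compCLMOfContinuousLinearEquiv ℂ (ContinuousLinearEquiv.neg ℝ) h) i.1 i.2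
  have hDS : 0 ≤ ∑ i ∈ S, D i := Finset.sum_nonneg fun i _ => hD0 i
  refine ⟨C * ∑ i ∈ S, D i, by positivity, fun t ht y => (hC _).trans ?_⟩
  rw [reflectTranslate_anisoRescale, mul_assoc, mul_assoc]
  refine mul_le_mul_of_nonneg_left ?_ C.2
  refine Seminorm.finset_sup_apply_le (by positivity) fun i hi => ?_
  have hDi : D i ≤ ∑ i ∈ S, D i := Finset.single_le_sum (fun i _ => hD0 i) hi
  have hfst : i.1 ≤ S.sup Prod.fst := Finset.le_sup (f := Prod.fst) hi
  have hsnd : i.2 ≤ S.sup Prod.snd := Finset.le_sup (f := Prod.snd) hi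
  calc SchwartzMap.seminorm ℂ i.1 i.2 (anisoRescale a t (reflectTranslate (anisoDilation a t y) h))
      ≤ 2 ^ (t * ((∑ i, a i) * (1 + i.2))) * (D i * (1 + ‖anisoDilation a t y‖) ^ i.1) :=
        (seminorm_anisoRescale_le ha ht _ _ _).trans (by gcongr; exact hD i _)
    _ = D i * (2 ^ (t * ((∑ i, a i) * (1 + i.2))) * (1 + ‖anisoDilation a t y‖) ^ i.1) := by ring
    _ ≤ _ := by
        gcongr
        · exact one_le_two
        · simp

lemma exists_norm_distribConv_dyadicFamily_le (ha : 0 ≤ a)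
    (φ₀ φ : 𝓢(EuclideanSpace ℝ (Fin n), ℂ)) (f : 𝓢(EuclideanSpace ℝ (Fin n), ℂ) →L[ℂ] ℂ) :
    ∃ (A : ℝ) (B : ℕ) (C : ℝ), 0 ≤ C ∧ ∀ (k : ℕ) y,
      ‖distribConv f (dyadicFamily a φ₀ φ k) y‖
        ≤ C * 2 ^ (k * A) * (1 + ‖anisoDilation a k y‖) ^ B := by
  obtain ⟨A, B, hAB⟩ := exists_norm_distribConv_anisoRescale_le ha f
  obtain ⟨C₀, hC₀, h₀⟩ := hAB φ₀
  obtain ⟨C₁, -, h₁⟩ := hAB φ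
  refine ⟨A, B, max C₀ C₁, le_max_of_le_left hC₀, fun k y => ?_⟩
  rw [← add_zero k, dyadicFamily_add, add_zero]
  change ‖distribConv f (anisoRescale a k (if k = 0 then φ₀ else φ)) y‖ ≤ _
  split_ifs
  · exact (h₀ k k.cast_nonneg y).trans (by gcongr; exact le_max_left ..)
  · exact (h₁ k k.cast_nonneg y).trans (by gcongr; exact le_max_right ..)

lemma exists_peetreKernel_mul_enorm_distribConv_le (ha : 0 ≤ a)
    (φ₀ φ : 𝓢(EuclideanSpace ℝ (Fin n), ℂ)) (f : 𝓢(EuclideanSpace ℝ (Fin n), ℂ) →L[ℂ] ℂ) :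
    ∃ A s, 0 ≤ s ∧ ∃ B : ℝ≥0∞, B ≠ ⊤ ∧ ∀ q : ScaleSpace n,
      peetreKernel a A s 0 q * ‖distribConv f (dyadicFamily a φ₀ φ q.1) q.2‖ₑ ≤ B := by
  obtain ⟨A, B, C, hC, hbound⟩ := exists_norm_distribConv_dyadicFamily_le ha φ₀ φ f
  refine ⟨A, fun _ => B, fun _ => B.cast_nonneg, _, ENNReal.ofReal_ne_top (r := C),
    fun ⟨k, y⟩ => ?_⟩
  have hpos := productWeight_pos (fun _ => (B : ℝ)) (-anisoDilation a k y)
  have hkernel : peetreKernel a A (fun _ => (B : ℝ)) 0 (k, y)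
      = ENNReal.ofReal
        (2 ^ (k * A) * productWeight (fun _ => (B : ℝ)) (-anisoDilation a k y))⁻¹ := by
    rw [peetreKernel_of_le (Nat.zero_le k), mul_inv, ← Real.rpow_neg two_pos.le]
    simp
  rw [hkernel, ← ofReal_norm, ← ENNReal.ofReal_mul (by positivity)]
  refine ENNReal.ofReal_le_ofReal ((inv_mul_le_iff₀ (by positivity)).2 ?_)
  have hweight := one_add_norm_rpow_le_productWeight_const (c := B) B.cast_nonneg
    (-anisoDilation a k y)
  rw [Real.rpow_natCast, norm_neg] at hweight
  rw [mul_comm, ← mul_assoc]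
  exact (hbound k y).trans (by gcongr)

end DyadicGrowth

section ReproducingInequality

open SchwartzMap
open scoped FourierTransform

variable {n : ℕ} {a : Fin n → ℝ}

lemma half_pow_mul_inv_one_add_norm_pow_le (ha : 0 ≤ a) {s : Fin n → ℝ} (hs : 0 ≤ s) {L : ℝ}
    {L' M : ℕ} (hL : L + ∑ l, a l * s l ≤ L') (hM : ∑ l, s l ≤ M) (j m : ℕ)
    (x : EuclideanSpace ℝ (Fin n)) :
    ((1 / 2 : ℝ) ^ m) ^ L' * ((1 + ‖anisoDilation a j x‖) ^ M)⁻¹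
      ≤ 2 ^ (-(m * L)) * (productWeight s (anisoDilation a (j + m : ℕ) x))⁻¹ := by
  set A := ∑ l, a l * s l
  have hpow : ((1 / 2 : ℝ) ^ m) ^ L' ≤ 2 ^ (-(m * L)) * (2 ^ (m * A))⁻¹ := by
    rw [← Real.rpow_neg two_pos.le, ← Real.rpow_add two_pos, ← pow_mul, one_div, inv_pow,
      ← Real.rpow_natCast, ← Real.rpow_neg two_pos.le]
    refine Real.rpow_le_rpow_of_exponent_le one_le_two ?_
    push_cast
    nlinarith [(Nat.cast_nonneg m : (0 : ℝ) ≤ m)]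
  have hweight : productWeight s (anisoDilation a (j + m : ℕ) x)
      ≤ 2 ^ (m * A) * (1 + ‖anisoDilation a j x‖) ^ M := by
    rw [add_comm j, Nat.cast_add, ← anisoDilation_anisoDilation]
    refine (productWeight_anisoDilation_le ha hs m.cast_nonneg _).trans ?_
    gcongr
    exact productWeight_le_one_add_norm_pow hs hM _
  have hpos := productWeight_pos s (anisoDilation a (j + m : ℕ) x)
  calc ((1 / 2 : ℝ) ^ m) ^ L' * ((1 + ‖anisoDilation a j x‖) ^ M)⁻¹
      ≤ 2 ^ (-(m * L)) * (2 ^ (m * A))⁻¹ * ((1 + ‖anisoDilation a j x‖) ^ M)⁻¹ := by gcongr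
    _ = 2 ^ (-(m * L)) * (2 ^ (m * A) * (1 + ‖anisoDilation a j x‖) ^ M)⁻¹ := by
        rw [mul_inv, mul_assoc]
    _ ≤ _ := by gcongr

lemma exists_enorm_distribConv_dyadicFamily_le_lintegral (ha : ∀ i, 1 ≤ a i)
    {Φ Λ φ : 𝓢(EuclideanSpace ℝ (Fin n), ℂ)} {δ : ℝ} (hδ : 0 < δ) (hΦ : ∀ ξ, ‖ξ‖ < δ → Φ ξ = 1)
    (hΛ : ∀ ξ, ‖ξ‖ < δ → Λ ξ = 0) (hφ : ∀ ξ, Λ ξ * 𝓕 φ ξ = Φ ξ - Φ (anisoDilation a 1 ξ))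
    (φ₀ : 𝓢(EuclideanSpace ℝ (Fin n), ℂ)) (L : ℝ) {s : Fin n → ℝ} (hs : 0 ≤ s) :
    ∃ C : ℝ≥0∞, C ≠ ⊤ ∧ ∀ (f : 𝓢(EuclideanSpace ℝ (Fin n), ℂ) →L[ℂ] ℂ) (p : ScaleSpace n),
      ‖distribConv f (dyadicFamily a φ₀ φ p.1) p.2‖ₑ ≤ C * ∫⁻ q, peetreKernel a L s p q *
        ‖distribConv f (dyadicFamily a φ₀ φ q.1) q.2‖ₑ ∂scaleMeasure a := by
  have ha0 : 0 ≤ a := fun i => zero_le_one.trans (ha i)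
  obtain ⟨L', hL⟩ := exists_nat_ge (L + ∑ l, a l * s l)
  obtain ⟨M, hM⟩ := exists_nat_ge (∑ l, s l)
  obtain ⟨C, -, hC⟩ := exists_enorm_distribConv_dyadicFamily_le ha hδ hΦ hΛ hφ φ₀ L' M
  refine ⟨.ofReal C, ENNReal.ofReal_ne_top, fun f p => (hC f p.1 p.2).trans ?_⟩
  have hsum : 0 ≤ ∑ i, a i := Finset.sum_nonneg fun i _ => ha0 i
  rw [lintegral_peetreKernel_mul]
  gcongr _ * ?_
  refine ENNReal.tsum_le_tsum fun m => ?_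
  rw [mul_left_comm, mul_left_comm (ENNReal.ofReal (2 ^ (-(m * L)))),
    ← lintegral_const_mul' (.ofReal (((1 / 2) ^ m) ^ L')) _ ENNReal.ofReal_ne_top,
    ← lintegral_const_mul' (.ofReal (2 ^ (-(m * L)))) _ ENNReal.ofReal_ne_top]
  refine mul_le_mul' (ENNReal.ofReal_le_ofReal ?_) (lintegral_mono fun z => ?_)
  · gcongr
    · exact one_le_two
    · exact Nat.le_add_right ..
  · rw [mul_comm ‖_‖ₑ, ← mul_assoc, ← mul_assoc, ← ENNReal.ofReal_mul (by positivity),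
      ← ENNReal.ofReal_mul (by positivity)]
    gcongr ?_ * _
    exact ENNReal.ofReal_le_ofReal (half_pow_mul_inv_one_add_norm_pow_le ha0 hs hL hM p.1 m _)

lemma measurable_enorm_distribConv_dyadicFamily (φ₀ φ : 𝓢(EuclideanSpace ℝ (Fin n), ℂ))
    (f : 𝓢(EuclideanSpace ℝ (Fin n), ℂ) →L[ℂ] ℂ) :
    Measurable fun q : ScaleSpace n => ‖distribConv f (dyadicFamily a φ₀ φ q.1) q.2‖ₑ :=
  measurable_from_prod_countable_right fun k =>
    (continuous_distribConv f (dyadicFamily a φ₀ φ k)).enorm.measurable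

theorem exists_rpow_peetreKernel_mul_enorm_distribConv_le (ha : ∀ i, 1 ≤ a i)
    {anorm : RV n → ℝ} (h : IsAnorm n a anorm) {ε : ℝ} (hε : 0 < ε) (ψ : 𝓢(RV n, ℂ))
    (hψ : ∀ ξ, ε / 2 < anorm ξ → anorm ξ < 2 * ε → 0 < ‖FT n ψ ξ‖)
    (φ₀ : 𝓢(EuclideanSpace ℝ (Fin n), ℂ)) (N : ℝ) {r : Fin n → ℝ} (hr : 0 ≤ r) {τ : ℝ}
    (hτ : 0 < τ) :
    ∃ C : ℝ≥0∞, C ≠ ⊤ ∧ ∀ (f : 𝓢(EuclideanSpace ℝ (Fin n), ℂ) →L[ℂ] ℂ) (p q : ScaleSpace n),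
      (peetreKernel a N r p q *
          ‖distribConv f (dyadicFamily a φ₀ (schwartzToEuclidean ψ) q.1) q.2‖ₑ) ^ τ
        ≤ C * ∫⁻ o, (peetreKernel a N r p o *
          ‖distribConv f (dyadicFamily a φ₀ (schwartzToEuclidean ψ) o.1) o.2‖ₑ) ^ τ
            ∂scaleMeasure a := by
  have ha0 : 0 ≤ a := fun i => zero_le_one.trans (ha i)
  obtain ⟨Φ, Λ, δ, hδ, hΦ, hΛ, hφ⟩ :=
    exists_schwartz_mul_fourier_eq_sub_anisoDilation ha h hε ψ hψ
  have hrep (L : ℝ) (s : Fin n → ℝ) (hs : 0 ≤ s) :=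
    exists_enorm_distribConv_dyadicFamily_le_lintegral ha hδ hΦ hΛ hφ φ₀ L hs
  exact exists_rpow_peetreKernel_mul_le ha0
    (measurable_enorm_distribConv_dyadicFamily φ₀ (schwartzToEuclidean ψ)) hrep
    (exists_peetreKernel_mul_enorm_distribConv_le ha0 φ₀ (schwartzToEuclidean ψ)) N hr hτ

end ReproducingInequality

section CoordinateForm

open SchwartzMap

variable {n : ℕ} {a : Fin n → ℝ}

/-- The tempered distribution on Euclidean space corresponding to `f` on `Fin n → ℝ`. -/
def temperedToEuclidean (f : TD n) : 𝓢(EuclideanSpace ℝ (Fin n), ℂ) →L[ℂ] ℂ :=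
  f.comp (compCLMOfContinuousLinearEquiv ℂ (EuclideanSpace.equiv (Fin n) ℝ).symm)

lemma schwartzToEuclidean_dyadicFamily_apply (ψ₀ ψ : 𝓢(RV n, ℂ)) (k : ℕ) (x : RV n) :
    dyadicFamily a (schwartzToEuclidean ψ₀) (schwartzToEuclidean ψ) k (WithLp.toLp 2 x)
      = fam n a ψ₀ ψ k x := by
  cases k with
  | zero => rfl
  | succ k =>
    rw [dyadicFamily, anisoRescale_apply, schwartzToEuclidean_apply, Nat.cast_succ]
    rfl

lemma eq_distribConv_dyadicFamily {conv : TD n → (RV n → ℂ) → RV n → ℂ}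
    (hconv : ∀ (f : TD n) (g : RV n → ℂ) (x : RV n) (Ψ : SchwartzMap (RV n) ℂ),
      (∀ y, Ψ y = g (x - y)) → conv f g x = f Ψ)
    (ψ₀ ψ : 𝓢(RV n, ℂ)) (f : TD n) (k : ℕ) (x : RV n) :
    conv f (fam n a ψ₀ ψ k) x = distribConv (temperedToEuclidean f)
      (dyadicFamily a (schwartzToEuclidean ψ₀) (schwartzToEuclidean ψ) k) (WithLp.toLp 2 x) :=
  hconv f _ x _ fun y => (reflectTranslate_apply _ _ _).trans
    (schwartzToEuclidean_dyadicFamily_apply ψ₀ ψ k (x - y))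

lemma productWeight_anisoDilation_toLp (s : Fin n → ℝ) (t : ℝ) (x z : RV n) :
    productWeight s (anisoDilation a t (WithLp.toLp 2 x - WithLp.toLp 2 z))
      = ∏ l, (1 + (2 : ℝ) ^ (t * a l) * |x l - z l|) ^ s l := by
  refine Finset.prod_congr rfl fun l _ => ?_
  rw [anisoDilation_apply, abs_mul, abs_of_pos (by positivity)]
  rfl

lemma pfs_rpow_le {r : Fin n → ℝ} {F : RV n → ℂ} {j : ℕ} {x : RV n} {τ : ℝ} (hτ : 0 < τ)
    {N : ℝ} {B : ℝ≥0∞}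
    (hF : ∀ y, (peetreKernel a N r (j, WithLp.toLp 2 x) (j, WithLp.toLp 2 y) * ‖F y‖ₑ) ^ τ ≤ B) :
    pfs n a r F j x ^ τ ≤ B := by
  rw [← ENNReal.le_rpow_inv_iff hτ]
  refine iSup_le fun y => ?_
  have hweight := productWeight_pos r
    (anisoDilation a j (WithLp.toLp 2 x - WithLp.toLp 2 y))
  have hFy := hF y
  rw [← productWeight_anisoDilation_toLp, div_eq_inv_mul, ENNReal.ofReal_mul (by positivity),
    ofReal_norm, ENNReal.le_rpow_inv_iff hτ]
  simpa [peetreKernel] using hFy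

lemma peetreKernel_mul_rpow {N : ℝ} {r : Fin n → ℝ} {τ : ℝ} (hτ : 0 < τ) {j k : ℕ} (hjk : j ≤ k)
    (x z : RV n) (b : ℝ≥0∞) :
    (peetreKernel a N r (j, WithLp.toLp 2 x) (k, WithLp.toLp 2 z) * b) ^ τ
      = ENNReal.ofReal ((2 : ℝ) ^ (((j : ℝ) - k) * N * τ)) * (b ^ τ /
        ∏ l, ENNReal.ofReal ((1 + (2 : ℝ) ^ ((k : ℝ) * a l) * |x l - z l|) ^ (r l * τ))) := by
  have hweight := productWeight_pos r
    (anisoDilation a k (WithLp.toLp 2 x - WithLp.toLp 2 z))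
  rw [← ENNReal.ofReal_prod_of_nonneg fun l _ => by positivity,
    ← productWeight_anisoDilation_toLp (fun l => r l * τ), productWeight_mul_const,
    peetreKernel_of_le hjk, ENNReal.mul_rpow_of_nonneg _ _ hτ.le,
    ENNReal.ofReal_rpow_of_nonneg (by positivity) hτ.le,
    Real.mul_rpow (by positivity) (by positivity), ← Real.rpow_mul two_pos.le,
    Real.inv_rpow hweight.le, ENNReal.ofReal_mul (by positivity),
    ENNReal.ofReal_inv_of_pos (by positivity), div_eq_mul_inv, mul_assoc, mul_comm (b ^ τ)]

lemma lintegral_rpow_peetreKernel_mul (N : ℝ) (r : Fin n → ℝ) {τ : ℝ} (hτ : 0 < τ) (j : ℕ)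
    (x : RV n) (F : ScaleSpace n → ℝ≥0∞) :
    ∫⁻ q, (peetreKernel a N r (j, WithLp.toLp 2 x) q * F q) ^ τ ∂scaleMeasure a
      = ∑' k : ℕ, if j ≤ k then
          ENNReal.ofReal ((2 : ℝ) ^ (((j : ℝ) - k) * N * τ)) * ∫⁻ z : RV n,
            ENNReal.ofReal ((2 : ℝ) ^ ((k : ℝ) * ∑ i, a i)) * F (k, WithLp.toLp 2 z) ^ τ /
              ∏ l, ENNReal.ofReal ((1 + (2 : ℝ) ^ ((k : ℝ) * a l) * |x l - z l|) ^ (r l * τ))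
        else 0 := by
  rw [lintegral_scaleMeasure]
  refine tsum_congr fun k => ?_
  split_ifs with hjk
  · rw [← (EuclideanSpace.volume_preserving_symm_measurableEquiv_toLp _).symm.lintegral_comp_emb
      (MeasurableEquiv.measurableEmbedding _), ← lintegral_const_mul' _ _ ENNReal.ofReal_ne_top,
      ← lintegral_const_mul' _ _ ENNReal.ofReal_ne_top]
    refine lintegral_congr fun z => ?_
    refine (congrArg _ (peetreKernel_mul_rpow hτ hjk x z _)).trans ?_
    rw [mul_left_comm, mul_div_assoc]
    rfl
  · have hkernel (z : EuclideanSpace ℝ (Fin n)) :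
        peetreKernel a N r (j, WithLp.toLp 2 x) (k, z) = 0 :=
      peetreKernel_of_lt (not_le.1 hjk) N r
    simp [hkernel, hτ]

end CoordinateForm

theorem stmt14_general (n : ℕ) (a : Fin n → ℝ) (ha : ∀ i, 1 ≤ a i)
    (anorm : RV n → ℝ) (h : IsAnorm n a anorm)
    (conv : TD n → (RV n → ℂ) → RV n → ℂ)
    (hconv : ∀ (f : TD n) (g : RV n → ℂ) (x : RV n) (Ψ : SchwartzMap (RV n) ℂ),
      (∀ y, Ψ y = g (x - y)) → conv f g x = f Ψ)
    (ψ0 ψ : SchwartzMap (RV n) ℂ) (ε : ℝ) (hε : 0 < ε)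
    (hT : ∀ ξ, ε / 2 < anorm ξ → anorm ξ < 2 * ε → 0 < ‖FT n ψ ξ‖)
    (N : ℝ) (r : Fin n → ℝ) (hr : ∀ l, 0 ≤ r l) (τ : ℝ) (hτ : 0 < τ) :
    ∃ C : ℝ, 0 < C ∧
      ∀ f : TD n, ∀ j : ℕ, ∀ x : RV n,
        (pfs n a r (conv f (fam n a (⇑ψ0) (⇑ψ) j)) j x) ^ τ
          ≤ ENNReal.ofReal C *
            ∑' k : ℕ, if j ≤ k then
              ENNReal.ofReal ((2:ℝ) ^ (((j:ℝ) - (k:ℝ)) * N * τ)) *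
                ∫⁻ z : RV n,
                  ENNReal.ofReal ((2:ℝ) ^ ((k:ℝ) * ∑ i, a i)) *
                    (‖conv f (fam n a (⇑ψ0) (⇑ψ) k) z‖₊ : ℝ≥0∞) ^ τ /
                    ∏ l, ENNReal.ofReal
                      ((1 + (2:ℝ) ^ ((k:ℝ) * a l) * |x l - z l|) ^ (r l * τ))
            else 0 := by
  obtain ⟨C, hC, hbound⟩ := exists_rpow_peetreKernel_mul_enorm_distribConv_le ha h hε ψ hT
    (schwartzToEuclidean ψ0) N hr hτ
  have hC_le : C ≤ ENNReal.ofReal (C.toReal + 1) :=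
    (ENNReal.le_ofReal_iff_toReal_le hC (by positivity)).2 (le_add_of_nonneg_right zero_le_one)
  refine ⟨C.toReal + 1, by positivity, fun f j x => pfs_rpow_le (N := N) hτ fun y => ?_⟩
  have hxy := hbound (temperedToEuclidean f) (j, WithLp.toLp 2 x) (j, WithLp.toLp 2 y)
  rw [lintegral_rpow_peetreKernel_mul N r hτ] at hxy
  simp only [eq_distribConv_dyadicFamily hconv]
  exact hxy.trans (mul_le_mul' hC_le le_rfl)

/-- Proposition 3.8 (`pointwiseEstimate`). -/
theorem stmt14 (n : ℕ) (hn : 1 ≤ n) (a : Fin n → ℝ) (ha : ∀ i, 1 ≤ a i)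
    (anorm : RV n → ℝ) (h : IsAnorm n a anorm)
    (conv : TD n → (RV n → ℂ) → RV n → ℂ)
    (hconv : ∀ (f : TD n) (g : RV n → ℂ) (x : RV n) (Ψ : SchwartzMap (RV n) ℂ),
      (∀ y, Ψ y = g (x - y)) → conv f g x = f Ψ)
    (ψ0 ψ : SchwartzMap (RV n) ℂ) (ε : ℝ) (hε : 0 < ε)
    (hT : Tauber n anorm (⇑ψ0) (⇑ψ) ε)
    (N : ℝ) (hN : 0 < N) (r : Fin n → ℝ) (hr : ∀ l, 0 < r l) (τ : ℝ) (hτ : 0 < τ) :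
    ∃ C : ℝ, 0 < C ∧
      ∀ f : TD n, ∀ j : ℕ, ∀ x : RV n,
        (pfs n a r (conv f (fam n a (⇑ψ0) (⇑ψ) j)) j x) ^ τ
          ≤ ENNReal.ofReal C *
            ∑' k : ℕ, if j ≤ k then
              ENNReal.ofReal ((2:ℝ) ^ (((j:ℝ) - (k:ℝ)) * N * τ)) *
                ∫⁻ z : RV n,
                  ENNReal.ofReal ((2:ℝ) ^ ((k:ℝ) * ∑ i, a i)) *
                    (‖conv f (fam n a (⇑ψ0) (⇑ψ) k) z‖₊ : ℝ≥0∞) ^ τ /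
                    ∏ l, ENNReal.ofReal
                      ((1 + (2:ℝ) ^ ((k:ℝ) * a l) * |x l - z l|) ^ (r l * τ))
            else 0 :=
  stmt14_general n a ha anorm h conv hconv ψ0 ψ ε hε hT.2 N r (fun l => (hr l).le) τ hτ
end
end
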